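/- Let t ≥ 3 be an integer, let M be a compact connected surface with Euler characteristic χ, and let G be a simple graph with at least t+1 edges embedded (drawn crossing-free) into M. Let H be the subgraph of G consisting of all edges of G that lie in some triangle (3-cycle) of G, and assume H = ⋃_i H_i where every triangle of G is contained in some H_i, the H_i are pairwise edge-disjoint, and every H_i has at least 3 and at most t edges. Then e(G) ≤ (12t/(4t+3)) · (v(G) − χ), where e(G) and v(G) are the numbers of edges and vertices of G. -/

import Mathlib

/-- A crossing-free drawing of the graph `G` inside the subset `S` of the topological
space `X`: vertices are mapped to pairwise distinct points, every edge is realized by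
an arc (the image of an injective path) between the points of its endpoints, all arcs
lie in `S`, arcs meet the vertex points only at their own endpoints, and interiors of
arcs of distinct edges are pairwise disjoint. -/
def IsCrossingFreeDrawingIn {V X : Type*} [TopologicalSpace X] (G : SimpleGraph V)
    (f : V → X) (arc : Sym2 V → Set X) (S : Set X) : Prop :=
  Function.Injective f ∧
  (∀ u v : V, G.Adj u v →
    ∃ γ : Path (f u) (f v), Function.Injective ⇑γ ∧ Set.range ⇑γ = arc s(u, v)) ∧
  (∀ e ∈ G.edgeSet, arc e ⊆ S) ∧
  (∀ e ∈ G.edgeSet, ∀ w : V, f w ∈ arc e → w ∈ e) ∧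
  (∀ e ∈ G.edgeSet, ∀ e' ∈ G.edgeSet, e ≠ e' →
    (arc e \ f '' {x | x ∈ e}) ∩ (arc e' \ f '' {x | x ∈ e'}) = ∅)

/-- The image of a drawing: the vertex points together with all edge arcs. -/
def drawingImage {V X : Type*} [TopologicalSpace X] (G : SimpleGraph V)
    (f : V → X) (arc : Sym2 V → Set X) : Set X :=
  Set.range f ∪ ⋃ e ∈ G.edgeSet, arc e

/-- The faces of a drawing: the connected components of the complement of its image. -/
def drawingFaces {V X : Type*} [TopologicalSpace X] (G : SimpleGraph V)
    (f : V → X) (arc : Sym2 V → Set X) : Set (Set X) :=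
  {F | ∃ x ∈ (drawingImage G f arc)ᶜ, F = connectedComponentIn (drawingImage G f arc)ᶜ x}

/-- `χ` is the Euler characteristic of the surface `M`: it is the alternating count
`V - E + F` of some crossing-free drawing of a finite graph in `M` all of whose faces
are open `2`-cells (homeomorphic to an open disk), e.g. of a triangulation of `M`. -/
def IsEulerCharacteristic (M : Type*) [TopologicalSpace M] (χ : ℤ) : Prop :=
  ∃ (V₀ : Type) (_ : Fintype V₀) (G₀ : SimpleGraph V₀)
    (f₀ : V₀ → M) (arc₀ : Sym2 V₀ → Set M),
    IsCrossingFreeDrawingIn G₀ f₀ arc₀ Set.univ ∧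
    (∀ F ∈ drawingFaces G₀ f₀ arc₀,
      Nonempty (↥F ≃ₜ ↥(Metric.ball (0 : EuclideanSpace ℝ (Fin 2)) 1))) ∧
    (Fintype.card V₀ : ℤ) - (Nat.card G₀.edgeSet : ℤ)
      + (Nat.card (drawingFaces G₀ f₀ arc₀) : ℤ) = χ

/-!
Counting. Suppose that a drawing with `v` vertices, `e` edges and `f` faces satisfies Euler's
inequality `e + χ ≤ v + f`, which settles the case `3 f ≤ 2 t`. Otherwise each face boundary is a
nonzero cycle modulo 2, with at least three edges, and each edge bounds at most two faces, so `4 f`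
is at most `2 e` plus the number of triangular faces. The boundaries of the triangular faces in a
block `H i` sum to a nonzero cycle, again with at least three edges, so there are at most
`(2 |H i| - 3) / 3` of them. As `|H i| ≤ t`, the blocks contain at most `(2 t - 3) e / (3 t)`
triangular faces in total.

Euler's inequality. Consider first cohomology with coefficients `ZMod 2`, realized by
Alexander–Spanier cochains. A cocycle that vanishes near the diagonal off a drawing has, locally,
primitives which are locally constant off the drawing; recording the edges across which these jump
gives an exact sequence `constants → functions on the faces → cycle space → H¹(M)`. Every class
comes from a cellular drawing, since discs are simply connected. Comparing dimensions with those of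
a cellular drawing `D₀` gives `dim Z - f ≤ dim Z₀ - f₀`, where the cycle spaces `Z` and `Z₀` have
dimensions at least `e - v + 1` and, as the graph of `D₀` is connected, equal to `e₀ - v₀ + 1`.

Local structure, without the Jordan curve theorem. The arcs are only continuous. For an arc `A` in
the plane from `p` to `q`, the function `(z - p) / (z - q)` has a continuous square root `k` on the
complement of `A`, which extends to no interior point of `A`. Near an interior point, a `±1`-valued
function that is locally constant off `A` either has a limit at every point of `A`, or its product
with `k` does; so it jumps along an entire edge or not at all. At a vertex `x`, multiplying the
roots `k` of the edges where the function jumps yields a square root, near `x`, of a unit times a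
power of `z - x`; hence the number of these edges is even, and every even set of edges occurs.
-/

section Development

open Set Filter Topology Metric Bornology

/-! ### Square roots along plane arcs -/

/-- `α` restricted to the parameter interval `[a, b]` parametrizes an arc (a point if `a = b`).
The parametrization is defined on all of `ℝ`, so that passing to subarcs only changes `a` and
`b`. -/
structure IsArcOn {X : Type*} [TopologicalSpace X] (α : ℝ → X) (a b : ℝ) : Prop where
  le : a ≤ b
  continuousOn : ContinuousOn α (Icc a b)
  injOn : InjOn α (Icc a b)

namespace IsArcOn

variable {X : Type*} [TopologicalSpace X] {α : ℝ → X} {a b : ℝ}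

theorem subarc (h : IsArcOn α a b) {a' b' : ℝ} (ha : a ≤ a') (hab : a' ≤ b') (hb : b' ≤ b) :
    IsArcOn α a' b' :=
  ⟨hab, h.continuousOn.mono (Icc_subset_Icc ha hb), h.injOn.mono (Icc_subset_Icc ha hb)⟩

theorem isCompact_image (h : IsArcOn α a b) : IsCompact (α '' Icc a b) :=
  isCompact_Icc.image_of_continuousOn h.continuousOn

theorem isClosed_image [T2Space X] (h : IsArcOn α a b) : IsClosed (α '' Icc a b) :=
  h.isCompact_image.isClosed

theorem isClosedEmbedding_domRestrict [T2Space X] (h : IsArcOn α a b) :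
    IsClosedEmbedding ((Icc a b).domRestrict α) :=
  (continuousOn_iff_continuous_domRestrict.1 h.continuousOn).isClosedEmbedding
    (injOn_iff_injective.1 h.injOn)

theorem exists_continuous_eqOn (h : IsArcOn α a b) :
    ∃ β : ℝ → X, Continuous β ∧ (∀ t, β t ∈ α '' Icc a b) ∧ EqOn β α (Icc a b) :=
  ⟨IccExtend h.le ((Icc a b).domRestrict α),
    (continuousOn_iff_continuous_domRestrict.1 h.continuousOn).Icc_extend',
    fun t => ⟨projIcc a b h.le t, (projIcc a b h.le t).2, rfl⟩,
    fun _ ht => IccExtend_of_mem _ _ ht⟩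

end IsArcOn

section ComplexRoots

theorem exists_continuous_log {X : Type*} [TopologicalSpace X] [SimplyConnectedSpace X]
    [LocallyPathConnectedSpace X] {F : X → ℂ} (hF : Continuous F) (h0 : ∀ x, F x ≠ 0) :
    ∃ L : X → ℂ, Continuous L ∧ ∀ x, Complex.exp (L x) = F x := by
  obtain ⟨x₀⟩ : Nonempty X := inferInstance
  obtain ⟨L, ⟨-, hL⟩, -⟩ := Complex.isCoveringMapOn_exp.existsUnique_continuousMap_lifts
    ⟨F, hF⟩ (Complex.exp_log (h0 x₀)) h0
  exact ⟨L, L.continuous, congrFun hL⟩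

theorem exp_half_sq (z : ℂ) : Complex.exp (z / 2) ^ 2 = Complex.exp z := by
  rw [← Complex.exp_nat_mul, Nat.cast_ofNat, mul_div_cancel₀ _ two_ne_zero]

theorem exists_continuous_sqrt {X : Type*} [TopologicalSpace X] [SimplyConnectedSpace X]
    [LocallyPathConnectedSpace X] {F : X → ℂ} (hF : Continuous F) (h0 : ∀ x, F x ≠ 0) :
    ∃ S : X → ℂ, Continuous S ∧ ∀ x, S x ^ 2 = F x := by
  obtain ⟨L, hL, hexp⟩ := exists_continuous_log hF h0
  exact ⟨fun x => Complex.exp (L x / 2), by fun_prop, fun x => by rw [exp_half_sq, hexp]⟩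

/-- The map `w ↦ exp w` has period `2πi` while `w ↦ exp (w / 2)` changes sign, so no branch of the
square root exists on a circle around the branch point. -/
theorem not_exists_continuousOn_sqrt_sub_sphere (p : ℂ) {δ : ℝ} (hδ : 0 < δ) {f : ℂ → ℂ}
    (hf : ContinuousOn f (sphere p δ)) : ¬ ∀ z ∈ sphere p δ, f z ^ 2 = z - p := by
  intro hsq
  set c : ℝ → ℂ := fun θ => p + δ * Complex.exp (θ * Complex.I) with hc
  set s : ℝ → ℂ := fun θ => √δ * Complex.exp (θ * Complex.I / 2) with hs
  have hmem θ : c θ ∈ sphere p δ := by simp [hc, Complex.norm_exp_ofReal_mul_I, abs_of_pos hδ]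
  have hs0 θ : s θ ≠ 0 :=
    mul_ne_zero (Complex.ofReal_ne_zero.2 (Real.sqrt_pos.2 hδ).ne') (Complex.exp_ne_zero _)
  have hs2 θ : s θ ^ 2 = c θ - p := by
    simp only [hs, hc, mul_pow, exp_half_sq, add_sub_cancel_left]
    rw [← Complex.ofReal_pow, Real.sq_sqrt hδ.le]
  have hcont : Continuous fun θ => f (c θ) := hf.comp_continuous (by fun_prop) hmem
  have hcper : c (2 * Real.pi) = c 0 := by simp [hc, Complex.exp_two_pi_mul_I]
  have hsper : s (2 * Real.pi) = -s 0 := by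
    have : ((2 * Real.pi : ℝ) : ℂ) * Complex.I / 2 = Real.pi * Complex.I := by push_cast; ring
    simp only [hs, this, Complex.exp_pi_mul_I]
    simp
  rcases isPreconnected_univ.eq_or_eq_neg_of_sq_eq hcont.continuousOn
    (by fun_prop : Continuous s).continuousOn
    (fun θ _ => (hsq _ (hmem θ)).trans (hs2 θ).symm) (fun {θ} _ => hs0 θ) with h | h
  all_goals
    have h1 : f (c 0) = _ := h (mem_univ 0)
    have h2 : f (c (2 * Real.pi)) = _ := h (mem_univ (2 * Real.pi))
    rw [hcper, h1] at h2
    simp only [Pi.neg_apply, hsper] at h2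
    exact hs0 0 (by grind)

theorem exists_continuousOn_comp_exp_eq {S : ℂ → ℂ} (hS : Continuous S)
    (hper : Function.Periodic S (2 * Real.pi * Complex.I)) :
    ∃ q : ℂ → ℂ, ContinuousOn q {0}ᶜ ∧ ∀ w, q (Complex.exp w) = S w := by
  have hlog w : S (Complex.log (Complex.exp w)) = S w := by
    obtain ⟨n, hn⟩ := Complex.exp_eq_exp_iff_exists_int.1
      (Complex.exp_log (Complex.exp_ne_zero w))
    rw [hn]
    exact hper.int_mul n w
  refine ⟨S ∘ Complex.log, ?_, hlog⟩
  have hquot : IsQuotientMap fun z : ℂ => (⟨_, z.exp_ne_zero⟩ : {z : ℂ // z ≠ 0}) :=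
    Complex.isCoveringMap_exp.isQuotientMap
      (fun x => ⟨Complex.log x, Subtype.ext (Complex.exp_log x.2)⟩)
  exact continuousOn_iff_continuous_domRestrict.2
    (hquot.continuous_iff.2 (hS.congr fun w => (hlog w).symm))

/-- Lift to the universal cover `exp : ℂ → ℂ \ {0}` and take a root there: the deck transformation
changes it by a sign, which multiplication by `exp (w / 2)` corrects. -/
theorem exists_continuousOn_sqrt_or_sqrt_mul {F : ℂ → ℂ} (hF : ContinuousOn F {0}ᶜ)
    (h0 : ∀ r ≠ 0, F r ≠ 0) :
    ∃ q : ℂ → ℂ, ContinuousOn q {0}ᶜ ∧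
      ((∀ r ≠ 0, q r ^ 2 = F r) ∨ ∀ r ≠ 0, q r ^ 2 = r * F r) := by
  obtain ⟨S, hSc, hS2⟩ := exists_continuous_sqrt (F := fun w => F (Complex.exp w))
    (hF.comp_continuous Complex.continuous_exp Complex.exp_ne_zero)
    (fun w => h0 _ (Complex.exp_ne_zero w))
  have hS0 w : S w ≠ 0 := by
    rw [← pow_ne_zero_iff two_ne_zero, hS2]
    exact h0 _ (Complex.exp_ne_zero w)
  rcases isPreconnected_univ.eq_or_eq_neg_of_sq_eq
    (by fun_prop : Continuous fun w => S (w + 2 * Real.pi * Complex.I)).continuousOn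
    hSc.continuousOn (fun w _ => by simp [hS2, Complex.exp_periodic w]) (fun {w} _ => hS0 w)
    with hper | hanti
  · obtain ⟨q, hqc, hq⟩ := exists_continuousOn_comp_exp_eq hSc (fun w => hper (mem_univ w))
    refine ⟨q, hqc, Or.inl fun r hr => ?_⟩
    rw [← Complex.exp_log hr, hq, hS2]
  · obtain ⟨q, hqc, hq⟩ := exists_continuousOn_comp_exp_eq
      (S := fun w => S w * Complex.exp (w / 2)) (by fun_prop) (fun w => by
        have : S (w + 2 * Real.pi * Complex.I) = -S w := hanti (mem_univ w)
        beta_reduce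
        rw [this, add_div, Complex.exp_add,
          show 2 * (Real.pi : ℂ) * Complex.I / 2 = Real.pi * Complex.I by ring,
          Complex.exp_pi_mul_I]
        ring)
    refine ⟨q, hqc, Or.inr fun r hr => ?_⟩
    rw [← Complex.exp_log hr, hq, mul_pow, hS2, exp_half_sq, mul_comm]

end ComplexRoots

section Components

theorem isPreconnected_setOf_norm_sub_mem {E : Type*} [NormedAddCommGroup E] [NormedSpace ℝ E]
    (hE : 1 < Module.rank ℝ E) {s : Set ℝ} (hs : IsPreconnected s) (hpos : ∀ r ∈ s, 0 < r)
    (p : E) : IsPreconnected {x : E | ‖x - p‖ ∈ s} := by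
  have himage := (hs.prod (isPreconnected_sphere hE 0 1)).image
    (fun q : ℝ × E => p + q.1 • q.2) (by fun_prop)
  convert! himage using 1
  ext x
  constructor
  · intro hx
    have h0 : ‖x - p‖ ≠ 0 := (hpos _ hx).ne'
    exact ⟨(‖x - p‖, ‖x - p‖⁻¹ • (x - p)), ⟨hx, by simp [norm_smul, h0]⟩, by
      simp [smul_smul, h0]⟩
  · rintro ⟨⟨r, u⟩, ⟨hr, hu⟩, rfl⟩
    simpa [norm_smul, mem_sphere_zero_iff_norm.1 hu, abs_of_pos (hpos r hr)] using hr

theorem isPreconnected_of_connectedComponentIn_inter_nonempty {X : Type*} [TopologicalSpace X]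
    {U D : Set X} (hD : IsPreconnected D) (hDU : D ⊆ U)
    (h : ∀ x ∈ U, (connectedComponentIn U x ∩ D).Nonempty) : IsPreconnected U := by
  refine isPreconnected_of_forall_pair fun x hx y hy => ?_
  refine ⟨connectedComponentIn U x ∪ D ∪ connectedComponentIn U y,
    union_subset (union_subset (connectedComponentIn_subset _ _) hDU)
      (connectedComponentIn_subset _ _),
    .inl (.inl (mem_connectedComponentIn hx)), .inr (mem_connectedComponentIn hy), ?_⟩
  refine (isPreconnected_connectedComponentIn.union' (h x hx) hD).union' ?_
    isPreconnected_connectedComponentIn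
  exact (h y hy).mono fun z hz => ⟨.inr hz.2, hz.1⟩

theorem frontier_connectedComponentIn_subset_compl {X : Type*} [TopologicalSpace X]
    [LocallyConnectedSpace X] {U : Set X} (hU : IsOpen U) (x : X) :
    frontier (connectedComponentIn U x) ⊆ Uᶜ := by
  intro z hz hzU
  obtain ⟨w, hwz, hwx⟩ := mem_closure_iff.1 (frontier_subset_closure hz) _
    (hU.connectedComponentIn (x := z)) (mem_connectedComponentIn hzU)
  have heq := (connectedComponentIn_eq hwx).trans (connectedComponentIn_eq hwz).symm
  rw [hU.connectedComponentIn.frontier_eq] at hz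
  exact hz.2 (heq ▸ mem_connectedComponentIn hzU)

end Components

section PlaneArcs

variable {α : ℝ → ℂ} {a b : ℝ}

theorem IsArcOn.exists_continuous_log_sub (h : IsArcOn α a b) {x : ℂ} (hx : x ∉ α '' Icc a b) :
    ∃ g : ℂ → ℂ, Continuous g ∧ ∀ z ∈ α '' Icc a b, Complex.exp (g z) = z - x := by
  obtain ⟨β, hβc, hβmem, hβ⟩ := h.exists_continuous_eqOn
  obtain ⟨L, hLc, hL⟩ := exists_continuous_log (F := fun t => β t - x) (by fun_prop)
    (fun t => sub_ne_zero.2 (ne_of_mem_of_not_mem (hβmem t) hx))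
  obtain ⟨g, hg⟩ := ContinuousMap.exists_extension' h.isClosedEmbedding_domRestrict
    (⟨fun t : Icc a b => L t, by fun_prop⟩ : C(Icc a b, ℂ))
  refine ⟨g, g.continuous, ?_⟩
  rintro _ ⟨t, ht, rfl⟩
  have : g (α t) = L t := congrFun hg ⟨t, ht⟩
  rw [this, hL, hβ ht]

/-- Borsuk's argument: a bounded `O` would allow gluing `z - x` outside `O` to a zero-free function
inside `O`, giving a root of `z - x` on a large circle. -/
theorem IsArcOn.not_isBounded_of_frontier_subset (h : IsArcOn α a b) {O : Set ℂ}
    (hO : frontier O ⊆ α '' Icc a b) {x : ℂ} (hxO : x ∈ O) (hxα : x ∉ α '' Icc a b) :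
    ¬ IsBounded O := by
  classical
  intro hbdd
  obtain ⟨R, hR0, hR⟩ := hbdd.subset_closedBall_lt 0 x
  obtain ⟨g, hgc, hg⟩ := h.exists_continuous_log_sub hxα
  set F : ℂ → ℂ := O.piecewise (fun z => Complex.exp (g z)) (fun z => z - x) with hF
  have hFc : Continuous F :=
    Continuous.piecewise (fun z hz => hg z (hO hz)) (by fun_prop) (by fun_prop)
  have hF0 z : F z ≠ 0 := by
    by_cases hz : z ∈ O
    · simp [hF, hz]
    · simpa [hF, hz, sub_eq_zero] using (ne_of_mem_of_not_mem hxO hz).symm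
  obtain ⟨S, hSc, hS⟩ := exists_continuous_sqrt hFc hF0
  refine not_exists_continuousOn_sqrt_sub_sphere x (δ := R + 1) (by positivity)
    hSc.continuousOn fun z hz => ?_
  have hzO : z ∉ O := fun hzO => by
    have := mem_closedBall.1 (hR hzO)
    rw [mem_sphere.1 hz] at this
    linarith
  rw [hS, hF, piecewise_eq_of_notMem _ _ _ hzO]

theorem IsArcOn.isPreconnected_compl (h : IsArcOn α a b) : IsPreconnected (α '' Icc a b)ᶜ := by
  obtain ⟨R, hR0, hR⟩ := h.isCompact_image.isBounded.subset_closedBall_lt 0 0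
  have hext : IsPreconnected {z : ℂ | ‖z - 0‖ ∈ Ioi R} :=
    isPreconnected_setOf_norm_sub_mem (by simp) isPreconnected_Ioi (fun r hr => hR0.trans hr) 0
  refine isPreconnected_of_connectedComponentIn_inter_nonempty hext (fun z hz hzA => ?_)
    fun x hx => ?_
  · exact (show R < ‖z - 0‖ from hz).not_ge (mem_closedBall_iff_norm.1 (hR hzA))
  · by_contra hne
    have hfr := frontier_connectedComponentIn_subset_compl h.isClosed_image.isOpen_compl x
    rw [compl_compl] at hfr
    refine h.not_isBounded_of_frontier_subset hfr (mem_connectedComponentIn hx) hx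
      (isBounded_closedBall.subset fun z hz => (?_ : z ∈ closedBall 0 R))
    by_contra hzR
    exact hne ⟨z, hz, by simpa using hzR⟩

end PlaneArcs

section Sign

theorem zmod_two_eq_zero_or_one (x : ZMod 2) : x = 0 ∨ x = 1 := by
  revert x
  decide

theorem zmod_two_eq_of_eq_zero_iff {a b : ZMod 2} (h : a = 0 ↔ b = 0) : a = b := by
  decide +revert

/-- The nontrivial character of `ZMod 2`, with values `±1` in `ℂ`. -/
noncomputable def sgn (x : ZMod 2) : ℂ := if x = 0 then 1 else -1

@[simp] theorem sgn_zero : sgn 0 = 1 := by simp [sgn]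

@[simp] theorem sgn_one : sgn 1 = -1 := by simp [sgn]

theorem sgn_sq (x : ZMod 2) : sgn x ^ 2 = 1 := by
  rcases zmod_two_eq_zero_or_one x with rfl | rfl <;> simp

theorem sgn_add (x y : ZMod 2) : sgn (x + y) = sgn x * sgn y := by
  rcases zmod_two_eq_zero_or_one x with rfl | rfl <;>
    rcases zmod_two_eq_zero_or_one y with rfl | rfl <;> simp [CharTwo.add_self_eq_zero]

theorem exists_eventually_eq_of_tendsto_sgn {X : Type*} {l : Filter X} {g : X → ZMod 2} {y : ℂ}
    (h : Tendsto (fun x => sgn (g x)) l (𝓝 y)) : ∃ c, ∀ᶠ x in l, g x = c := by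
  rcases eq_or_ne y 1 with rfl | hy
  · refine ⟨0, (h.eventually_ne (by norm_num : (1 : ℂ) ≠ -1)).mono fun x hx => ?_⟩
    exact (zmod_two_eq_zero_or_one (g x)).resolve_right fun h1 => hx (by simp [h1])
  · refine ⟨1, (h.eventually_ne hy).mono fun x hx => ?_⟩
    exact (zmod_two_eq_zero_or_one (g x)).resolve_left fun h0 => hx (by simp [h0])

end Sign

section ZeroPole

/-- The Möbius map with zero `p` and pole `q` that fixes neither but sends `∞` to `1`. -/
noncomputable def zeroPole (p q z : ℂ) : ℂ := (z - p) / (z - q)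

theorem zeroPole_ne_zero {p q z : ℂ} (hp : z ≠ p) (hq : z ≠ q) : zeroPole p q z ≠ 0 :=
  div_ne_zero (sub_ne_zero.2 hp) (sub_ne_zero.2 hq)

theorem continuousAt_zeroPole {p q z : ℂ} (hq : z ≠ q) : ContinuousAt (zeroPole p q) z :=
  ContinuousAt.div (by fun_prop) (by fun_prop) (sub_ne_zero.2 hq)

theorem zeroPole_ne_one {p q z : ℂ} (hpq : p ≠ q) (hq : z ≠ q) : zeroPole p q z ≠ 1 := by
  rw [zeroPole, Ne, div_eq_one_iff_eq (sub_ne_zero.2 hq), sub_right_inj]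
  exact hpq

theorem tendsto_sub_mul_div_one_sub_cobounded {p q : ℂ} (hpq : p ≠ q) :
    Tendsto (fun r : ℂ => (p - r * q) / (1 - r)) (𝓝[≠] 1) (cobounded ℂ) := by
  have hnum : Tendsto (fun r : ℂ => p - r * q) (𝓝[≠] 1) (𝓝 (p - 1 * q)) :=
    (Continuous.tendsto (by fun_prop) 1).mono_left nhdsWithin_le_nhds
  have hden : Tendsto (fun r : ℂ => 1 - r) (𝓝[≠] 1) (𝓝[≠] 0) := by
    refine tendsto_nhdsWithin_iff.2 ⟨?_, ?_⟩
    · simpa using (Continuous.tendsto (by fun_prop : Continuous fun r : ℂ => 1 - r) 1).mono_left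
        (nhdsWithin_le_nhds (s := {1}ᶜ))
    · filter_upwards [self_mem_nhdsWithin] with r hr
      exact sub_ne_zero.2 (Ne.symm hr)
  have hinv := tendsto_norm_atTop_iff_cobounded.2 (tendsto_inv₀_nhdsNE_zero.comp hden)
  rw [← tendsto_norm_atTop_iff_cobounded]
  simp only [div_eq_mul_inv, norm_mul]
  exact hnum.norm.pos_mul_atTop (by simpa [sub_eq_zero] using hpq) hinv

theorem exists_continuousOn_comp_zeroPole_eq {G : ℂ → ℂ} {p q : ℂ} (hpq : p ≠ q)
    (hG : ContinuousOn G {p, q}ᶜ) {c : ℂ} (hinf : ∀ᶠ z in cobounded ℂ, G z = c) :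
    ∃ F : ℂ → ℂ, ContinuousOn F {0}ᶜ ∧ F 1 = c ∧
      (∀ r ≠ 1, F r = G ((p - r * q) / (1 - r))) := by
  classical
  set T : ℂ → ℂ := fun r => (p - r * q) / (1 - r) with hT
  refine ⟨Function.update (G ∘ T) 1 c, fun r hr => ContinuousAt.continuousWithinAt ?_, by simp,
    fun r hr => by simp [hr, hT]⟩
  rcases eq_or_ne r 1 with rfl | h1
  · rw [continuousAt_update_same]
    exact tendsto_const_nhds.congr'
      (((tendsto_sub_mul_div_one_sub_cobounded hpq).eventually hinf).mono fun r hr => hr.symm)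
  · rw [continuousAt_update_of_ne h1]
    have h1' : 1 - r ≠ 0 := sub_ne_zero.2 h1.symm
    have hpq' := sub_ne_zero.2 hpq
    have hmem : T r ∈ ({p, q}ᶜ : Set ℂ) := by
      simp only [hT, mem_compl_iff, mem_insert_iff, mem_singleton_iff, not_or, div_eq_iff h1']
      exact ⟨fun h => mul_ne_zero hr hpq' (by linear_combination h),
        fun h => hpq' (by linear_combination h)⟩
    refine ContinuousAt.comp (hG.continuousAt ?_) (ContinuousAt.div (by fun_prop) (by fun_prop) h1')
    exact (toFinite {p, q}).isClosed.isOpen_compl.mem_nhds hmem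

/-- The Möbius map `zeroPole p q` carries the twice punctured sphere to `ℂ \ {0}`. -/
theorem exists_continuousOn_sqrt_or_sqrt_zeroPole_mul {G : ℂ → ℂ} {p q : ℂ} (hpq : p ≠ q)
    (hG : ContinuousOn G {p, q}ᶜ) (h0 : ∀ z, G z ≠ 0) (hinf : ∀ᶠ z in cobounded ℂ, G z = 1) :
    ∃ s : ℂ → ℂ, ContinuousOn s {p, q}ᶜ ∧
      ((∀ z ∈ ({p, q}ᶜ : Set ℂ), s z ^ 2 = G z) ∨
        ∀ z ∈ ({p, q}ᶜ : Set ℂ), s z ^ 2 = zeroPole p q z * G z) := by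
  obtain ⟨F, hFc, hF1, hF⟩ := exists_continuousOn_comp_zeroPole_eq hpq hG hinf
  have hF0 : ∀ r ≠ 0, F r ≠ 0 := fun r _ => by
    rcases eq_or_ne r 1 with rfl | h1
    · simp [hF1]
    · rw [hF r h1]
      exact h0 _
  obtain ⟨s, hsc, hs⟩ := exists_continuousOn_sqrt_or_sqrt_mul hFc hF0
  have hmaps : MapsTo (zeroPole p q) {p, q}ᶜ {0}ᶜ := fun z hz =>
    zeroPole_ne_zero (by grind) (by grind)
  have hFG : ∀ z ∈ ({p, q}ᶜ : Set ℂ), F (zeroPole p q z) = G z := fun z hz => by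
    have hzq : z ≠ q := by grind
    have hne := zeroPole_ne_one hpq hzq
    rw [hF _ hne, div_eq_of_eq_mul (sub_ne_zero.2 hne.symm)]
    have := sub_ne_zero.2 hzq
    rw [zeroPole]
    field_simp
    ring
  refine ⟨s ∘ zeroPole p q, hsc.comp (fun z hz => ?_) hmaps, ?_⟩
  · exact (continuousAt_zeroPole (by grind)).continuousWithinAt
  · exact hs.imp (fun hs z hz => by rw [Function.comp_apply, hs _ (hmaps hz), hFG z hz])
      fun hs z hz => by rw [Function.comp_apply, hs _ (hmaps hz), hFG z hz]

end ZeroPole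

section LocalRoots

theorem exists_eventually_sqrt {X : Type*} [TopologicalSpace X] {F : X → ℂ} {p : X} {y : ℂ}
    (hy : y ≠ 0) (hp : F p = y ^ 2) (hF : ∀ᶠ z in 𝓝 p, ContinuousAt F z) :
    ∃ s : X → ℂ, s p = y ∧ ∀ᶠ z in 𝓝 p, ContinuousAt s z ∧ s z ^ 2 = F z ∧ s z ≠ 0 := by
  have hp0 : F p ≠ 0 := hp ▸ pow_ne_zero 2 hy
  have hslit : ∀ᶠ z in 𝓝 p, F z / F p ∈ Complex.slitPlane :=
    (hF.self_of_nhds.div_const (F p)).eventually_mem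
      (Complex.isOpen_slitPlane.mem_nhds (by simp [div_self hp0]))
  refine ⟨fun z => y * Complex.exp (Complex.log (F z / F p) / 2), by simp [div_self hp0], ?_⟩
  filter_upwards [hslit, hF] with z hz hzc
  have hlog : ContinuousAt (fun z => Complex.log (F z / F p)) z := (hzc.div_const _).clog hz
  refine ⟨by fun_prop, ?_, mul_ne_zero hy (Complex.exp_ne_zero _)⟩
  rw [mul_pow, exp_half_sq, Complex.exp_log (Complex.slitPlane_ne_zero hz), ← hp,
    mul_div_cancel₀ _ hp0]

/-- On a small circle around `p`, dividing by a local root of `u` and a power of `z - p` would leave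
a root of `z - p`. -/
theorem not_eventually_sq_eq_pow_mul {p : ℂ} {f u : ℂ → ℂ} {n : ℕ} (hn : Odd n)
    (hu : ∀ᶠ z in 𝓝 p, ContinuousAt u z) (hu0 : u p ≠ 0) :
    ¬ ∀ᶠ z in 𝓝[≠] p, ContinuousAt f z ∧ f z ^ 2 = (z - p) ^ n * u z := by
  intro hf
  obtain ⟨y, hy⟩ := IsAlgClosed.exists_pow_nat_eq (u p) two_pos
  obtain ⟨s, -, hs⟩ := exists_eventually_sqrt (by grind : y ≠ 0) hy.symm hu
  obtain ⟨m, rfl⟩ := hn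
  obtain ⟨ε, hε, hball⟩ := eventually_nhds_iff_ball.1 ((eventually_nhdsWithin_iff.1 hf).and hs)
  have hmem : ∀ z ∈ sphere p (ε / 2), z ∈ ball p ε ∧ z ≠ p := fun z hz =>
    ⟨(mem_sphere.1 hz).trans_lt (half_lt_self hε), ne_of_mem_sphere hz (half_pos hε).ne'⟩
  refine not_exists_continuousOn_sqrt_sub_sphere p (half_pos hε)
    (f := fun z => f z / (s z * (z - p) ^ m)) (fun z hz => ContinuousAt.continuousWithinAt ?_)
    fun z hz => ?_
  all_goals
    obtain ⟨hzε, hzp⟩ := hmem z hz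
    obtain ⟨hfz, hsc, hs2, hs0⟩ := hball z hzε
    have hzp' := sub_ne_zero.2 hzp
  · exact (hfz hzp).1.div (hsc.mul (by fun_prop)) (mul_ne_zero hs0 (pow_ne_zero _ hzp'))
  · rw [div_pow, mul_pow, (hfz hzp).2, ← hs2]
    field_simp
    ring

theorem eventually_eq_of_sq_eq_of_tendsto {X : Type*} {l : Filter X} {k s : X → ℂ} {y : ℂ}
    (hy : y ≠ 0) (hk : Tendsto k l (𝓝 y)) (hs : Tendsto s l (𝓝 y))
    (hsq : ∀ᶠ z in l, k z ^ 2 = s z ^ 2) : ∀ᶠ z in l, k z = s z := by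
  have hadd : Tendsto (fun z => k z + s z) l (𝓝 (y + y)) := hk.add hs
  filter_upwards [hsq, hadd.eventually_ne (by simpa using hy : y + y ≠ 0)] with z hz hne
  exact (sq_eq_sq_iff_eq_or_eq_neg.1 hz).resolve_right fun h => hne (by simp [h])

end LocalRoots

section ArcInteriors

/-- On a small circle around `p`, the function `z ↦ i (p + z) - i (p - z)` is odd, hence has a
zero. -/
theorem not_injOn_ball_real {p : ℂ} {ε : ℝ} (hε : 0 < ε) {i : ℂ → ℝ}
    (hc : ContinuousOn i (ball p ε)) : ¬ InjOn i (ball p ε) := by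
  intro hi
  set S : Set ℂ := sphere 0 (ε / 2) with hS
  have hm : ∀ z ∈ S, p + z ∈ ball p ε ∧ p - z ∈ ball p ε := fun z hz => by
    have : ‖z‖ = ε / 2 := by simpa [hS] using hz
    constructor <;> simp [this, hε]
  set d : ℂ → ℝ := fun z => i (p + z) - i (p - z) with hd
  have hdc : ContinuousOn d S :=
    (hc.comp (by fun_prop) fun z hz => (hm z hz).1).sub
      (hc.comp (by fun_prop) fun z hz => (hm z hz).2)
  have hneg z : d (-z) = -d z := by simp [hd, sub_eq_add_neg]
  obtain ⟨w, hw⟩ : S.Nonempty := NormedSpace.sphere_nonempty.2 (half_pos hε).le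
  have hw' : -w ∈ S := by simpa [hS] using hw
  have hconn : IsPreconnected S := isPreconnected_sphere (by simp) 0 _
  obtain ⟨z, hz, hz0⟩ : ∃ z ∈ S, d z = 0 := by
    rcases le_total (d w) 0 with h | h
    · exact hconn.intermediate_value hw hw' hdc ⟨h, by rw [hneg]; linarith⟩
    · exact hconn.intermediate_value hw' hw hdc ⟨by rw [hneg]; linarith, h⟩
  have heq := hi (hm z hz).1 (hm z hz).2 (sub_eq_zero.1 hz0)
  have hz0 : z = 0 := self_eq_neg.1 (by linear_combination heq)
  exact ne_of_mem_sphere hz (half_pos hε).ne' hz0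

theorem IsArcOn.exists_leftInvOn {X : Type*} [TopologicalSpace X] [T2Space X] {α : ℝ → X}
    {a b : ℝ} (h : IsArcOn α a b) :
    ∃ i : X → ℝ, ContinuousOn i (α '' Icc a b) ∧ InjOn i (α '' Icc a b) ∧
      LeftInvOn i α (Icc a b) := by
  have hinv : LeftInvOn (Function.invFunOn α (Icc a b)) α (Icc a b) := h.injOn.leftInvOn_invFunOn
  refine ⟨_, continuousOn_iff_isClosed.2 fun t ht => ⟨α '' (t ∩ Icc a b), ?_, ?_⟩, ?_, hinv⟩
  · exact ((isCompact_Icc.inter_left ht).image_of_continuousOn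
      (h.continuousOn.mono inter_subset_right)).isClosed
  · ext x
    constructor
    · rintro ⟨hx, s, hs, rfl⟩
      rw [mem_preimage, hinv hs] at hx
      exact ⟨⟨s, ⟨hx, hs⟩, rfl⟩, s, hs, rfl⟩
    · rintro ⟨⟨s, ⟨hs, hs'⟩, rfl⟩, hx⟩
      exact ⟨by rwa [mem_preimage, hinv hs'], hx⟩
  · rintro _ ⟨s, hs, rfl⟩ _ ⟨t, ht, rfl⟩ he
    rw [hinv hs, hinv ht] at he
    rw [he]

theorem IsArcOn.dense_compl {α : ℝ → ℂ} {a b : ℝ} (h : IsArcOn α a b) :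
    Dense (α '' Icc a b)ᶜ := by
  rw [← interior_eq_empty_iff_dense_compl, eq_empty_iff_forall_notMem]
  intro p hp
  obtain ⟨ε, hε, hball⟩ := Metric.isOpen_iff.1 isOpen_interior p hp
  obtain ⟨i, hic, hii, -⟩ := h.exists_leftInvOn
  have hsub := hball.trans interior_subset
  exact not_injOn_ball_real hε (hic.mono hsub) (hii.mono hsub)

end ArcInteriors

section ArcSqrt

/-- `k` is a branch of the square root of `zeroPole (α a) (α b)` on the complement of the arc
`α '' [a, b]` in the plane. -/
structure IsArcSqrt (k : ℂ → ℂ) (α : ℝ → ℂ) (a b : ℝ) : Prop extends IsArcOn α a b where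
  continuousOn_sqrt : ContinuousOn k (α '' Icc a b)ᶜ
  sq_eq : ∀ z ∉ α '' Icc a b, k z ^ 2 = zeroPole (α a) (α b) z

/-- Contracting the arc to its endpoint `α b` deforms `zeroPole (α a) (α b)` to the constant `1`
through nowhere vanishing functions, and the covering `exp` lifts the deformation. -/
theorem IsArcOn.exists_isArcSqrt {α : ℝ → ℂ} {a b : ℝ} (h : IsArcOn α a b) :
    ∃ k, IsArcSqrt k α a b := by
  classical
  set A := α '' Icc a b
  obtain ⟨β, hβc, hβA, hβ⟩ := h.exists_continuous_eqOn
  have hne (z : (Aᶜ : Set ℂ)) t : (z : ℂ) - β t ≠ 0 :=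
    sub_ne_zero.2 fun h0 => z.2 (by rw [h0]; exact hβA t)
  let H : C(unitInterval × (Aᶜ : Set ℂ), {z : ℂ // z ≠ 0}) :=
    ⟨fun q => ⟨((q.2 : ℂ) - β (b + q.1 * (a - b))) / ((q.2 : ℂ) - β b),
      div_ne_zero (hne _ _) (hne _ _)⟩,
      (Continuous.div (by fun_prop) (by fun_prop) fun q => hne _ _).subtype_mk _⟩
  have hH0 (z : (Aᶜ : Set ℂ)) : H (0, z) =
      (fun z : ℂ ↦ (⟨_, z.exp_ne_zero⟩ : {z : ℂ // z ≠ 0})) ((0 : C((Aᶜ : Set ℂ), ℂ)) z) :=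
    Subtype.ext (by simp [H, div_self (hne z b)])
  have hlift := Complex.isCoveringMap_exp.liftHomotopy_lifts H 0 hH0
  set L := Complex.isCoveringMap_exp.liftHomotopy H 0 hH0
  refine ⟨fun z => if hz : z ∈ Aᶜ then Complex.exp (L (1, ⟨z, hz⟩) / 2) else 0, h, ?_, ?_⟩
  · rw [continuousOn_iff_continuous_domRestrict]
    have : Continuous fun z : (Aᶜ : Set ℂ) => Complex.exp (L (1, z) / 2) := by fun_prop
    exact this.congr fun z => by simp [show (z : ℂ) ∉ A from z.2]
  · intro z hz
    have hz' : z ∈ Aᶜ := hz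
    have hexp := congrArg Subtype.val (congrFun hlift (1, ⟨z, hz'⟩))
    simp only [Function.comp_apply] at hexp
    simp only [hz', dif_pos, exp_half_sq, hexp]
    simp [H, zeroPole, hβ (left_mem_Icc.2 h.le), hβ (right_mem_Icc.2 h.le)]

variable {k : ℂ → ℂ} {α : ℝ → ℂ} {a b : ℝ}

theorem IsArcOn.apply_mem_compl_endpoints {X : Type*} {α : ℝ → X} [TopologicalSpace X]
    (h : IsArcOn α a b) {t : ℝ} (ht : t ∈ Ioo a b) : α t ∈ ({α a, α b}ᶜ : Set X) := by
  have ht' := Ioo_subset_Icc_self ht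
  simp only [mem_compl_iff, mem_insert_iff, mem_singleton_iff, not_or]
  exact ⟨h.injOn.ne ht' (left_mem_Icc.2 h.le) ht.1.ne',
    h.injOn.ne ht' (right_mem_Icc.2 h.le) ht.2.ne⟩

theorem IsArcOn.endpoints_subset {X : Type*} {α : ℝ → X} [TopologicalSpace X]
    (h : IsArcOn α a b) : {α a, α b} ⊆ α '' Icc a b :=
  pair_subset (mem_image_of_mem α (left_mem_Icc.2 h.le)) (mem_image_of_mem α (right_mem_Icc.2 h.le))

theorem IsArcOn.compl_subset_compl_endpoints {X : Type*} {α : ℝ → X} [TopologicalSpace X]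
    (h : IsArcOn α a b) : (α '' Icc a b)ᶜ ⊆ {α a, α b}ᶜ :=
  compl_subset_compl.2 h.endpoints_subset

theorem zeroPole_ne_zero_of_mem {p q z : ℂ} (hz : z ∈ ({p, q}ᶜ : Set ℂ)) : zeroPole p q z ≠ 0 :=
  zeroPole_ne_zero (by grind) (by grind)

theorem IsArcSqrt.ne_zero (h : IsArcSqrt k α a b) {z : ℂ} (hz : z ∉ α '' Icc a b) : k z ≠ 0 :=
  fun h0 => zeroPole_ne_zero_of_mem (h.compl_subset_compl_endpoints hz)
    (by simpa [h0] using (h.sq_eq z hz).symm)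

theorem IsArcSqrt.eventuallyEq_sq (h : IsArcSqrt k α a b) (x : ℂ) :
    (fun z => k z ^ 2) =ᶠ[𝓝[(α '' Icc a b)ᶜ] x] zeroPole (α a) (α b) :=
  eventually_mem_nhdsWithin.mono h.sq_eq

end ArcSqrt

section Dichotomy

theorem exists_cutoff {X : Type*} [PseudoMetricSpace X] {A U : Set X} (hA : IsClosed A)
    (hA' : A.Nonempty) (hU : IsOpen U) (hU' : Uᶜ.Nonempty) :
    ∃ τ : X → ℝ, (∀ z ∉ A, ContinuousAt τ z) ∧ (∀ z ∈ A ∩ U, ∀ᶠ w in 𝓝 z, τ w = 1) ∧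
      (∀ z ∉ U, τ z = 0) ∧ ∀ z ∉ A, z ∉ U → ∀ᶠ w in 𝓝 z, τ w = 0 := by
  set dA : X → ℝ := fun z => infDist z A
  set dU : X → ℝ := fun z => infDist z Uᶜ
  have hA0 : ∀ z ∈ A, dA z = 0 := fun z hz => infDist_zero_of_mem hz
  have hU0 : ∀ z ∉ U, dU z = 0 := fun z hz => infDist_zero_of_mem hz
  have hApos : ∀ z ∉ A, 0 < dA z + dU z := fun z hz =>
    add_pos_of_pos_of_nonneg ((hA.notMem_iff_infDist_pos hA').1 hz) infDist_nonneg
  have hUpos : ∀ z ∈ U, 0 < dU z := fun z hz =>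
    (hU.isClosed_compl.notMem_iff_infDist_pos hU').1 (by simpa using hz)
  set φ : X → ℝ := fun z => dU z / (dA z + dU z)
  have hφ : ∀ z, 0 < dA z + dU z → ContinuousAt φ z := fun z hz =>
    (continuous_infDist_pt _).continuousAt.div
      ((continuous_infDist_pt _).add (continuous_infDist_pt _)).continuousAt hz.ne'
  have hφ0 : ∀ z ∉ U, φ z = 0 := fun z hz => by simp [φ, hU0 z hz]
  have hφ1 : ∀ z ∈ A ∩ U, φ z = 1 := fun z hz => by
    simp [φ, hA0 z hz.1, div_self (hUpos z hz.2).ne']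
  refine ⟨fun z => max 0 (min 1 (3 * φ z - 1)), fun z hz => ?_, fun z hz => ?_, fun z hz => ?_,
    fun z hz hzU => ?_⟩
  · exact continuousAt_const.max (continuousAt_const.min (((hφ z (hApos z hz)).const_mul 3).sub
      continuousAt_const))
  · have hpos := add_pos_of_nonneg_of_pos (infDist_nonneg (x := z) (s := A)) (hUpos z hz.2)
    have hlt : 2 / 3 < φ z := by rw [hφ1 z hz]; norm_num
    filter_upwards [(hφ z hpos).eventually_const_lt hlt] with w hw
    rw [min_eq_left (by linarith), max_eq_right zero_le_one]
  · simp [hφ0 z hz]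
  · have hlt : φ z < 1 / 3 := by rw [hφ0 z hzU]; norm_num
    filter_upwards [(hφ z (hApos z hz)).eventually_lt_const hlt] with w hw
    exact max_eq_left ((min_le_right _ _).trans (by linarith))

theorem exists_continuousOn_eq_sgn {X : Type*} [PseudoMetricSpace X] {A U : Set X}
    (hA : IsClosed A) (hA' : A.Nonempty) (hU : IsOpen U) (hU' : Uᶜ.Nonempty) {g : X → ZMod 2}
    (hg : ∀ z ∈ U, z ∉ A → ∀ᶠ w in 𝓝 z, g w = g z) :
    ∃ e : X → ℂ, ContinuousOn e Aᶜ ∧ (∀ z, e z ≠ 0) ∧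
      (∀ z ∈ A ∩ U, ∀ᶠ w in 𝓝 z, e w = sgn (g w)) ∧ ∀ z ∉ U, e z = 1 := by
  classical
  obtain ⟨τ, hτc, hτ1, hτ0, hτ0'⟩ := exists_cutoff hA hA' hU hU'
  set u : X → ℝ := fun z => τ z * if g z = 0 then 0 else 1 with hu
  have huc : ∀ z ∈ Aᶜ, ContinuousAt u z := fun z hz => by
    by_cases hzU : z ∈ U
    · refine ((hτc z hz).mul_const (if g z = 0 then 0 else 1)).congr ?_
      filter_upwards [hg z hzU hz] with w hw
      simp only [hu, hw]
    · refine (continuousAt_const (y := (0 : ℝ))).congr ?_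
      filter_upwards [hτ0' z hz hzU] with w hw
      simp only [hu, hw, zero_mul]
  refine ⟨fun z => Complex.exp (Real.pi * Complex.I * u z), fun z hz => ?_,
    fun z => Complex.exp_ne_zero _, fun z hz => ?_, fun z hz => by simp [hu, hτ0 z hz]⟩
  · have := huc z hz
    exact ContinuousAt.continuousWithinAt (by fun_prop)
  · filter_upwards [hτ1 z hz] with w hw
    rcases zmod_two_eq_zero_or_one (g w) with h0 | h0 <;> simp [hu, hw, h0, Complex.exp_pi_mul_I]

theorem exists_eq_mul_of_sq_eq {X : Type*} [TopologicalSpace X] {S : Set X}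
    (hS : IsPreconnected S) {f g : X → ℂ} (hf : ContinuousOn f S) (hg : ContinuousOn g S)
    (hsq : ∀ x ∈ S, f x ^ 2 = g x ^ 2) (hg0 : ∀ x ∈ S, g x ≠ 0) :
    ∃ c : ℂ, ∀ x ∈ S, f x = c * g x := by
  rcases hS.eq_or_eq_neg_of_sq_eq hf hg hsq (hg0 _) with h | h
  · exact ⟨1, fun x hx => by simp [h hx]⟩
  · exact ⟨-1, fun x hx => by simp [h hx]⟩

variable {k : ℂ → ℂ} {α : ℝ → ℂ} {a b : ℝ}

theorem IsArcSqrt.exists_eq_or_eq_mul (h : IsArcSqrt k α a b) (hab : a < b) {e : ℂ → ℂ}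
    (hec : ContinuousOn e (α '' Icc a b)ᶜ) (he0 : ∀ z, e z ≠ 0)
    (hesq : ContinuousOn (e ^ 2) {α a, α b}ᶜ) (hinf : ∀ᶠ z in cobounded ℂ, e z = 1) :
    ∃ s : ℂ → ℂ, ContinuousOn s {α a, α b}ᶜ ∧
      ((∀ z ∉ α '' Icc a b, e z = s z) ∨ ∀ z ∉ α '' Icc a b, e z = k z * s z) := by
  have hne : α a ≠ α b := h.injOn.ne (left_mem_Icc.2 h.le) (right_mem_Icc.2 h.le) hab.ne
  have hsub := h.compl_subset_compl_endpoints
  have hzP : ∀ z ∈ ({α a, α b}ᶜ : Set ℂ), zeroPole (α a) (α b) z ≠ 0 := fun z hz =>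
    zeroPole_ne_zero_of_mem hz
  obtain ⟨s, hsc, hs⟩ := exists_continuousOn_sqrt_or_sqrt_zeroPole_mul hne hesq
    (fun z => pow_ne_zero 2 (he0 z)) (hinf.mono fun z hz => by simp [hz])
  simp only [Pi.pow_apply] at hs
  have hs0 : ∀ z ∈ (α '' Icc a b)ᶜ, s z ≠ 0 := fun z hz h0 => by
    have := hzP z (hsub hz)
    rcases hs with hs | hs <;> simpa [h0, this, he0 z] using (hs z (hsub hz)).symm
  rcases hs with hs | hs
  · obtain ⟨c, hc⟩ := exists_eq_mul_of_sq_eq h.isPreconnected_compl hec (hsc.mono hsub)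
      (fun z hz => (hs z (hsub hz)).symm) hs0
    exact ⟨fun z => c * s z, continuousOn_const.mul hsc, .inl hc⟩
  · obtain ⟨c, hc⟩ := exists_eq_mul_of_sq_eq h.isPreconnected_compl
      (f := fun z => k z * e z)
      (h.continuousOn_sqrt.mul hec) (hsc.mono hsub)
      (fun z hz => by rw [mul_pow, h.sq_eq z hz, hs z (hsub hz)]) hs0
    refine ⟨fun z => c * s z / zeroPole (α a) (α b) z, ?_, .inr fun z hz => ?_⟩
    · exact (continuousOn_const.mul hsc).div (fun z hz =>
        (continuousAt_zeroPole (by grind)).continuousWithinAt) hzP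
    · simp only [← hc z hz, ← h.sq_eq z hz]
      field [h.ne_zero hz]

theorem IsArcSqrt.dichotomy (h : IsArcSqrt k α a b) (hab : a < b) {U : Set ℂ} (hU : IsOpen U)
    (hαU : ∀ t ∈ Ioo a b, α t ∈ U) {g : ℂ → ZMod 2}
    (hg : ∀ z ∈ U, z ∉ α '' Icc a b → ∀ᶠ w in 𝓝 z, g w = g z) :
    (∀ t ∈ Ioo a b, ∃ c, ∀ᶠ z in 𝓝[(α '' Icc a b)ᶜ] (α t), g z = c) ∨
    (∀ t ∈ Ioo a b, ∃ s : ℂ → ℂ, ContinuousAt s (α t) ∧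
      ∀ᶠ z in 𝓝[(α '' Icc a b)ᶜ] (α t), sgn (g z) = k z * s z) := by
  set A := α '' Icc a b
  obtain ⟨R, hR⟩ := h.isCompact_image.isBounded.subset_ball 0
  obtain ⟨e, hec, he0, heg, he1⟩ := exists_continuousOn_eq_sgn (U := U ∩ ball 0 R)
    h.isClosed_image ((nonempty_Icc.2 h.le).image α) (hU.inter isOpen_ball)
    (nonempty_compl.2 fun hu => NormedSpace.unbounded_univ ℝ ℂ
      (isBounded_ball.subset (hu ▸ inter_subset_right)))
    (fun z hz hzA => hg z hz.1 hzA)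
  have hinf : ∀ᶠ z in cobounded ℂ, e z = 1 := by
    filter_upwards [isBounded_def.1 (isBounded_ball (x := (0 : ℂ)) (r := R))] with z hz
    exact he1 z fun h => hz h.2
  have hmem : ∀ t ∈ Ioo a b, α t ∈ A ∩ (U ∩ ball 0 R) := fun t ht =>
    have := mem_image_of_mem α (Ioo_subset_Icc_self ht)
    ⟨this, hαU t ht, hR this⟩
  have hesq : ContinuousOn (e ^ 2) {α a, α b}ᶜ := fun z hz =>
    ContinuousAt.continuousWithinAt <| by
      by_cases hzA : z ∈ A
      · obtain ⟨t, ht, rfl⟩ := hzA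
        have ht' : t ∈ Ioo a b := ⟨ht.1.lt_of_ne (by grind), ht.2.lt_of_ne (by grind)⟩
        refine (continuousAt_const (y := (1 : ℂ))).congr ?_
        filter_upwards [heg _ (hmem t ht')] with w hw
        simp [hw, sgn_sq]
      · exact (hec.continuousAt (h.isClosed_image.isOpen_compl.mem_nhds hzA)).pow 2
  obtain ⟨s, hsc, hs⟩ := h.exists_eq_or_eq_mul hab hec he0 hesq hinf
  have hsc' : ∀ t ∈ Ioo a b, ContinuousAt s (α t) := fun t ht =>
    hsc.continuousAt ((toFinite _).isClosed.isOpen_compl.mem_nhds (h.apply_mem_compl_endpoints ht))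
  have heg' : ∀ t ∈ Ioo a b, ∀ᶠ z in 𝓝[Aᶜ] (α t), z ∉ A ∧ e z = sgn (g z) := fun t ht =>
    eventually_mem_nhdsWithin.and (nhdsWithin_le_nhds (heg _ (hmem t ht)))
  refine hs.imp (fun hs t ht => ?_) fun hs t ht => ⟨s, hsc' t ht, ?_⟩
  · refine exists_eventually_eq_of_tendsto_sgn
      (((hsc' t ht).tendsto.mono_left nhdsWithin_le_nhds).congr' ?_)
    filter_upwards [heg' t ht] with z hz
    rw [← hz.2, hs z hz.1]
  · filter_upwards [heg' t ht] with z hz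
    rw [← hz.2, hs z hz.1]

end Dichotomy

section NoLimit

variable {k k' : ℂ → ℂ} {α : ℝ → ℂ} {a b : ℝ}

theorem IsArcSqrt.eventually_exists_tendsto (h : IsArcSqrt k α a b) {t : ℝ} (ht : t ∈ Ioo a b)
    {y : ℂ} (hy : Tendsto k (𝓝[(α '' Icc a b)ᶜ] (α t)) (𝓝 y)) :
    ∀ᶠ z in 𝓝 (α t), ∃ y, Tendsto k (𝓝[(α '' Icc a b)ᶜ] z) (𝓝 y) := by
  set A := α '' Icc a b
  have hmem := h.apply_mem_compl_endpoints ht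
  have hzPc : ∀ z ∈ ({α a, α b}ᶜ : Set ℂ), ContinuousAt (zeroPole (α a) (α b)) z := fun z hz =>
    continuousAt_zeroPole (by grind)
  have hne : (𝓝[Aᶜ] (α t)).NeBot := mem_closure_iff_nhdsWithin_neBot.1 (h.dense_compl (α t))
  have hsq : zeroPole (α a) (α b) (α t) = y ^ 2 :=
    tendsto_nhds_unique ((hzPc _ hmem).tendsto.mono_left nhdsWithin_le_nhds)
      ((hy.pow 2).congr' (h.eventuallyEq_sq _))
  have hy0 : y ≠ 0 := fun h0 => zeroPole_ne_zero_of_mem hmem (by simp [hsq, h0])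
  obtain ⟨s, hs, hsc⟩ := exists_eventually_sqrt hy0 hsq (by
    filter_upwards [(toFinite _).isClosed.isOpen_compl.mem_nhds hmem] with z hz using hzPc z hz)
  have hks : ∀ᶠ z in 𝓝[Aᶜ] (α t), k z = s z :=
    eventually_eq_of_sq_eq_of_tendsto hy0 hy
      (hs ▸ hsc.self_of_nhds.1.tendsto.mono_left nhdsWithin_le_nhds) (by
        filter_upwards [self_mem_nhdsWithin, nhdsWithin_le_nhds hsc] with z hz hz'
        rw [h.sq_eq z hz, hz'.2.1])
  filter_upwards [eventually_eventually_nhds.2 (eventually_nhdsWithin_iff.1 hks), hsc] with z hz hz'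
  exact ⟨s z, (hz'.1.tendsto.mono_left nhdsWithin_le_nhds).congr'
    ((eventually_nhdsWithin_iff.2 hz).mono fun w hw => hw.symm)⟩

theorem IsArcSqrt.exists_forall_not_tendsto (h : IsArcSqrt k α a b) (hab : a < b) :
    ∃ t ∈ Ioo a b, ∀ y, ¬ Tendsto k (𝓝[(α '' Icc a b)ᶜ] (α t)) (𝓝 y) := by
  by_contra! hlim
  set A := α '' Icc a b
  have hne : α a ≠ α b := h.injOn.ne (left_mem_Icc.2 h.le) (right_mem_Icc.2 h.le) hab.ne
  have hlim' : ∀ z ∈ ({α a, α b}ᶜ : Set ℂ), ∃ y, Tendsto k (𝓝[Aᶜ] z) (𝓝 y) := fun z hz => by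
    by_cases hzA : z ∈ A
    · obtain ⟨t, ht, rfl⟩ := hzA
      exact hlim t ⟨ht.1.lt_of_ne (by grind), ht.2.lt_of_ne (by grind)⟩
    · exact ⟨k z, h.continuousOn_sqrt z hzA⟩
  have hcont := continuousOn_extendFrom (fun z _ => h.dense_compl z) hlim'
  refine not_eventually_sq_eq_pow_mul (p := α a) (f := extendFrom Aᶜ k) (n := 1) odd_one
    (u := fun z => (z - α b)⁻¹) ?_ (inv_ne_zero (sub_ne_zero.2 hne)) ?_
  · filter_upwards [isOpen_ne.mem_nhds hne] with z hz
    exact ContinuousAt.inv₀ (by fun_prop) (sub_ne_zero.2 hz)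
  · filter_upwards [self_mem_nhdsWithin, nhdsWithin_le_nhds (isOpen_ne.mem_nhds hne)] with z hza hzb
    have hz : z ∈ ({α a, α b}ᶜ : Set ℂ) := by grind
    refine ⟨hcont.continuousAt ((toFinite _).isClosed.isOpen_compl.mem_nhds hz), ?_⟩
    have hbot : (𝓝[Aᶜ] z).NeBot := mem_closure_iff_nhdsWithin_neBot.1 (h.dense_compl z)
    rw [pow_one, ← div_eq_mul_inv]
    exact tendsto_nhds_unique (((tendsto_extendFrom (hlim' z hz)).pow 2).congr'
      (h.eventuallyEq_sq _))
      ((continuousAt_zeroPole hzb).tendsto.mono_left nhdsWithin_le_nhds)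

theorem IsArcOn.nhdsWithin_compl_subarc {X : Type*} [TopologicalSpace X] [T2Space X] {α : ℝ → X}
    (h : IsArcOn α a b) {c d t : ℝ} (hac : a ≤ c) (hdb : d ≤ b) (ht : t ∈ Ioo c d) :
    α t ∉ α '' Icc a c ∧ α t ∉ α '' Icc d b ∧
      𝓝[(α '' Icc c d)ᶜ] (α t) = 𝓝[(α '' Icc a b)ᶜ] (α t) := by
  have hcd := ht.1.trans ht.2
  have ht' : t ∈ Icc a b := ⟨hac.trans ht.1.le, ht.2.le.trans hdb⟩
  have h1 : α t ∉ α '' Icc a c := by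
    rintro ⟨s, hs, e⟩
    have := h.injOn ⟨hs.1, by linarith [hs.2]⟩ ht' e
    linarith [hs.2, ht.1]
  have h2 : α t ∉ α '' Icc d b := by
    rintro ⟨s, hs, e⟩
    have := h.injOn ⟨by linarith [hs.1], hs.2⟩ ht' e
    linarith [hs.1, ht.2]
  refine ⟨h1, h2, ?_⟩
  have hunion : Icc a b = Icc c d ∪ (Icc a c ∪ Icc d b) := by
    ext x
    simp only [mem_union, mem_Icc]
    grind
  have hnear : (α '' Icc a c ∪ α '' Icc d b)ᶜ ∈ 𝓝 (α t) :=
    ((h.subarc le_rfl hac (by linarith)).isClosed_image.union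
      (h.subarc (by linarith) hdb le_rfl).isClosed_image).isOpen_compl.mem_nhds (by simp [h1, h2])
  rw [hunion, image_union, image_union, compl_union, nhdsWithin_inter_of_mem'
    (nhdsWithin_le_nhds hnear)]

theorem IsArcSqrt.exists_tendsto_subarc (h : IsArcSqrt k α a b) {c d t : ℝ} (hac : a ≤ c)
    (hdb : d ≤ b) (h' : IsArcSqrt k' α c d) (ht : t ∈ Ioo c d) {y : ℂ}
    (hy : Tendsto k (𝓝[(α '' Icc a b)ᶜ] (α t)) (𝓝 y)) :
    ∃ y', Tendsto k' (𝓝[(α '' Icc c d)ᶜ] (α t)) (𝓝 y') := by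
  have hcd := ht.1.trans ht.2
  obtain ⟨htl, htr, hnhds⟩ := h.nhdsWithin_compl_subarc hac hdb ht
  obtain ⟨l, hl⟩ := (h.subarc le_rfl hac (by linarith)).exists_isArcSqrt
  obtain ⟨r, hr⟩ := (h.subarc (by linarith) hdb le_rfl).exists_isArcSqrt
  have hsub {x x'} (hx : a ≤ x) (hx' : x' ≤ b) : (α '' Icc a b)ᶜ ⊆ (α '' Icc x x')ᶜ :=
    compl_subset_compl.2 (image_mono (Icc_subset_Icc hx hx'))
  have hsubl := hsub le_rfl (by linarith : c ≤ b)
  have hsubr := hsub (by linarith : a ≤ d) le_rfl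
  have hsubm := hsub hac hdb
  obtain ⟨w, hw⟩ := exists_eq_mul_of_sq_eq h.isPreconnected_compl (f := fun z => k' z * (l z * r z))
    ((h'.continuousOn_sqrt.mono hsubm).mul ((hl.continuousOn_sqrt.mono hsubl).mul
      (hr.continuousOn_sqrt.mono hsubr))) h.continuousOn_sqrt (fun z hz => by
      have := hl.compl_subset_compl_endpoints (hsubl hz)
      have := hr.compl_subset_compl_endpoints (hsubr hz)
      rw [mul_pow, mul_pow, h.sq_eq z hz, h'.sq_eq z (hsubm hz), hl.sq_eq z (hsubl hz),
        hr.sq_eq z (hsubr hz), zeroPole, zeroPole, zeroPole, zeroPole]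
      have : z - α a ≠ 0 := sub_ne_zero.2 (by grind)
      have : z - α b ≠ 0 := sub_ne_zero.2 (by grind)
      have : z - α c ≠ 0 := sub_ne_zero.2 (by grind)
      have : z - α d ≠ 0 := sub_ne_zero.2 (by grind)
      field_simp) (fun z hz => h.ne_zero hz)
  have hlc := hl.continuousOn_sqrt.continuousAt (hl.isClosed_image.isOpen_compl.mem_nhds htl)
  have hrc := hr.continuousOn_sqrt.continuousAt (hr.isClosed_image.isOpen_compl.mem_nhds htr)
  refine ⟨w * y / (l (α t) * r (α t)), hnhds ▸ Tendsto.congr' ?_ ((hy.const_mul w).div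
    ((hlc.mul hrc).tendsto.mono_left nhdsWithin_le_nhds)
    (mul_ne_zero (hl.ne_zero htl) (hr.ne_zero htr)))⟩
  filter_upwards [self_mem_nhdsWithin] with z hz
  simp only [Pi.div_apply, Pi.mul_apply]
  rw [← hw z hz, mul_div_cancel_right₀ _ (mul_ne_zero (hl.ne_zero (hsubl hz))
    (hr.ne_zero (hsubr hz)))]

theorem IsArcSqrt.not_tendsto (h : IsArcSqrt k α a b) {t : ℝ} (ht : t ∈ Ioo a b) (y : ℂ) :
    ¬ Tendsto k (𝓝[(α '' Icc a b)ᶜ] (α t)) (𝓝 y) := by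
  intro hy
  have hev : ∀ᶠ u in 𝓝 t, ∃ y, Tendsto k (𝓝[(α '' Icc a b)ᶜ] (α u)) (𝓝 y) :=
    (h.continuousOn.continuousAt (Icc_mem_nhds ht.1 ht.2)).eventually
      (h.eventually_exists_tendsto ht hy)
  obtain ⟨c, d, -, hcd, hsub⟩ := exists_Icc_mem_subset_of_mem_nhds
    (hev.and (Ioo_mem_nhds ht.1 ht.2))
  obtain ⟨hct, htd⟩ := Icc_mem_nhds_iff.1 hcd
  have hc := (hsub (left_mem_Icc.2 (hct.trans htd).le)).2
  have hd := (hsub (right_mem_Icc.2 (hct.trans htd).le)).2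
  obtain ⟨k', h'⟩ := (h.subarc hc.1.le (hct.trans htd).le hd.2.le).exists_isArcSqrt
  obtain ⟨u, hu, hlim⟩ := h'.exists_forall_not_tendsto (hct.trans htd)
  obtain ⟨y', hy'⟩ := (hsub (Ioo_subset_Icc_self hu)).1
  obtain ⟨y'', hy''⟩ := h.exists_tendsto_subarc hc.1.le hd.2.le h' hu hy'
  exact hlim y'' hy''

end NoLimit

/-! ### Jumps across arcs in a surface -/

section NoJump

variable {M : Type*} [TopologicalSpace M] {K N : Set M} {g g' : M → ZMod 2} {p : M}

/-- The function `g` does not jump across `K` at `p`: it is constant off `K` near `p`. -/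
def NoJump (K : Set M) (g : M → ZMod 2) (p : M) : Prop :=
  ∃ c, ∀ᶠ x in 𝓝[Kᶜ] p, g x = c

/-- The function `g` is locally constant on `N \ K`. -/
def LocConstOff (K N : Set M) (g : M → ZMod 2) : Prop :=
  ∀ x ∈ N, x ∉ K → ∀ᶠ w in 𝓝 x, g w = g x

theorem NoJump.congr (h : NoJump K g p) (hg : g =ᶠ[𝓝[Kᶜ] p] g') : NoJump K g' p := by
  obtain ⟨c, hc⟩ := h
  exact ⟨c, by filter_upwards [hc, hg] with x hx hx' using hx' ▸ hx⟩

theorem NoJump.add (h : NoJump K g p) (h' : NoJump K g' p) : NoJump K (g + g') p := by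
  obtain ⟨c, hc⟩ := h
  obtain ⟨c', hc'⟩ := h'
  exact ⟨c + c', by filter_upwards [hc, hc'] with x hx hx' using congrArg₂ (· + ·) hx hx'⟩

theorem NoJump.add_iff (h : NoJump K g p) : NoJump K (g + g') p ↔ NoJump K g' p :=
  ⟨fun h' => (h.add h').congr (.of_forall fun x => by simp only [Pi.add_apply]; grind), h.add⟩

theorem LocConstOff.mono {N' : Set M} (h : LocConstOff K N g) (hN : N' ⊆ N) :
    LocConstOff K N' g :=
  fun x hx => h x (hN hx)

theorem LocConstOff.add (h : LocConstOff K N g) (h' : LocConstOff K N g') :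
    LocConstOff K N (g + g') := fun x hx hxK => by
  filter_upwards [h x hx hxK, h' x hx hxK] with w hw hw' using congrArg₂ (· + ·) hw hw'

theorem LocConstOff.noJump (h : LocConstOff K N g) (hp : p ∈ N) (hpK : p ∉ K) : NoJump K g p :=
  ⟨g p, nhdsWithin_le_nhds (h p hp hpK)⟩

end NoJump

section ArcRoot

variable {M : Type*} [TopologicalSpace M]

/-- The arc `γ '' [a, b]` lies in the source of the chart `φ`, and `k` is a branch of the square
root attached to its image under `φ`; the branch is then read on the surface as `k ∘ φ`. -/
structure IsArcRoot (k : ℂ → ℂ) (φ : OpenPartialHomeomorph M ℂ) (γ : ℝ → M) (a b : ℝ) : Prop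
    extends IsArcOn γ a b where
  mem_source : ∀ t ∈ Icc a b, γ t ∈ φ.source
  isArcSqrt : IsArcSqrt k (φ ∘ γ) a b

theorem IsArcOn.exists_isArcRoot {γ : ℝ → M} {a b : ℝ} (h : IsArcOn γ a b)
    {φ : OpenPartialHomeomorph M ℂ} (hs : ∀ t ∈ Icc a b, γ t ∈ φ.source) :
    ∃ k, IsArcRoot k φ γ a b := by
  have h' : IsArcOn (φ ∘ γ) a b :=
    ⟨h.le, φ.continuousOn.comp h.continuousOn hs, φ.injOn.comp h.injOn hs⟩
  obtain ⟨k, hk⟩ := h'.exists_isArcSqrt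
  exact ⟨k, h, hs, hk⟩

theorem map_nhdsWithin_compl_eq (φ : OpenPartialHomeomorph M ℂ) {S : Set M} (hS : S ⊆ φ.source)
    {x : M} (hx : x ∈ φ.source) : map φ (𝓝[Sᶜ] x) = 𝓝[(φ '' S)ᶜ] (φ x) := by
  have himage : φ '' (φ.source ∩ Sᶜ) = φ.target ∩ (φ '' S)ᶜ := by
    rw [← sdiff_eq, ← sdiff_eq, φ.injOn.image_sdiff_subset hS, φ.image_source_eq_target]
  rw [φ.map_nhdsWithin_eq hx, himage, nhdsWithin_inter_of_mem
    (nhdsWithin_le_nhds (φ.open_target.mem_nhds (φ.map_source hx)))]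

variable {k : ℂ → ℂ} {φ : OpenPartialHomeomorph M ℂ} {γ : ℝ → M} {a b : ℝ}

theorem IsArcRoot.image_subset_source (h : IsArcRoot k φ γ a b) : γ '' Icc a b ⊆ φ.source :=
  image_subset_iff.2 h.mem_source

theorem IsArcRoot.map_nhdsWithin (h : IsArcRoot k φ γ a b) {x : M} (hx : x ∈ φ.source) :
    map φ (𝓝[(γ '' Icc a b)ᶜ] x) = 𝓝[(φ ∘ γ '' Icc a b)ᶜ] (φ x) := by
  rw [image_comp, map_nhdsWithin_compl_eq φ h.image_subset_source hx]

theorem IsArcRoot.apply_notMem (h : IsArcRoot k φ γ a b) {x : M} (hx : x ∈ φ.source)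
    (hxγ : x ∉ γ '' Icc a b) : φ x ∉ φ ∘ γ '' Icc a b := by
  rw [image_comp, φ.injOn.mem_image_iff h.image_subset_source hx]
  exact hxγ

theorem IsArcRoot.continuousAt (h : IsArcRoot k φ γ a b) {x : M} (hx : x ∈ φ.source)
    (hxγ : x ∉ γ '' Icc a b) : ContinuousAt (fun x => k (φ x)) x :=
  ContinuousAt.comp (f := φ) (h.isArcSqrt.continuousOn_sqrt.continuousAt
    (h.isArcSqrt.isClosed_image.isOpen_compl.mem_nhds (h.apply_notMem hx hxγ))) (φ.continuousAt hx)

theorem IsArcRoot.sq_eq (h : IsArcRoot k φ γ a b) {x : M} (hx : x ∈ φ.source)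
    (hxγ : x ∉ γ '' Icc a b) : k (φ x) ^ 2 = zeroPole (φ (γ a)) (φ (γ b)) (φ x) :=
  h.isArcSqrt.sq_eq _ (h.apply_notMem hx hxγ)

theorem IsArcRoot.tendsto_sq (h : IsArcRoot k φ γ a b) {t : ℝ} (ht : t ∈ Ioo a b) :
    Tendsto (fun x => k (φ x) ^ 2) (𝓝[(γ '' Icc a b)ᶜ] (γ t))
      (𝓝 (zeroPole (φ (γ a)) (φ (γ b)) (φ (γ t)))) := by
  have hts := h.mem_source t (Ioo_subset_Icc_self ht)
  have hne : φ (γ t) ≠ φ (γ b) := fun e =>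
    (h.isArcSqrt.apply_mem_compl_endpoints ht) (by simp [e])
  have hcont : ContinuousAt (fun x => zeroPole (φ (γ a)) (φ (γ b)) (φ x)) (γ t) :=
    ContinuousAt.comp (f := φ) (continuousAt_zeroPole hne) (φ.continuousAt hts)
  refine (hcont.tendsto.mono_left nhdsWithin_le_nhds).congr' ?_
  filter_upwards [self_mem_nhdsWithin, nhdsWithin_le_nhds (φ.open_source.mem_nhds hts)]
    with x hx hxs
  exact (h.sq_eq hxs hx).symm

theorem IsArcRoot.dichotomy (h : IsArcRoot k φ γ a b) (hab : a < b) {g : M → ZMod 2}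
    (hg : ∀ t ∈ Ioo a b, ∀ᶠ x in 𝓝 (γ t), x ∉ γ '' Icc a b → ∀ᶠ w in 𝓝 x, g w = g x) :
    (∀ t ∈ Ioo a b, NoJump (γ '' Icc a b) g (γ t)) ∨
    (∀ t ∈ Ioo a b, ∃ s : M → ℂ, ContinuousAt s (γ t) ∧
      ∀ᶠ x in 𝓝[(γ '' Icc a b)ᶜ] (γ t), sgn (g x) = k (φ x) * s x) := by
  have hts : ∀ t ∈ Ioo a b, γ t ∈ φ.source := fun t ht => h.mem_source t (Ioo_subset_Icc_self ht)
  set N := interior {x | x ∉ γ '' Icc a b → ∀ᶠ w in 𝓝 x, g w = g x}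
  have hNγ : ∀ t ∈ Ioo a b, φ (γ t) ∈ φ.target ∩ φ.symm ⁻¹' N := fun t ht =>
    ⟨φ.map_source (hts t ht), by
      rw [mem_preimage, φ.left_inv (hts t ht)]
      exact mem_interior_iff_mem_nhds.2 (hg t ht)⟩
  have hpull : ∀ t ∈ Ioo a b, ∀ {p : M → ℂ → Prop},
      (∀ᶠ z in 𝓝[(φ ∘ γ '' Icc a b)ᶜ] (φ (γ t)), p (φ.symm z) z) →
        ∀ᶠ x in 𝓝[(γ '' Icc a b)ᶜ] (γ t), p x (φ x) := fun t ht p hp => by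
    rw [← h.map_nhdsWithin (hts t ht), eventually_map] at hp
    filter_upwards [hp, nhdsWithin_le_nhds (φ.open_source.mem_nhds (hts t ht))] with x hx hxs
    rwa [φ.left_inv hxs] at hx
  refine (h.isArcSqrt.dichotomy hab (φ.isOpen_inter_preimage_symm isOpen_interior) hNγ
    (g := g ∘ φ.symm) fun z hz hzα => (φ.continuousAt_symm hz.1).eventually
      (interior_subset hz.2 fun hzγ => hzα ?_)).imp (fun hc t ht => ?_) fun hs t ht => ?_
  · rw [image_comp]
    exact ⟨φ.symm z, hzγ, φ.right_inv hz.1⟩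
  · obtain ⟨c, hc⟩ := hc t ht
    exact ⟨c, hpull t ht (p := fun x _ => g x = c) hc⟩
  · obtain ⟨s, hsc, hs⟩ := hs t ht
    exact ⟨s ∘ φ, hsc.comp (f := φ) (φ.continuousAt (hts t ht)),
      hpull t ht (p := fun x z => sgn (g x) = k z * s z) hs⟩

theorem IsArcRoot.not_noJump (h : IsArcRoot k φ γ a b) {t : ℝ} (ht : t ∈ Ioo a b)
    {g : M → ZMod 2} {s : M → ℂ} (hs : ContinuousAt s (γ t))
    (hgs : ∀ᶠ x in 𝓝[(γ '' Icc a b)ᶜ] (γ t), sgn (g x) = k (φ x) * s x) :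
    ¬ NoJump (γ '' Icc a b) g (γ t) := by
  rintro ⟨c, hc⟩
  refine h.isArcSqrt.not_tendsto ht (zeroPole (φ (γ a)) (φ (γ b)) (φ (γ t)) * s (γ t) * sgn c) ?_
  rw [Function.comp_apply, ← h.map_nhdsWithin (h.mem_source t (Ioo_subset_Icc_self ht)),
    tendsto_map'_iff]
  refine (((h.tendsto_sq ht).mul (hs.tendsto.mono_left nhdsWithin_le_nhds)).mul_const _).congr' ?_
  filter_upwards [hgs, hc] with x hx hxc
  simp only [pow_two, mul_assoc, Function.comp_apply]
  rw [← mul_assoc (k _) (s x), ← hx, hxc, ← pow_two, sgn_sq, mul_one]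

theorem IsArcRoot.noJump_add (h : IsArcRoot k φ γ a b) {t : ℝ} (ht : t ∈ Ioo a b)
    {g g' : M → ZMod 2} {s s' : M → ℂ} (hs : ContinuousAt s (γ t)) (hs' : ContinuousAt s' (γ t))
    (hgs : ∀ᶠ x in 𝓝[(γ '' Icc a b)ᶜ] (γ t), sgn (g x) = k (φ x) * s x)
    (hgs' : ∀ᶠ x in 𝓝[(γ '' Icc a b)ᶜ] (γ t), sgn (g' x) = k (φ x) * s' x) :
    NoJump (γ '' Icc a b) (g + g') (γ t) := by
  refine exists_eventually_eq_of_tendsto_sgn (((h.tendsto_sq ht).mul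
    ((hs.mul hs').tendsto.mono_left nhdsWithin_le_nhds)).congr' ?_)
  filter_upwards [hgs, hgs'] with x hx hx'
  rw [Pi.add_apply, sgn_add, hx, hx', Pi.mul_apply]
  ring

end ArcRoot

section Surface

variable {M : Type*} [TopologicalSpace M] [ChartedSpace ℂ M]

theorem IsArcOn.dense_compl_of_chartedSpace [T2Space M] {γ : ℝ → M} {a b : ℝ}
    (h : IsArcOn γ a b) : Dense (γ '' Icc a b)ᶜ := by
  rw [← interior_eq_empty_iff_dense_compl, eq_empty_iff_forall_notMem]
  intro p hp
  set φ := chartAt ℂ p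
  have hps := mem_chart_source ℂ p
  have hmem : φ p ∈ φ.target ∩ φ.symm ⁻¹' interior (γ '' Icc a b) :=
    ⟨φ.map_source hps, by rwa [mem_preimage, φ.left_inv hps]⟩
  obtain ⟨ε, hε, hball⟩ :=
    Metric.isOpen_iff.1 (φ.isOpen_inter_preimage_symm isOpen_interior) _ hmem
  obtain ⟨i, hic, hii, -⟩ := h.exists_leftInvOn
  have hmaps : MapsTo φ.symm (ball (φ p) ε) (γ '' Icc a b) := fun z hz =>
    interior_subset (hball hz).2
  exact not_injOn_ball_real hε
    (hic.comp (φ.continuousOn_symm.mono fun z hz => (hball hz).1) hmaps)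
    (hii.comp (φ.symm.injOn.mono fun z hz => (hball hz).1) hmaps)

theorem exists_isOpen_isPreconnected_diff_singleton {p : M} {U : Set M} (hU : U ∈ 𝓝 p) :
    ∃ O ⊆ U, IsOpen O ∧ p ∈ O ∧ IsPreconnected (O \ {p}) := by
  set φ := chartAt ℂ p
  have hps := mem_chart_source ℂ p
  have hmem : φ p ∈ φ.target ∩ φ.symm ⁻¹' interior U :=
    ⟨φ.map_source hps, by
      rw [mem_preimage, φ.left_inv hps]
      exact mem_interior_iff_mem_nhds.2 hU⟩
  obtain ⟨ε, hε, hball⟩ :=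
    Metric.isOpen_iff.1 (φ.isOpen_inter_preimage_symm isOpen_interior) _ hmem
  have htarget : ball (φ p) ε ⊆ φ.target := fun z hz => (hball hz).1
  have hpunct : {z | ‖z - φ p‖ ∈ Ioo 0 ε} = ball (φ p) ε \ {φ p} := by
    ext z
    simp only [mem_ofPred_eq, mem_Ioo, norm_pos_iff, sub_ne_zero, Set.mem_sdiff, mem_ball,
      dist_eq_norm, mem_singleton_iff]
    tauto
  refine ⟨φ.symm '' ball (φ p) ε, ?_, φ.isOpen_image_symm_of_subset_target isOpen_ball htarget,
    ⟨φ p, mem_ball_self hε, φ.left_inv hps⟩, ?_⟩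
  · rintro _ ⟨z, hz, rfl⟩
    exact interior_subset (hball hz).2
  · have himage : φ.symm '' ball (φ p) ε \ {p} = φ.symm '' (ball (φ p) ε \ {φ p}) := by
      rw [(φ.symm.injOn.mono htarget).image_sdiff_subset
        (singleton_subset_iff.2 (mem_ball_self hε)), image_singleton, φ.left_inv hps]
    rw [himage, ← hpunct]
    refine (isPreconnected_setOf_norm_sub_mem (by simp) isPreconnected_Ioo
      (fun r hr => hr.1) _).image _ (φ.continuousOn_symm.mono ?_)
    rw [hpunct]
    exact sdiff_subset.trans htarget

theorem exists_forall_eventually_eq_of_isPreconnected {X Y : Type*} [TopologicalSpace X]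
    {S W : Set X} (hS : IsPreconnected S) (hS' : S.Nonempty) (hW : Dense W) {g : X → Y}
    (hg : ∀ x ∈ S, ∃ c, ∀ᶠ y in 𝓝[W] x, g y = c) :
    ∃ c, ∀ x ∈ S, ∀ᶠ y in 𝓝[W] x, g y = c := by
  let _ : TopologicalSpace Y := ⊥
  have _ : DiscreteTopology Y := ⟨rfl⟩
  obtain ⟨x₀, hx₀⟩ := hS'
  have hlim : ∀ x ∈ S, ∃ c, Tendsto g (𝓝[W] x) (𝓝 c) := by simpa [nhds_discrete] using hg
  have hcont := continuousOn_extendFrom (fun x _ => hW x) hlim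
  refine ⟨extendFrom W g x₀, fun x hx => ?_⟩
  rw [← hS.constant hcont hx hx₀]
  simpa [nhds_discrete] using tendsto_extendFrom (hlim x hx)

theorem noJump_of_eventually_noJump {K : Set M} (hK : Dense Kᶜ) {p : M} (hp : p ∈ K)
    {g : M → ZMod 2} (h : ∀ᶠ x in 𝓝[≠] p, NoJump K g x) : NoJump K g p := by
  obtain ⟨O, hOU, hO, hpO, hOp⟩ :=
    exists_isOpen_isPreconnected_diff_singleton (eventually_nhdsWithin_iff.1 h)
  obtain ⟨x₀, hx₀, hx₀K⟩ := hK.inter_open_nonempty O hO ⟨p, hpO⟩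
  obtain ⟨c, hc⟩ := exists_forall_eventually_eq_of_isPreconnected hOp
    ⟨x₀, hx₀, fun h => hx₀K (h ▸ hp)⟩ hK fun x hx => hOU hx.1 hx.2
  refine ⟨c, ?_⟩
  filter_upwards [self_mem_nhdsWithin, nhdsWithin_le_nhds (hO.mem_nhds hpO)] with x hxK hx
  exact (hc x ⟨hx, fun h => hxK (h ▸ hp)⟩).self_of_nhdsWithin hxK

end Surface

/-! ### Drawings -/

/-- A parametrised crossing-free drawing in `M` of a multigraph with vertex set `V` and edge set
`E`: each edge `e` runs along `arc e` from `point (src e)` at time `0` to `point (tgt e)` at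
time `1`. The orientation of the edges carries no information. -/
structure ArcDrawing (M V E : Type*) [TopologicalSpace M] where
  point : V → M
  arc : E → ℝ → M
  src : E → V
  tgt : E → V
  point_injective : Function.Injective point
  isArcOn_arc : ∀ e, IsArcOn (arc e) 0 1
  arc_zero : ∀ e, arc e 0 = point (src e)
  arc_one : ∀ e, arc e 1 = point (tgt e)
  arc_ne_point : ∀ e, ∀ t ∈ Ioo (0 : ℝ) 1, ∀ v, arc e t ≠ point v
  eq_of_arc_eq : ∀ e e', ∀ t ∈ Ioo (0 : ℝ) 1, ∀ t' ∈ Ioo (0 : ℝ) 1, arc e t = arc e' t' → e = e'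

namespace ArcDrawing

section Skeleton

variable {M V E : Type*} [TopologicalSpace M] (D : ArcDrawing M V E)

/-- The union of the vertex points and the edge arcs of a drawing. -/
def skeleton : Set M := range D.point ∪ ⋃ e, D.arc e '' Icc 0 1

theorem point_mem_skeleton (v : V) : D.point v ∈ D.skeleton := Or.inl ⟨v, rfl⟩

theorem arc_mem_skeleton (e : E) {t : ℝ} (ht : t ∈ Icc (0 : ℝ) 1) : D.arc e t ∈ D.skeleton :=
  Or.inr (mem_iUnion.2 ⟨e, t, ht, rfl⟩)

theorem eq_point_or_eq_arc (e : E) {t : ℝ} (ht : t ∈ Icc (0 : ℝ) 1) :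
    D.arc e t = D.point (D.src e) ∨ D.arc e t = D.point (D.tgt e) ∨ t ∈ Ioo (0 : ℝ) 1 := by
  rcases eq_endpoints_or_mem_Ioo_of_mem_Icc ht with rfl | rfl | ht
  · exact Or.inl (D.arc_zero e)
  · exact Or.inr (Or.inl (D.arc_one e))
  · exact Or.inr (Or.inr ht)

theorem exists_eq_of_mem_skeleton {p : M} (hp : p ∈ D.skeleton) :
    (∃ v, p = D.point v) ∨ ∃ e, ∃ t ∈ Ioo (0 : ℝ) 1, p = D.arc e t := by
  rcases hp with ⟨v, rfl⟩ | hp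
  · exact Or.inl ⟨v, rfl⟩
  · obtain ⟨e, t, ht, rfl⟩ := mem_iUnion.1 hp
    rcases D.eq_point_or_eq_arc e ht with h | h | h
    · exact Or.inl ⟨_, h⟩
    · exact Or.inl ⟨_, h⟩
    · exact Or.inr ⟨e, t, h, rfl⟩

theorem src_ne_tgt (e : E) : D.src e ≠ D.tgt e := fun h => by
  have := (D.isArcOn_arc e).injOn (by simp) (by simp)
    ((D.arc_zero e).trans ((congrArg D.point h).trans (D.arc_one e).symm))
  norm_num at this

variable [T2Space M]

theorem isClosed_skeleton [Finite V] [Finite E] : IsClosed D.skeleton :=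
  (Set.finite_range _).isClosed.union
    (isClosed_iUnion_of_finite fun e => (D.isArcOn_arc e).isClosed_image)

theorem dense_compl_skeleton [ChartedSpace ℂ M] [Finite V] [Finite E] : Dense D.skeletonᶜ := by
  have := ChartedSpace.locallyCompactSpace ℂ M
  have hpoint (v : V) : Dense ({D.point v}ᶜ : Set M) := by
    simpa using IsArcOn.dense_compl_of_chartedSpace (γ := fun _ : ℝ => D.point v)
      (a := 0) (b := 0) ⟨le_rfl, continuousOn_const, by simp⟩
  have hpoints := dense_iInter_of_isOpen (fun v => isOpen_compl_singleton) hpoint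
  have harcs := dense_iInter_of_isOpen (fun e => (D.isArcOn_arc e).isClosed_image.isOpen_compl)
    fun e => (D.isArcOn_arc e).dense_compl_of_chartedSpace
  refine (hpoints.inter_of_isOpen_left harcs
    (isOpen_iInter_of_finite fun _ => isOpen_compl_singleton)).mono ?_
  rintro x ⟨hx, hx'⟩ (⟨v, rfl⟩ | hxe)
  · exact mem_iInter.1 hx v rfl
  · obtain ⟨e, he⟩ := mem_iUnion.1 hxe
    exact mem_iInter.1 hx' e he

variable [Finite V] [Finite E]

theorem eventually_mem_skeleton_iff (e : E) {t : ℝ} (ht : t ∈ Ioo (0 : ℝ) 1) :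
    ∀ᶠ x in 𝓝 (D.arc e t), (x ∈ D.skeleton ↔ x ∈ D.arc e '' Icc 0 1) := by
  have hpoint : D.arc e t ∉ range D.point := fun ⟨v, hv⟩ => D.arc_ne_point e t ht v hv.symm
  have hother : D.arc e t ∉ ⋃ e' : {e' // e' ≠ e}, D.arc e' '' Icc 0 1 := by
    intro h
    obtain ⟨⟨e', he'⟩, s, hs, hs'⟩ := mem_iUnion.1 h
    rcases D.eq_point_or_eq_arc e' hs with h | h | h
    · exact D.arc_ne_point e t ht _ (hs'.symm.trans h)
    · exact D.arc_ne_point e t ht _ (hs'.symm.trans h)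
    · exact he' (D.eq_of_arc_eq e' e s h t ht hs')
  filter_upwards [(Set.finite_range D.point).isClosed.isOpen_compl.mem_nhds hpoint,
    (isClosed_iUnion_of_finite fun e' : {e' // e' ≠ e} =>
      (D.isArcOn_arc e').isClosed_image).isOpen_compl.mem_nhds hother] with x hx hx'
  refine ⟨fun h => ?_, fun ⟨s, hs, h⟩ => h ▸ D.arc_mem_skeleton e hs⟩
  obtain ⟨e', hxe⟩ := mem_iUnion.1 (h.resolve_left hx)
  by_contra hne
  exact hx' (mem_iUnion.2 ⟨⟨e', fun h => hne (h ▸ hxe)⟩, hxe⟩)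

theorem nhdsWithin_compl_skeleton (e : E) {a b t : ℝ} (ha : 0 ≤ a) (hb : b ≤ 1)
    (ht : t ∈ Ioo a b) : 𝓝[D.skeletonᶜ] (D.arc e t) = 𝓝[(D.arc e '' Icc a b)ᶜ] (D.arc e t) := by
  rw [((D.isArcOn_arc e).nhdsWithin_compl_subarc ha hb ht).2.2, nhdsWithin_eq_iff_eventuallyEq]
  filter_upwards [D.eventually_mem_skeleton_iff e (Ioo_subset_Ioo ha hb ht)] with x hx
  exact propext (not_congr hx)

end Skeleton

section Piece

variable {M V E : Type*} [TopologicalSpace M] [T2Space M] [Finite V] [Finite E]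
  {D : ArcDrawing M V E} {e : E} {a b : ℝ} {φ : OpenPartialHomeomorph M ℂ} {k : ℂ → ℂ} {N : Set M}
  {g g' : M → ZMod 2}

theorem dichotomy_of_isArcRoot (hk : IsArcRoot k φ (D.arc e) a b) (ha : 0 ≤ a) (hb : b ≤ 1)
    (hab : a < b) (hN : ∀ t ∈ Ioo a b, N ∈ 𝓝 (D.arc e t)) (hg : LocConstOff D.skeleton N g) :
    (∀ t ∈ Ioo a b, NoJump D.skeleton g (D.arc e t)) ∨
    (∀ t ∈ Ioo a b, ∃ s : M → ℂ, ContinuousAt s (D.arc e t) ∧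
      ∀ᶠ x in 𝓝[D.skeletonᶜ] (D.arc e t), sgn (g x) = k (φ x) * s x) := by
  refine (hk.dichotomy hab (g := g) fun t ht => ?_).imp (fun h t ht => ?_) fun h t ht => ?_
  · have hmem := nhdsWithin_eq_iff_eventuallyEq.1 (D.nhdsWithin_compl_skeleton e ha hb ht)
    filter_upwards [hN t ht, hmem.mem_iff] with x hx hx' hxe using hg x hx (hx'.2 hxe)
  · rw [NoJump, D.nhdsWithin_compl_skeleton e ha hb ht]
    exact h t ht
  · rw [D.nhdsWithin_compl_skeleton e ha hb ht]
    exact h t ht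

theorem not_noJump_of_isArcRoot (hk : IsArcRoot k φ (D.arc e) a b) (ha : 0 ≤ a) (hb : b ≤ 1)
    {t : ℝ} (ht : t ∈ Ioo a b) {s : M → ℂ} (hs : ContinuousAt s (D.arc e t))
    (hgs : ∀ᶠ x in 𝓝[D.skeletonᶜ] (D.arc e t), sgn (g x) = k (φ x) * s x) :
    ¬ NoJump D.skeleton g (D.arc e t) := by
  rw [D.nhdsWithin_compl_skeleton e ha hb ht] at hgs
  rw [NoJump, D.nhdsWithin_compl_skeleton e ha hb ht]
  exact hk.not_noJump ht hs hgs

theorem noJump_add_of_isArcRoot (hk : IsArcRoot k φ (D.arc e) a b) (ha : 0 ≤ a) (hb : b ≤ 1)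
    {t : ℝ} (ht : t ∈ Ioo a b) (hN : ∀ t ∈ Ioo a b, N ∈ 𝓝 (D.arc e t))
    (hg : LocConstOff D.skeleton N g) (hg' : LocConstOff D.skeleton N g')
    (h : ¬ NoJump D.skeleton g (D.arc e t)) (h' : ¬ NoJump D.skeleton g' (D.arc e t)) :
    NoJump D.skeleton (g + g') (D.arc e t) := by
  have hab := ht.1.trans ht.2
  obtain ⟨s, hs, hgs⟩ :=
    (dichotomy_of_isArcRoot hk ha hb hab hN hg).resolve_left (fun H => h (H t ht)) t ht
  obtain ⟨s', hs', hgs'⟩ :=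
    (dichotomy_of_isArcRoot hk ha hb hab hN hg').resolve_left (fun H => h' (H t ht)) t ht
  rw [D.nhdsWithin_compl_skeleton e ha hb ht] at hgs hgs'
  rw [NoJump, D.nhdsWithin_compl_skeleton e ha hb ht]
  exact hk.noJump_add ht hs hs' hgs hgs'

end Piece

section Jump

variable {M V E : Type*} [TopologicalSpace M] [ChartedSpace ℂ M] (D : ArcDrawing M V E)

theorem exists_isArcRoot (e : E) {t : ℝ} (ht : t ∈ Ioo (0 : ℝ) 1) {N : Set M}
    (hN : N ∈ 𝓝 (D.arc e t)) :
    ∃ (a b : ℝ) (φ : OpenPartialHomeomorph M ℂ) (k : ℂ → ℂ), 0 ≤ a ∧ b ≤ 1 ∧ t ∈ Ioo a b ∧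
      MapsTo (D.arc e) (Icc a b) N ∧ IsArcRoot k φ (D.arc e) a b := by
  set φ := chartAt ℂ (D.arc e t)
  have hcont : ContinuousAt (D.arc e) t :=
    (D.isArcOn_arc e).continuousOn.continuousAt (Icc_mem_nhds ht.1 ht.2)
  have hmem : D.arc e ⁻¹' (N ∩ φ.source) ∩ Icc 0 1 ∈ 𝓝 t :=
    inter_mem (hcont (inter_mem hN (chart_source_mem_nhds ℂ _))) (Icc_mem_nhds ht.1 ht.2)
  obtain ⟨a, b, htab, hab, hsub⟩ := exists_Icc_mem_subset_of_mem_nhds hmem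
  have hle := htab.1.trans htab.2
  have ha := (hsub (left_mem_Icc.2 hle)).2.1
  have hb := (hsub (right_mem_Icc.2 hle)).2.2
  obtain ⟨k, hk⟩ := ((D.isArcOn_arc e).subarc ha hle hb).exists_isArcRoot
    fun s hs => (hsub hs).1.2
  exact ⟨a, b, φ, k, ha, hb, Icc_mem_nhds_iff.1 hab, fun s hs => (hsub hs).1.1, hk⟩

variable [T2Space M] [Finite V] [Finite E] {N : Set M} {g g' : M → ZMod 2}

theorem eventually_noJump_iff (hN : IsOpen N) (hg : LocConstOff D.skeleton N g) (e : E) {t : ℝ}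
    (ht : t ∈ Ioo (0 : ℝ) 1) (htN : D.arc e t ∈ N) :
    ∀ᶠ s in 𝓝 t, (NoJump D.skeleton g (D.arc e s) ↔ NoJump D.skeleton g (D.arc e t)) := by
  obtain ⟨a, b, φ, k, ha, hb, htab, hmaps, hk⟩ := D.exists_isArcRoot e ht (hN.mem_nhds htN)
  filter_upwards [Ioo_mem_nhds htab.1 htab.2] with s hs
  rcases dichotomy_of_isArcRoot hk ha hb (htab.1.trans htab.2)
    (fun r hr => hN.mem_nhds (hmaps (Ioo_subset_Icc_self hr))) hg with h | h
  · exact iff_of_true (h s hs) (h t htab)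
  · obtain ⟨u, hu, hgu⟩ := h s hs
    obtain ⟨w, hw, hgw⟩ := h t htab
    exact iff_of_false (not_noJump_of_isArcRoot hk ha hb hs hu hgu)
      (not_noJump_of_isArcRoot hk ha hb htab hw hgw)

theorem noJump_add_of_not (hN : IsOpen N) (hg : LocConstOff D.skeleton N g)
    (hg' : LocConstOff D.skeleton N g') (e : E) {t : ℝ} (ht : t ∈ Ioo (0 : ℝ) 1)
    (htN : D.arc e t ∈ N) (h : ¬ NoJump D.skeleton g (D.arc e t))
    (h' : ¬ NoJump D.skeleton g' (D.arc e t)) : NoJump D.skeleton (g + g') (D.arc e t) := by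
  obtain ⟨a, b, φ, k, ha, hb, htab, hmaps, hk⟩ := D.exists_isArcRoot e ht (hN.mem_nhds htN)
  exact noJump_add_of_isArcRoot hk ha hb htab
    (fun r hr => hN.mem_nhds (hmaps (Ioo_subset_Icc_self hr))) hg hg' h h'

end Jump

end ArcDrawing

theorem exists_locConstOff_sgn_eq_div {M : Type*} [TopologicalSpace M] {K N : Set M}
    (hK : IsClosed K) (hN : IsOpen N) {F S : M → ℂ}
    (hF : ∀ x ∈ N, x ∉ K → ContinuousAt F x) (hS : ∀ x ∈ N, x ∉ K → ContinuousAt S x)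
    (hS0 : ∀ x ∈ N, x ∉ K → S x ≠ 0) (hsq : ∀ x ∈ N, x ∉ K → F x ^ 2 = S x ^ 2) :
    ∃ g : M → ZMod 2, LocConstOff K N g ∧ ∀ x ∈ N, x ∉ K → sgn (g x) = F x / S x := by
  classical
  have hsgn : ∀ x ∈ N, x ∉ K → sgn (if F x = S x then 0 else 1) = F x / S x := by
    intro x hx hxK
    have h0 := hS0 x hx hxK
    rcases sq_eq_sq_iff_eq_or_eq_neg.1 (hsq x hx hxK) with h | h
    · rw [if_pos h, h, div_self h0, sgn_zero]
    · have hne : F x ≠ S x := fun h' => h0 (by grind)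
      rw [if_neg hne, h, neg_div, div_self h0, sgn_one]
  refine ⟨fun x => if F x = S x then 0 else 1, fun x hx hxK => ?_, hsgn⟩
  obtain ⟨c, hc⟩ := exists_eventually_eq_of_tendsto_sgn
    (((hF x hx hxK).div (hS x hx hxK) (hS0 x hx hxK)).tendsto.congr' (by
      filter_upwards [hN.mem_nhds hx, hK.isOpen_compl.mem_nhds hxK] with w hw hwK
      exact (hsgn w hw hwK).symm))
  exact hc.mono fun w hw => hw.trans hc.self_of_nhds.symm

theorem prod_zeroPole {ι : Type*} (J : Finset ι) (p : ℂ) (q : ι → ℂ) (z : ℂ) :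
    ∏ i ∈ J, zeroPole p (q i) z = (z - p) ^ J.card * ∏ i ∈ J, (z - q i)⁻¹ := by
  simp only [zeroPole, div_eq_mul_inv, Finset.prod_mul_distrib, Finset.prod_const]

theorem continuousAt_prod_inv_sub {ι : Type*} {J : Finset ι} {q : ι → ℂ} {z : ℂ}
    (h : ∀ i ∈ J, z ≠ q i) : ContinuousAt (fun w => ∏ i ∈ J, (w - q i)⁻¹) z :=
  tendsto_finsetProd _ fun i hi => ContinuousAt.inv₀ (by fun_prop) (sub_ne_zero.2 (h i hi))

namespace ArcDrawing

section RecordsJumps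

variable {M V E : Type*} [TopologicalSpace M] (D : ArcDrawing M V E)

/-- The cochain `z` is the jump cochain of `g` on `N`: the function `g` jumps across an edge `e`
at a point of `N` exactly when `z e ≠ 0`. -/
def RecordsJumps (g : M → ZMod 2) (N : Set M) (z : E → ZMod 2) : Prop :=
  ∀ e, ∀ t ∈ Ioo (0 : ℝ) 1, D.arc e t ∈ N → (NoJump D.skeleton g (D.arc e t) ↔ z e = 0)

open Classical in
/-- The drawing `D` with the edges of `S` run through backwards. -/
noncomputable def reverse (S : Set E) : ArcDrawing M V E where
  point := D.point
  arc e t := D.arc e (if e ∈ S then 1 - t else t)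
  src e := if e ∈ S then D.tgt e else D.src e
  tgt e := if e ∈ S then D.src e else D.tgt e
  point_injective := D.point_injective
  isArcOn_arc e := by
    refine ⟨zero_le_one, (D.isArcOn_arc e).continuousOn.comp ?_ fun t ht => ?_,
      (D.isArcOn_arc e).injOn.comp ?_ fun t ht => ?_⟩
    · split_ifs <;> fun_prop
    · split_ifs <;> constructor <;> linarith [ht.1, ht.2]
    · intro t _ s _ h
      split_ifs at h <;> linarith
    · split_ifs <;> constructor <;> linarith [ht.1, ht.2]
  arc_zero e := by split_ifs <;> simp [D.arc_zero, D.arc_one]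
  arc_one e := by split_ifs <;> simp [D.arc_zero, D.arc_one]
  arc_ne_point e t ht v :=
    D.arc_ne_point e _ (by split_ifs <;> constructor <;> linarith [ht.1, ht.2]) v
  eq_of_arc_eq e e' t ht t' ht' :=
    D.eq_of_arc_eq e e' _ (by split_ifs <;> constructor <;> linarith [ht.1, ht.2]) _
      (by split_ifs <;> constructor <;> linarith [ht'.1, ht'.2])

theorem reverse_reverse (S : Set E) : (D.reverse S).reverse S = D := by
  cases D
  simp only [reverse, mk.injEq, true_and]
  refine ⟨funext fun e => funext fun t => ?_, funext fun e => ?_, funext fun e => ?_⟩ <;>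
    by_cases h : e ∈ S <;> simp [h]

theorem skeleton_reverse (S : Set E) : (D.reverse S).skeleton = D.skeleton := by
  have hsub (D : ArcDrawing M V E) : (D.reverse S).skeleton ⊆ D.skeleton := by
    rintro _ (⟨v, rfl⟩ | hx)
    · exact D.point_mem_skeleton v
    · obtain ⟨e, t, ht, rfl⟩ := mem_iUnion.1 hx
      refine D.arc_mem_skeleton e ?_
      split_ifs <;> constructor <;> linarith [ht.1, ht.2]
  refine (hsub D).antisymm ?_
  simpa only [D.reverse_reverse] using hsub (D.reverse S)

variable {D}

theorem RecordsJumps.reverse {g : M → ZMod 2} {N : Set M} {z : E → ZMod 2}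
    (h : D.RecordsJumps g N z) (S : Set E) : (D.reverse S).RecordsJumps g N z := by
  intro e t ht hN
  rw [skeleton_reverse]
  exact h e _ (by split_ifs <;> constructor <;> linarith [ht.1, ht.2]) hN

theorem RecordsJumps.of_reverse {g : M → ZMod 2} {N : Set M} {z : E → ZMod 2} {S : Set E}
    (h : (D.reverse S).RecordsJumps g N z) : D.RecordsJumps g N z := by
  simpa only [D.reverse_reverse] using h.reverse S

variable (D)

theorem reverse_tgt_ne (v : V) (e : E) : (D.reverse {e | D.tgt e = v}).tgt e ≠ v := by
  by_cases h : D.tgt e = v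
  · simpa [reverse, h] using h ▸ D.src_ne_tgt e
  · simp [reverse, h]

theorem reverse_src_eq_iff (v : V) (e : E) :
    (D.reverse {e | D.tgt e = v}).src e = v ↔ D.src e = v ∨ D.tgt e = v := by
  by_cases h : D.tgt e = v <;> simp [reverse, h]

end RecordsJumps

section Star

variable {M V E : Type*} [TopologicalSpace M] {D : ArcDrawing M V E} {v : V} {U N : Set M}
  {φ : OpenPartialHomeomorph M ℂ} {b : E → ℝ} {k : E → ℂ → ℂ} {x : M} {e : E}

variable (D v U N φ b k) in
/-- A star-shaped picture of the drawing at a vertex `v` all of whose edges start there: in the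
chart domain `N` the drawing consists of `point v` and initial pieces `arc e '' (0, b e)` of the
edges at `v`, each with a branch `k e` of the square root attached to it. -/
structure IsStar : Prop where
  isOpen : IsOpen N
  point_mem : D.point v ∈ N
  subset : N ⊆ U
  subset_source : N ⊆ φ.source
  mem_Ioo : ∀ e, D.src e = v → b e ∈ Ioo 0 1
  mapsTo : ∀ e, D.src e = v → MapsTo (D.arc e) (Icc 0 (b e)) U
  isArcRoot : ∀ e, D.src e = v → IsArcRoot (k e) φ (D.arc e) 0 (b e)
  eq_or_exists : ∀ x ∈ N, x ∈ D.skeleton →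
    x = D.point v ∨ ∃ e, D.src e = v ∧ ∃ t ∈ Ioo 0 (b e), x = D.arc e t

theorem eq_zero_of_arc_eq_point (htgt : D.tgt e ≠ v) {t : ℝ} (ht : t ∈ Icc (0 : ℝ) 1)
    (h : D.arc e t = D.point v) : t = 0 ∧ D.src e = v := by
  rcases eq_endpoints_or_mem_Ioo_of_mem_Icc ht with rfl | rfl | ht
  · exact ⟨rfl, D.point_injective ((D.arc_zero e).symm.trans h)⟩
  · exact absurd (D.point_injective ((D.arc_one e).symm.trans h)) htgt
  · exact absurd h (D.arc_ne_point e t ht v)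

theorem eventually_eq_or_exists_of_mem_skeleton [T2Space M] [Finite V] [Finite E]
    (htgt : ∀ e, D.tgt e ≠ v) (hb : ∀ e, D.src e = v → 0 < b e) :
    ∀ᶠ x in 𝓝 (D.point v), x ∈ D.skeleton →
      x = D.point v ∨ ∃ e, D.src e = v ∧ ∃ t ∈ Ioo 0 (b e), x = D.arc e t := by
  classical
  have hpoint : ∀ᶠ x in 𝓝 (D.point v), x ∉ D.point '' {w | w ≠ v} :=
    (Set.toFinite _).isClosed.isOpen_compl.mem_nhds
      fun ⟨w, hw, h⟩ => hw (D.point_injective h)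
  have harc : ∀ e, ∀ᶠ x in 𝓝 (D.point v),
      x ∉ D.arc e '' (Icc 0 1 ∩ Ici (if D.src e = v then b e else 0)) := by
    intro e
    refine ((isCompact_Icc.inter_right isClosed_Ici).image_of_continuousOn
      ((D.isArcOn_arc e).continuousOn.mono inter_subset_left)).isClosed.isOpen_compl.mem_nhds ?_
    rintro ⟨t, ⟨ht, htb⟩, h⟩
    obtain ⟨rfl, hsrc⟩ := eq_zero_of_arc_eq_point (htgt e) ht h
    rw [if_pos hsrc] at htb
    exact (hb e hsrc).not_ge htb
  filter_upwards [hpoint, eventually_all.2 harc] with x hx hx' hxs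
  rcases D.exists_eq_of_mem_skeleton hxs with ⟨w, rfl⟩ | ⟨e, t, ht, rfl⟩
  · exact Or.inl (congrArg D.point (not_not.1 fun hw => hx ⟨w, hw, rfl⟩))
  · have hlt : t < if D.src e = v then b e else 0 :=
      not_le.1 fun h => hx' e ⟨t, ⟨Ioo_subset_Icc_self ht, h⟩, rfl⟩
    split_ifs at hlt with hsrc
    · exact Or.inr ⟨e, hsrc, t, ⟨ht.1, hlt⟩, rfl⟩
    · exact absurd hlt ht.1.not_gt

theorem exists_isArcRoot_zero (D : ArcDrawing M V E) (e : E) (hU : U ∈ 𝓝 (D.point (D.src e)))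
    (hφ : D.point (D.src e) ∈ φ.source) :
    ∃ b ∈ Ioo (0 : ℝ) 1, ∃ k, MapsTo (D.arc e) (Icc 0 b) U ∧ IsArcRoot k φ (D.arc e) 0 b := by
  have hcont : ContinuousWithinAt (D.arc e) (Icc 0 1) 0 :=
    (D.isArcOn_arc e).continuousOn 0 (by simp)
  rw [ContinuousWithinAt, nhdsWithin_Icc_eq_nhdsGE zero_lt_one, D.arc_zero] at hcont
  obtain ⟨b, hb, hsub⟩ := mem_nhdsGE_iff_exists_Icc_subset.1 (inter_mem
    (hcont (inter_mem hU (φ.open_source.mem_nhds hφ)))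
    (nhdsWithin_le_nhds (Iio_mem_nhds zero_lt_one)))
  have hb1 : b < 1 := (hsub (right_mem_Icc.2 (le_of_lt hb))).2
  obtain ⟨k, hk⟩ := ((D.isArcOn_arc e).subarc le_rfl (le_of_lt hb) hb1.le).exists_isArcRoot
    fun t ht => (hsub ht).1.2
  exact ⟨b, ⟨hb, hb1⟩, k, fun t ht => (hsub ht).1.1, hk⟩

theorem exists_isStar [T2Space M] [ChartedSpace ℂ M] [Finite V] [Finite E]
    (htgt : ∀ e, D.tgt e ≠ v) (hU : IsOpen U) (hv : D.point v ∈ U) :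
    ∃ N φ b k, D.IsStar v U N φ b k := by
  set φ := chartAt ℂ (D.point v)
  have hφ := mem_chart_source ℂ (D.point v)
  have hpiece (e) : ∃ b k, D.src e = v → b ∈ Ioo (0 : ℝ) 1 ∧ MapsTo (D.arc e) (Icc 0 b) U ∧
      IsArcRoot k φ (D.arc e) 0 b := by
    by_cases hsrc : D.src e = v
    · obtain ⟨b, hb, k, hbk⟩ :=
        D.exists_isArcRoot_zero (φ := φ) e (hU.mem_nhds (hsrc ▸ hv)) (by rwa [hsrc])
      exact ⟨b, k, fun _ => ⟨hb, hbk⟩⟩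
    · exact ⟨0, 0, fun h => absurd h hsrc⟩
  choose b k hbk using hpiece
  have hloc := (eventually_eq_or_exists_of_mem_skeleton htgt fun e he => (hbk e he).1.1)
  obtain ⟨N, hNsub, hN, hvN⟩ := mem_nhds_iff.1 hloc
  exact ⟨N ∩ (U ∩ φ.source), φ, b, k, hN.inter (hU.inter φ.open_source), ⟨hvN, hv, hφ⟩,
    fun x hx => hx.2.1, fun x hx => hx.2.2, fun e he => (hbk e he).1, fun e he => (hbk e he).2.1,
    fun e he => (hbk e he).2.2, fun x hx => hNsub hx.1⟩

end Star

end ArcDrawing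

/-! ### Jumps at a vertex -/

namespace ArcDrawing

namespace IsStar

variable {M V E : Type*} [TopologicalSpace M] {D : ArcDrawing M V E} {v : V} {U N : Set M}
  {φ : OpenPartialHomeomorph M ℂ} {b : E → ℝ} {k : E → ℂ → ℂ} {x : M} {e : E} {t : ℝ}
  {J : Finset E} {g : M → ZMod 2}

theorem mem_Ioo_one (h : D.IsStar v U N φ b k) (he : D.src e = v) (ht : t ∈ Ioo 0 (b e)) :
    t ∈ Ioo (0 : ℝ) 1 :=
  ⟨ht.1, ht.2.trans (h.mem_Ioo e he).2⟩

theorem image_subset_skeleton (h : D.IsStar v U N φ b k) (he : D.src e = v) :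
    D.arc e '' Icc 0 (b e) ⊆ D.skeleton := by
  rintro _ ⟨t, ht, rfl⟩
  exact D.arc_mem_skeleton e ⟨ht.1, ht.2.trans (h.mem_Ioo e he).2.le⟩

theorem arc_notMem_image (h : D.IsStar v U N φ b k) {e' : E} (he' : D.src e' = v) (hne : e' ≠ e)
    (ht : t ∈ Ioo (0 : ℝ) 1) : D.arc e t ∉ D.arc e' '' Icc 0 (b e') := by
  rintro ⟨s, hs, hst⟩
  rcases eq_or_lt_of_le hs.1 with rfl | h0
  · exact D.arc_ne_point e t ht _ (hst.symm.trans (D.arc_zero e'))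
  · exact hne (D.eq_of_arc_eq e' e s ⟨h0, hs.2.trans_lt (h.mem_Ioo e' he').2⟩ t ht hst)

theorem src_eq_and_lt (h : D.IsStar v U N φ b k) (ht : t ∈ Ioo (0 : ℝ) 1) (hN : D.arc e t ∈ N) :
    D.src e = v ∧ t < b e := by
  rcases h.eq_or_exists _ hN (D.arc_mem_skeleton e (Ioo_subset_Icc_self ht)) with
    hv | ⟨e', he', s, hs, hst⟩
  · exact absurd hv (D.arc_ne_point e t ht v)
  · have hs' := h.mem_Ioo_one he' hs
    obtain rfl := D.eq_of_arc_eq e e' t ht s hs' hst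
    obtain rfl := (D.isArcOn_arc e).injOn (Ioo_subset_Icc_self ht) (Ioo_subset_Icc_self hs') hst
    exact ⟨he', hs.2⟩

theorem apply_ne_apply_end (h : D.IsStar v U N φ b k) (he : D.src e = v) (hx : x ∈ N) :
    φ x ≠ φ (D.arc e (b e)) := by
  have hb := h.mem_Ioo e he
  intro heq
  obtain rfl := φ.injOn (h.subset_source hx)
    ((h.isArcRoot e he).mem_source _ (right_mem_Icc.2 hb.1.le)) heq
  exact (h.src_eq_and_lt hb hx).2.false

theorem continuousAt_prod (h : D.IsStar v U N φ b k) (hJ : ∀ e ∈ J, D.src e = v) (hx : x ∈ N)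
    (hxJ : ∀ e ∈ J, x ∉ D.arc e '' Icc 0 (b e)) :
    ContinuousAt (fun w => ∏ e ∈ J, k e (φ w)) x :=
  tendsto_finsetProd _ fun e he =>
    (h.isArcRoot e (hJ e he)).continuousAt (h.subset_source hx) (hxJ e he)

theorem continuousAt_prod_arc (h : D.IsStar v U N φ b k) (hJ : ∀ e ∈ J, D.src e = v)
    (ht : t ∈ Ioo (0 : ℝ) 1) (hN : D.arc e t ∈ N) (heJ : e ∉ J) :
    ContinuousAt (fun w => ∏ e ∈ J, k e (φ w)) (D.arc e t) :=
  h.continuousAt_prod hJ hN fun e' he' =>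
    h.arc_notMem_image (hJ e' he') (ne_of_mem_of_not_mem he' heJ) ht

theorem continuousAt_prod_of_notMem (h : D.IsStar v U N φ b k) (hJ : ∀ e ∈ J, D.src e = v)
    (hx : x ∈ N) (hxK : x ∉ D.skeleton) : ContinuousAt (fun w => ∏ e ∈ J, k e (φ w)) x :=
  h.continuousAt_prod hJ hx fun e he hxe => hxK (h.image_subset_skeleton (hJ e he) hxe)

theorem prod_sq (h : D.IsStar v U N φ b k) (hJ : ∀ e ∈ J, D.src e = v) (hx : x ∈ N)
    (hxK : x ∉ D.skeleton) :
    (∏ e ∈ J, k e (φ x)) ^ 2 = (φ x - φ (D.point v)) ^ J.card *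
      ∏ e ∈ J, (φ x - φ (D.arc e (b e)))⁻¹ := by
  rw [← prod_zeroPole, ← Finset.prod_pow]
  refine Finset.prod_congr rfl fun e he => ?_
  rw [(h.isArcRoot e (hJ e he)).sq_eq (h.subset_source hx)
    fun hxe => hxK (h.image_subset_skeleton (hJ e he) hxe), D.arc_zero, hJ e he]

theorem continuousAt_prod_inv (h : D.IsStar v U N φ b k) (hJ : ∀ e ∈ J, D.src e = v)
    (hx : x ∈ N) : ContinuousAt (fun w => ∏ e ∈ J, (φ w - φ (D.arc e (b e)))⁻¹) x :=
  ContinuousAt.comp (f := φ) (continuousAt_prod_inv_sub fun e he =>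
    h.apply_ne_apply_end (hJ e he) hx) (φ.continuousAt (h.subset_source hx))

theorem prod_inv_ne_zero (h : D.IsStar v U N φ b k) (hJ : ∀ e ∈ J, D.src e = v) (hx : x ∈ N) :
    ∏ e ∈ J, (φ x - φ (D.arc e (b e)))⁻¹ ≠ 0 :=
  Finset.prod_ne_zero_iff.2 fun e he =>
    inv_ne_zero (sub_ne_zero.2 (h.apply_ne_apply_end (hJ e he) hx))

theorem exists_tendsto_of_notMem (h : D.IsStar v U N φ b k) (hJ : ∀ e ∈ J, D.src e = v)
    (heJ : e ∉ J) (ht : t ∈ Ioo (0 : ℝ) 1) (hN : D.arc e t ∈ N)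
    (hjump : NoJump D.skeleton g (D.arc e t)) :
    ∃ y, Tendsto (fun x => sgn (g x) * ∏ e ∈ J, k e (φ x)) (𝓝[D.skeletonᶜ] (D.arc e t)) (𝓝 y) := by
  obtain ⟨c, hc⟩ := hjump
  refine ⟨_, (((h.continuousAt_prod_arc hJ ht hN heJ).tendsto.mono_left
    nhdsWithin_le_nhds).const_mul (sgn c)).congr' ?_⟩
  filter_upwards [hc] with x hx using by rw [hx]

section Parity

variable [T2Space M] [Finite V] [Finite E]

theorem exists_tendsto_of_mem (h : D.IsStar v U N φ b k) (hU : IsOpen U)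
    (hg : LocConstOff D.skeleton U g) (hJ : ∀ e ∈ J, D.src e = v) (heJ : e ∈ J)
    (ht : t ∈ Ioo 0 (b e)) (hN : D.arc e t ∈ N) (hjump : ¬ NoJump D.skeleton g (D.arc e t)) :
    ∃ y, Tendsto (fun x => sgn (g x) * ∏ e ∈ J, k e (φ x)) (𝓝[D.skeletonᶜ] (D.arc e t)) (𝓝 y) := by
  classical
  have he := hJ e heJ
  have hb := h.mem_Ioo e he
  have hk := h.isArcRoot e he
  obtain ⟨s, hs, hgs⟩ := (dichotomy_of_isArcRoot hk le_rfl hb.2.le hb.1 (fun r hr =>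
    hU.mem_nhds (h.mapsTo e he (Ioo_subset_Icc_self hr))) hg).resolve_left
    (fun H => hjump (H t ht)) t ht
  have herase := h.continuousAt_prod_arc (J := J.erase e)
    (fun e' he' => hJ e' (Finset.mem_of_mem_erase he')) (h.mem_Ioo_one he ht) hN (by simp)
  have hsq := hk.tendsto_sq ht
  rw [← D.nhdsWithin_compl_skeleton e le_rfl hb.2.le ht] at hsq
  refine ⟨_, ((hsq.mul (hs.tendsto.mono_left nhdsWithin_le_nhds)).mul
    (herase.tendsto.mono_left nhdsWithin_le_nhds)).congr' ?_⟩
  filter_upwards [hgs] with x hx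
  rw [← Finset.mul_prod_erase J _ heJ, hx]
  ring

theorem exists_tendsto (h : D.IsStar v U N φ b k) (hU : IsOpen U)
    (hg : LocConstOff D.skeleton U g) (hJ : ∀ e ∈ J, D.src e = v)
    (hjump : ∀ e, ∀ t ∈ Ioo (0 : ℝ) 1, D.arc e t ∈ N →
      (NoJump D.skeleton g (D.arc e t) ↔ e ∉ J)) (hx : x ∈ N \ {D.point v}) :
    ∃ y, Tendsto (fun x => sgn (g x) * ∏ e ∈ J, k e (φ x)) (𝓝[D.skeletonᶜ] x) (𝓝 y) := by
  by_cases hxK : x ∈ D.skeleton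
  · obtain ⟨e, he, t, ht, rfl⟩ := (h.eq_or_exists x hx.1 hxK).resolve_left hx.2
    have hiff := hjump e t (h.mem_Ioo_one he ht) hx.1
    by_cases heJ : e ∈ J
    · exact h.exists_tendsto_of_mem hU hg hJ heJ ht hx.1 (fun H => hiff.1 H heJ)
    · exact h.exists_tendsto_of_notMem hJ heJ (h.mem_Ioo_one he ht) hx.1 (hiff.2 heJ)
  · refine ⟨_, (((h.continuousAt_prod_of_notMem hJ hx.1 hxK).tendsto.const_mul
      (sgn (g x))).congr' ?_).mono_left nhdsWithin_le_nhds⟩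
    filter_upwards [hg x (h.subset hx.1) hxK] with w hw using by rw [hw]

/-- The square root is the extension of `sgn ∘ g` times the square roots of the edges across which
`g` jumps: the jumps cancel. -/
theorem exists_continuousOn_sq_eq [ChartedSpace ℂ M] (h : D.IsStar v U N φ b k) (hU : IsOpen U)
    (hg : LocConstOff D.skeleton U g) (hJ : ∀ e ∈ J, D.src e = v)
    (hjump : ∀ e, ∀ t ∈ Ioo (0 : ℝ) 1, D.arc e t ∈ N →
      (NoJump D.skeleton g (D.arc e t) ↔ e ∉ J)) :
    ∃ f : M → ℂ, ContinuousOn f (N \ {D.point v}) ∧ ∀ x ∈ N \ {D.point v},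
      f x ^ 2 = (φ x - φ (D.point v)) ^ J.card * ∏ e ∈ J, (φ x - φ (D.arc e (b e)))⁻¹ := by
  have hlim : ∀ x ∈ N \ {D.point v}, ∃ y, Tendsto (fun x => sgn (g x) * ∏ e ∈ J, k e (φ x))
      (𝓝[D.skeletonᶜ] x) (𝓝 y) := fun x hx => h.exists_tendsto hU hg hJ hjump hx
  refine ⟨extendFrom D.skeletonᶜ fun x => sgn (g x) * ∏ e ∈ J, k e (φ x),
    continuousOn_extendFrom (fun x _ => D.dense_compl_skeleton x) hlim, fun x hx => ?_⟩
  have _ : (𝓝[D.skeletonᶜ] x).NeBot :=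
    mem_closure_iff_nhdsWithin_neBot.1 (D.dense_compl_skeleton x)
  have hcont : ContinuousAt (fun w => (φ w - φ (D.point v)) ^ J.card *
      ∏ e ∈ J, (φ w - φ (D.arc e (b e)))⁻¹) x :=
    (((φ.continuousAt (h.subset_source hx.1)).sub_const _).pow _).mul
      (h.continuousAt_prod_inv hJ hx.1)
  refine tendsto_nhds_unique ((tendsto_extendFrom (hlim x hx)).pow 2)
    ((hcont.tendsto.mono_left nhdsWithin_le_nhds).congr' ?_)
  filter_upwards [self_mem_nhdsWithin, nhdsWithin_le_nhds (h.isOpen.mem_nhds hx.1)]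
    with w hwK hw
  rw [mul_pow, sgn_sq, one_mul, h.prod_sq hJ hw hwK]

theorem even_card [ChartedSpace ℂ M] (h : D.IsStar v U N φ b k) (hU : IsOpen U)
    (hg : LocConstOff D.skeleton U g) (hJ : ∀ e ∈ J, D.src e = v)
    (hjump : ∀ e, ∀ t ∈ Ioo (0 : ℝ) 1, D.arc e t ∈ N →
      (NoJump D.skeleton g (D.arc e t) ↔ e ∉ J)) : Even J.card := by
  obtain ⟨f, hf, hf2⟩ := h.exists_continuousOn_sq_eq hU hg hJ hjump
  rw [← Nat.not_odd_iff_even]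
  intro hodd
  have hps := h.subset_source h.point_mem
  have hne : ∀ e ∈ J, ∀ᶠ w in 𝓝 (φ (D.point v)), w ≠ φ (D.arc e (b e)) := fun e he =>
    eventually_ne_nhds (h.apply_ne_apply_end (hJ e he) h.point_mem)
  refine not_eventually_sq_eq_pow_mul (f := f ∘ φ.symm) hodd
    (((eventually_all_finset J).2 hne).mono fun w hw => continuousAt_prod_inv_sub hw)
    (h.prod_inv_ne_zero hJ h.point_mem) ?_
  have hev := (φ.tendsto_symm hps).eventually_mem (h.isOpen.mem_nhds h.point_mem)
  filter_upwards [nhdsWithin_le_nhds hev, nhdsWithin_le_nhds (φ.open_target.mem_nhds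
    (φ.map_source hps)), self_mem_nhdsWithin] with w hw hwt hwp
  have hmem : φ.symm w ∈ N \ {D.point v} :=
    ⟨hw, fun h' => hwp (by rw [mem_singleton_iff, ← h', φ.right_inv hwt])⟩
  refine ⟨ContinuousAt.comp (f := φ.symm) (hf.continuousAt
    ((h.isOpen.sdiff isClosed_singleton).mem_nhds hmem)) (φ.continuousAt_symm hwt), ?_⟩
  rw [Function.comp_apply, hf2 _ hmem, φ.right_inv hwt]

end Parity

section Existence

variable [T2Space M] [Finite V] [Finite E]

/-- Conversely, an even power of `φ x - φ (point v)` has a square root without jumps, and its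
quotient with the product of the square roots of the edges in `J` is a sign. -/
theorem exists_locConstOff (h : D.IsStar v U N φ b k) (hJ : ∀ e ∈ J, D.src e = v)
    (hev : Even J.card) : ∃ N' ⊆ N, IsOpen N' ∧ D.point v ∈ N' ∧ ∃ (g : M → ZMod 2) (S : M → ℂ),
      LocConstOff D.skeleton N' g ∧ (∀ x ∈ N', x ≠ D.point v → ContinuousAt S x ∧ S x ≠ 0) ∧
      ∀ x ∈ N', x ∉ D.skeleton → sgn (g x) = (∏ e ∈ J, k e (φ x)) / S x := by
  obtain ⟨n, hn⟩ := hev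
  have hps := h.subset_source h.point_mem
  obtain ⟨y, hy⟩ := IsAlgClosed.exists_pow_nat_eq
    (∏ e ∈ J, (φ (D.point v) - φ (D.arc e (b e)))⁻¹) two_pos
  have hy0 : y ≠ 0 := fun h0 => h.prod_inv_ne_zero hJ h.point_mem (by rw [← hy, h0]; simp)
  obtain ⟨s, -, hs⟩ := exists_eventually_sqrt (p := D.point v)
    (F := fun x => ∏ e ∈ J, (φ x - φ (D.arc e (b e)))⁻¹) hy0 hy.symm (Filter.mem_of_superset
    (h.isOpen.mem_nhds h.point_mem) fun x hx => h.continuousAt_prod_inv hJ hx)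
  obtain ⟨N', hN'sub, hN', hvN'⟩ := mem_nhds_iff.1 (hs.and (h.isOpen.mem_nhds h.point_mem))
  set S : M → ℂ := fun x => (φ x - φ (D.point v)) ^ n * s x with hSdef
  have hS : ∀ x ∈ N', x ≠ D.point v → ContinuousAt S x ∧ S x ≠ 0 := by
    intro x hx hxv
    have hxs := h.subset_source (hN'sub hx).2
    exact ⟨(((φ.continuousAt hxs).sub_const _).pow n).mul (hN'sub hx).1.1,
      mul_ne_zero (pow_ne_zero _ (sub_ne_zero.2 fun h' => hxv (φ.injOn hxs hps h')))
        (hN'sub hx).1.2.2⟩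
  have hne : ∀ x, x ∉ D.skeleton → x ≠ D.point v := fun x hx hxv =>
    hx (hxv ▸ D.point_mem_skeleton v)
  obtain ⟨g, hg, hgs⟩ := exists_locConstOff_sgn_eq_div D.isClosed_skeleton hN'
    (fun x hx hxK => h.continuousAt_prod_of_notMem hJ (hN'sub hx).2 hxK)
    (fun x hx hxK => (hS x hx (hne x hxK)).1) (fun x hx hxK => (hS x hx (hne x hxK)).2)
    (fun x hx hxK => by
      rw [h.prod_sq hJ (hN'sub hx).2 hxK, hSdef, mul_pow, (hN'sub hx).1.2.1, ← pow_mul, mul_two,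
        ← hn])
  exact ⟨N', fun x hx => (hN'sub hx).2, hN', hvN', g, S, hg, hS, hgs⟩

theorem exists_noJump_iff (h : D.IsStar v U N φ b k) (hJ : ∀ e ∈ J, D.src e = v)
    (hev : Even J.card) : ∃ N' ⊆ N, IsOpen N' ∧ D.point v ∈ N' ∧ ∃ g : M → ZMod 2,
      LocConstOff D.skeleton N' g ∧ ∀ e, ∀ t ∈ Ioo (0 : ℝ) 1, D.arc e t ∈ N' →
        (NoJump D.skeleton g (D.arc e t) ↔ e ∉ J) := by
  classical
  obtain ⟨N', hN'N, hN', hvN', g, S, hg, hS, hgs⟩ := h.exists_locConstOff hJ hev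
  refine ⟨N', hN'N, hN', hvN', g, hg, fun e t ht hmem => ?_⟩
  obtain ⟨he, htb⟩ := h.src_eq_and_lt ht (hN'N hmem)
  obtain ⟨hSc, hS0⟩ := hS _ hmem (D.arc_ne_point e t ht v)
  have hgs' : ∀ᶠ x in 𝓝[D.skeletonᶜ] (D.arc e t), sgn (g x) = (∏ e ∈ J, k e (φ x)) / S x := by
    filter_upwards [self_mem_nhdsWithin, nhdsWithin_le_nhds (hN'.mem_nhds hmem)]
      with x hxK hx using hgs x hx hxK
  by_cases heJ : e ∈ J
  · refine iff_of_false (not_noJump_of_isArcRoot (h.isArcRoot e he) le_rfl (h.mem_Ioo e he).2.le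
      ⟨ht.1, htb⟩ (s := fun x => (∏ e' ∈ J.erase e, k e' (φ x)) / S x)
      (ContinuousAt.div (h.continuousAt_prod_arc (fun e' he' =>
        hJ e' (Finset.mem_of_mem_erase he')) ht (hN'N hmem) (by simp)) hSc hS0) ?_)
      (not_not.2 heJ)
    filter_upwards [hgs'] with x hx
    rw [hx, ← Finset.mul_prod_erase J _ heJ, mul_div_assoc]
  · exact iff_of_true (exists_eventually_eq_of_tendsto_sgn
      ((((h.continuousAt_prod_arc hJ ht (hN'N hmem) heJ).div hSc hS0).tendsto.mono_left
        nhdsWithin_le_nhds).congr' (hgs'.mono fun x hx => hx.symm))) heJ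

end Existence

end IsStar

end ArcDrawing

theorem IsArcRoot.exists_eventually_sqrt {M : Type*} [TopologicalSpace M]
    {φ : OpenPartialHomeomorph M ℂ} {k : ℂ → ℂ} {γ : ℝ → M} {a b t : ℝ}
    (h : IsArcRoot k φ γ a b) (ht : t ∈ Ioo a b) : ∃ s : M → ℂ,
      ∀ᶠ x in 𝓝 (γ t), ContinuousAt s x ∧ s x ^ 2 = zeroPole (φ (γ a)) (φ (γ b)) (φ x) ∧
        s x ≠ 0 := by
  have hts := h.mem_source t (Ioo_subset_Icc_self ht)
  have hne {r : ℝ} (hr : r ∈ Icc a b) (hrt : r ≠ t) : φ (γ t) ≠ φ (γ r) := fun heq =>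
    hrt (h.injOn hr (Ioo_subset_Icc_self ht) (φ.injOn (h.mem_source r hr) hts heq.symm))
  have hp := hne (left_mem_Icc.2 h.le) ht.1.ne
  have hq := hne (right_mem_Icc.2 h.le) ht.2.ne'
  obtain ⟨y, hy⟩ := IsAlgClosed.exists_pow_nat_eq (zeroPole (φ (γ a)) (φ (γ b)) (φ (γ t))) two_pos
  obtain ⟨s, -, hs⟩ := _root_.exists_eventually_sqrt (p := γ t)
    (F := fun x => zeroPole (φ (γ a)) (φ (γ b)) (φ x))
    (fun h0 => zeroPole_ne_zero hp hq (by rw [← hy, h0]; simp)) hy.symm (by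
      filter_upwards [φ.open_source.mem_nhds hts, (φ.continuousAt hts).eventually_ne hq]
        with x hx hxq
      exact (continuousAt_zeroPole hxq).comp (φ.continuousAt hx))
  exact ⟨s, hs⟩

namespace ArcDrawing

variable {M V E : Type*} [TopologicalSpace M] (D : ArcDrawing M V E)

section EdgePoint

variable [T2Space M] [Finite V] [Finite E]

theorem eventually_eq_and_mem_Ioo (e : E) {a b t : ℝ} (ha : 0 ≤ a) (hb : b ≤ 1)
    (ht : t ∈ Ioo a b) : ∀ᶠ x in 𝓝 (D.arc e t), ∀ e', ∀ s ∈ Ioo (0 : ℝ) 1,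
      x = D.arc e' s → e' = e ∧ s ∈ Ioo a b := by
  have hclosed {c d : ℝ} (hc : 0 ≤ c) (hd : d ≤ 1) : IsClosed (D.arc e '' Icc c d) :=
    (isCompact_Icc.image_of_continuousOn ((D.isArcOn_arc e).continuousOn.mono
      (Icc_subset_Icc hc hd))).isClosed
  obtain ⟨hleft, hright, -⟩ := (D.isArcOn_arc e).nhdsWithin_compl_subarc ha hb ht
  filter_upwards [D.eventually_mem_skeleton_iff e ⟨ha.trans_lt ht.1, ht.2.trans_le hb⟩,
    (hclosed le_rfl (ht.1.trans ht.2 |>.le.trans hb)).isOpen_compl.mem_nhds hleft,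
    (hclosed (ha.trans (ht.1.trans ht.2).le) le_rfl).isOpen_compl.mem_nhds hright]
    with x hx hxa hxb e' s hs hxs
  obtain ⟨r, hr, hrx⟩ := hx.1 (hxs ▸ D.arc_mem_skeleton e' (Ioo_subset_Icc_self hs))
  have har : a < r := not_le.1 fun h => hxa ⟨r, ⟨hr.1, h⟩, hrx⟩
  have hrb : r < b := not_le.1 fun h => hxb ⟨r, ⟨h, hr.2⟩, hrx⟩
  obtain rfl := D.eq_of_arc_eq e' e s hs r ⟨ha.trans_lt har, hrb.trans_le hb⟩
    (hxs.symm.trans hrx.symm)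
  obtain rfl := (D.isArcOn_arc e').injOn hr (Ioo_subset_Icc_self hs) (hrx.trans hxs)
  exact ⟨rfl, har, hrb⟩

theorem exists_recordsJumps_of_eq_zero (e : E) {t : ℝ} (ht : t ∈ Ioo (0 : ℝ) 1) {z : E → ZMod 2}
    (hz : z e = 0) : ∃ N g, IsOpen N ∧ D.arc e t ∈ N ∧ LocConstOff D.skeleton N g ∧
      D.RecordsJumps g N z := by
  obtain ⟨N, hN, hNo, htN⟩ := mem_nhds_iff.1 (D.eventually_eq_and_mem_Ioo e le_rfl le_rfl ht)
  refine ⟨N, 0, hNo, htN, fun x _ _ => by simp, fun e' s hs hmem => ?_⟩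
  obtain ⟨rfl, -⟩ := hN hmem e' s hs rfl
  exact iff_of_true ⟨0, by simp⟩ hz

/-- The quotient of the square root attached to a piece of the edge by a continuous square root of
the same function is a sign that changes across the edge. -/
theorem exists_recordsJumps_of_ne_zero [ChartedSpace ℂ M] (e : E) {t : ℝ}
    (ht : t ∈ Ioo (0 : ℝ) 1) {z : E → ZMod 2} (hz : z e ≠ 0) : ∃ N g, IsOpen N ∧ D.arc e t ∈ N ∧
      LocConstOff D.skeleton N g ∧ D.RecordsJumps g N z := by
  obtain ⟨a, b, φ, k, ha, hb, htab, -, hk⟩ := D.exists_isArcRoot e ht univ_mem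
  obtain ⟨s, hs⟩ := hk.exists_eventually_sqrt htab
  obtain ⟨N, hN, hNo, htN⟩ := mem_nhds_iff.1 (hs.and ((D.eventually_eq_and_mem_Ioo e ha hb htab).and
    (φ.open_source.mem_nhds (hk.mem_source t (Ioo_subset_Icc_self htab)))))
  have hnot : ∀ x, x ∉ D.skeleton → x ∉ D.arc e '' Icc a b := by
    rintro _ hx ⟨r, hr, rfl⟩
    exact hx (D.arc_mem_skeleton e ⟨ha.trans hr.1, hr.2.trans hb⟩)
  obtain ⟨g, hg, hgs⟩ := exists_locConstOff_sgn_eq_div D.isClosed_skeleton hNo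
    (fun x hx hxK => hk.continuousAt (hN hx).2.2 (hnot x hxK)) (fun x hx _ => (hN hx).1.1)
    (fun x hx _ => (hN hx).1.2.2)
    (fun x hx hxK => (hk.sq_eq (hN hx).2.2 (hnot x hxK)).trans (hN hx).1.2.1.symm)
  refine ⟨N, g, hNo, htN, hg, fun e' r hr hmem => ?_⟩
  obtain ⟨rfl, hrab⟩ := (hN hmem).2.1 e' r hr rfl
  refine iff_of_false (D.not_noJump_of_isArcRoot (s := fun x => (s x)⁻¹) hk ha hb hrab
    ((hN hmem).1.1.inv₀ (hN hmem).1.2.2) ?_) hz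
  filter_upwards [self_mem_nhdsWithin, nhdsWithin_le_nhds (hNo.mem_nhds hmem)] with x hxK hx
  rw [hgs x hx hxK, div_eq_mul_inv]

end EdgePoint

section CycleSpace

open Classical in
/-- The incidence matrix of the underlying graph of a drawing over `ZMod 2`. -/
noncomputable def incidence : Matrix V E (ZMod 2) :=
  .of fun v e => if D.src e = v ∨ D.tgt e = v then 1 else 0

/-- The cycle space, over `ZMod 2`, of the underlying graph of a drawing. -/
noncomputable def cycleSpace [Fintype E] : Submodule (ZMod 2) (E → ZMod 2) :=
  LinearMap.ker D.incidence.mulVecLin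

open Classical in
theorem mem_cycleSpace_iff [Fintype E] {z : E → ZMod 2} : z ∈ D.cycleSpace ↔
    ∀ v, Even {e | (D.src e = v ∨ D.tgt e = v) ∧ z e ≠ 0}.toFinset.card := by
  rw [cycleSpace, LinearMap.mem_ker, funext_iff]
  refine forall_congr' fun v => ?_
  rw [← ZMod.natCast_eq_zero_iff_even, toFinset_ofPred, Finset.card_filter, Nat.cast_sum]
  refine Eq.congr_left (Finset.sum_congr rfl fun e _ => ?_)
  rcases zmod_two_eq_zero_or_one (z e) with h | h <;> simp [incidence, h]

variable {D} [Finite V] [Fintype E] [T2Space M] [ChartedSpace ℂ M] {v : V} {N : Set M}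
  {g : M → ZMod 2} {z : E → ZMod 2}

open Classical in
theorem RecordsJumps.even_card (hN : IsOpen N) (hv : D.point v ∈ N)
    (hg : LocConstOff D.skeleton N g) (h : D.RecordsJumps g N z) :
    Even {e | (D.src e = v ∨ D.tgt e = v) ∧ z e ≠ 0}.toFinset.card := by
  obtain ⟨N', φ, b, k, hstar⟩ := exists_isStar (D := D.reverse {e | D.tgt e = v})
    (D.reverse_tgt_ne v) hN hv
  rw [← D.skeleton_reverse {e | D.tgt e = v}] at hg
  refine hstar.even_card hN hg (fun e he => ?_) fun e t ht hmem => ?_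
  · exact (D.reverse_src_eq_iff v e).2 (by simpa using he : _ ∧ _).1
  · rw [h.reverse _ e t ht (hstar.subset hmem)]
    have hsrc := (D.reverse_src_eq_iff v e).1 (hstar.src_eq_and_lt ht hmem).1
    simp [hsrc]

theorem exists_recordsJumps (hz : z ∈ D.cycleSpace) (p : M) :
    ∃ N g, IsOpen N ∧ p ∈ N ∧ LocConstOff D.skeleton N g ∧ D.RecordsJumps g N z := by
  classical
  by_cases hp : p ∈ D.skeleton
  · rcases D.exists_eq_of_mem_skeleton hp with ⟨v, rfl⟩ | ⟨e, t, ht, rfl⟩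
    · obtain ⟨N, φ, b, k, hstar⟩ := exists_isStar (D := D.reverse {e | D.tgt e = v})
        (D.reverse_tgt_ne v) isOpen_univ (mem_univ _)
      obtain ⟨N', hN'N, hN', hvN', g, hg, hjump⟩ := hstar.exists_noJump_iff
        (fun e he => (D.reverse_src_eq_iff v e).2 (by simpa using he : _ ∧ _).1)
        (D.mem_cycleSpace_iff.1 hz v)
      rw [skeleton_reverse] at hg
      refine ⟨N', g, hN', hvN', hg, RecordsJumps.of_reverse (S := {e | D.tgt e = v})
        fun e t ht hmem => (hjump e t ht hmem).trans ?_⟩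
      have hsrc := (D.reverse_src_eq_iff v e).1 (hstar.src_eq_and_lt ht (hN'N hmem)).1
      simp [hsrc]
    · by_cases he : z e = 0
      · exact D.exists_recordsJumps_of_eq_zero e ht he
      · exact D.exists_recordsJumps_of_ne_zero e ht he
  · exact ⟨D.skeletonᶜ, 0, D.isClosed_skeleton.isOpen_compl, hp, fun x _ _ => by simp,
      fun e t ht hm => absurd (D.arc_mem_skeleton e (Ioo_subset_Icc_self ht)) hm⟩

end CycleSpace

end ArcDrawing

/-! ### Alexander–Spanier cochains -/

section Cochain

variable {M : Type*} [TopologicalSpace M] {c c' : M → M → ZMod 2} {g g' : M → ZMod 2}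
  {K : Set M} {p : M}

/-- Near `p`, the Alexander–Spanier `1`-cochain `c` with coefficients `ZMod 2` is the coboundary of
the function `g`. -/
def IsPrimitiveAt (c : M → M → ZMod 2) (g : M → ZMod 2) (p : M) : Prop :=
  ∀ᶠ q in 𝓝 (p, p), c q.1 q.2 = g q.1 + g q.2

namespace IsPrimitiveAt

theorem zero (p : M) : IsPrimitiveAt 0 0 p :=
  .of_forall fun _ => (add_zero 0).symm

theorem add (h : IsPrimitiveAt c g p) (h' : IsPrimitiveAt c' g' p) :
    IsPrimitiveAt (c + c') (g + g') p := by
  filter_upwards [h, h'] with q hq hq'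
  simp only [Pi.add_apply, hq, hq', add_add_add_comm]

theorem smul (r : ZMod 2) (h : IsPrimitiveAt c g p) : IsPrimitiveAt (r • c) (r • g) p := by
  filter_upwards [h] with q hq
  simp only [Pi.smul_apply, hq, smul_add]

theorem eventually (h : IsPrimitiveAt c g p) : ∀ᶠ x in 𝓝 p, IsPrimitiveAt c g x :=
  (Continuous.tendsto (f := fun x : M => (x, x)) (by fun_prop) p).eventually
    (eventually_eventually_nhds.2 h)

theorem eventually_eq_add (h : IsPrimitiveAt c g p) : ∀ᶠ x in 𝓝 p, c p x = g p + g x :=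
  (Continuous.tendsto (f := fun x : M => (p, x)) (by fun_prop) p).eventually h

theorem congr {κ : ZMod 2} (h : IsPrimitiveAt c g p) (hg : ∀ᶠ x in 𝓝 p, g x + g' x = κ) :
    IsPrimitiveAt c g' p := by
  filter_upwards [h, hg.prod_nhds hg] with q hq hq'
  grind

theorem self (h : IsPrimitiveAt c g p) : IsPrimitiveAt c (c p) p :=
  h.congr (κ := g p) (h.eventually_eq_add.mono fun x hx => by grind)

theorem eventually_add_eq (h : IsPrimitiveAt c g p) (h' : IsPrimitiveAt c g' p) :
    ∀ᶠ x in 𝓝 p, g x + g' x = g p + g' p := by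
  filter_upwards [h.eventually_eq_add, h'.eventually_eq_add] with x hx hx'
  grind

theorem noJump_iff (h : IsPrimitiveAt c g p) : NoJump K (c p) p ↔ NoJump K g p := by
  have hcg : ∀ᶠ x in 𝓝[Kᶜ] p, c p x = g p + g x := nhdsWithin_le_nhds h.eventually_eq_add
  constructor
  · rintro ⟨κ, hκ⟩
    exact ⟨g p + κ, by filter_upwards [hκ, hcg] with x hx hx'; grind⟩
  · rintro ⟨κ, hκ⟩
    exact ⟨g p + κ, by filter_upwards [hκ, hcg] with x hx hx'; grind⟩

end IsPrimitiveAt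

variable (M) in
/-- The Alexander–Spanier `1`-cocycles with coefficients `ZMod 2`: the cochains satisfying the
cocycle condition near the diagonal. -/
def cocycles : Submodule (ZMod 2) (M → M → ZMod 2) where
  carrier := {c | ∀ p, IsPrimitiveAt c (c p) p}
  zero_mem' := IsPrimitiveAt.zero
  add_mem' h h' p := (h p).add (h' p)
  smul_mem' r _ h p := (h p).smul r

variable (M) in
/-- The Alexander–Spanier `1`-coboundaries with coefficients `ZMod 2`, up to cochains that vanish
near the diagonal. -/
def coboundaries : Submodule (ZMod 2) (M → M → ZMod 2) where
  carrier := {c | ∃ g, ∀ p, IsPrimitiveAt c g p}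
  zero_mem' := ⟨0, IsPrimitiveAt.zero⟩
  add_mem' := fun ⟨_, h⟩ ⟨_, h'⟩ => ⟨_, fun p => (h p).add (h' p)⟩
  smul_mem' := fun r _ ⟨_, h⟩ => ⟨_, fun p => (h p).smul r⟩

/-- The cocycles that vanish near the diagonal off the set `K`. -/
def supportedCocycles (K : Set M) : Submodule (ZMod 2) (M → M → ZMod 2) where
  carrier := {c | (∀ p, IsPrimitiveAt c (c p) p) ∧ ∀ p ∉ K, IsPrimitiveAt c 0 p}
  zero_mem' := ⟨IsPrimitiveAt.zero, fun p _ => IsPrimitiveAt.zero p⟩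
  add_mem' h h' :=
    ⟨fun p => (h.1 p).add (h'.1 p), fun p hp => by simpa using (h.2 p hp).add (h'.2 p hp)⟩
  smul_mem' r _ h :=
    ⟨fun p => (h.1 p).smul r, fun p hp => by simpa using (h.2 p hp).smul r⟩

/-- The coboundary of a function, as an Alexander–Spanier `1`-cochain. -/
def coboundary (g : M → ZMod 2) (x y : M) : ZMod 2 := g x + g y

theorem isPrimitiveAt_coboundary (g : M → ZMod 2) (p : M) : IsPrimitiveAt (coboundary g) g p :=
  .of_forall fun _ => rfl

theorem coboundary_mem_coboundaries (g : M → ZMod 2) : coboundary g ∈ coboundaries M :=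
  ⟨g, isPrimitiveAt_coboundary g⟩

theorem coboundary_mem_supportedCocycles (hg : LocConstOff K univ g) :
    coboundary g ∈ supportedCocycles K :=
  ⟨fun p => (isPrimitiveAt_coboundary g p).self, fun p hp =>
    (isPrimitiveAt_coboundary g p).congr (by simpa using hg p (mem_univ p) hp)⟩

theorem locConstOff_of_isPrimitiveAt (hc : c ∈ supportedCocycles K) {N : Set M}
    (h : ∀ x ∈ N, IsPrimitiveAt c g x) : LocConstOff K N g := fun x hx hxK => by
  simpa using (h x hx).eventually_add_eq (hc.2 x hxK)

theorem exists_isOpen_isPrimitiveAt (hc : c ∈ supportedCocycles K) (p : M) :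
    ∃ N, IsOpen N ∧ p ∈ N ∧ LocConstOff K N (c p) ∧ ∀ x ∈ N, IsPrimitiveAt c (c p) x := by
  obtain ⟨N, hN, hNo, hp⟩ := mem_nhds_iff.1 (hc.1 p).eventually
  exact ⟨N, hNo, hp, locConstOff_of_isPrimitiveAt hc hN, hN⟩

/-- The local primitives `h p` are glued along a finite closed refinement of the cover by the sets
`N p`. -/
theorem exists_isPrimitiveAt_of_locally_constant [CompactSpace M] [RegularSpace M]
    {N : M → Set M} {h : M → M → ZMod 2} (hN : ∀ p, IsOpen (N p)) (hp : ∀ p, p ∈ N p)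
    (hh : ∀ p q, ∀ x ∈ N p ∩ N q, ∃ κ, ∀ᶠ y in 𝓝 x, h p y + h q y = κ) :
    ∃ c, ∀ p, ∀ x ∈ N p, IsPrimitiveAt c (h p) x := by
  choose C hC hCc hCN using fun p => exists_mem_nhds_isClosed_subset ((hN p).mem_nhds (hp p))
  obtain ⟨t, ht⟩ := CompactSpace.elim_nhds_subcover C hC
  choose i hit hiC using fun x => by simpa using ht.ge (mem_univ x)
  suffices hi : ∀ x, IsPrimitiveAt (fun x y => h (i x) x + h (i x) y) (h (i x)) x from
    ⟨_, fun p x hx => (hi x).congr (hh _ p x ⟨hCN _ (hiC x), hx⟩).choose_spec⟩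
  intro x
  have hmem : ∀ᶠ y in 𝓝 x, ∀ j ∈ t, y ∈ C j → x ∈ C j := by
    refine (Finset.eventually_all t).2 fun j _ => ?_
    by_cases hj : x ∈ C j
    · exact .of_forall fun _ _ => hj
    · filter_upwards [(hCc j).isOpen_compl.mem_nhds hj] with y hy hyC using absurd hyC hy
  have hconst : ∀ j, ∃ κ, x ∈ C j → ∀ᶠ y in 𝓝 x, h j y + h (i x) y = κ := by
    intro j
    by_cases hj : x ∈ C j
    · exact (hh j (i x) x ⟨hCN j hj, hCN _ (hiC x)⟩).imp fun κ hκ _ => hκ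
    · exact ⟨0, fun hj' => absurd hj' hj⟩
  choose κ hκ using hconst
  have hsum : ∀ᶠ y in 𝓝 x, ∀ j ∈ t, x ∈ C j → h j y + h (i x) y = κ j :=
    (Finset.eventually_all t).2 fun j _ => eventually_imp_distrib_left.2 (hκ j)
  filter_upwards [(hmem.and hsum).prod_nhds hsum] with q ⟨⟨hq, hq₁⟩, hq₂⟩
  have hj := hq _ (hit q.1) (hiC q.1)
  have h₁ := hq₁ _ (hit q.1) hj
  have h₂ := hq₂ _ (hit q.1) hj
  grind

end Cochain

section NearbyValue

variable {M : Type*} [TopologicalSpace M] {K N : Set M} {g g' : M → ZMod 2} {x : M}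

/-- The limit of `g` at `x` along an ultrafilter finer than `𝓝[Kᶜ] x`; this additive extension of
the values of `g` off `K` exists whether or not `g` has a limit. -/
noncomputable def nearbyValue (hK : Dense Kᶜ) (g : M → ZMod 2) (x : M) : ZMod 2 :=
  haveI := mem_closure_iff_nhdsWithin_neBot.1 (hK x)
  ((Ultrafilter.of (𝓝[Kᶜ] x)).map g).lim

variable (hK : Dense Kᶜ)
include hK

theorem exists_ultrafilter_eventually_eq_nearbyValue (x : M) : ∃ F : Ultrafilter M,
    ↑F ≤ 𝓝[Kᶜ] x ∧ ∀ g, ∀ᶠ w in (F : Filter M), g w = nearbyValue hK g x := by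
  have := mem_closure_iff_nhdsWithin_neBot.1 (hK x)
  refine ⟨.of (𝓝[Kᶜ] x), Ultrafilter.of_le _, fun g => ?_⟩
  have hlim := ((Ultrafilter.of (𝓝[Kᶜ] x)).map g).le_nhds_lim
  rw [nhds_discrete] at hlim
  exact hlim (mem_pure.2 rfl : {nearbyValue hK g x} ∈ _)

theorem nearbyValue_eq {a : ZMod 2} (h : ∀ᶠ w in 𝓝[Kᶜ] x, g w = a) : nearbyValue hK g x = a := by
  obtain ⟨F, hF, hlim⟩ := exists_ultrafilter_eventually_eq_nearbyValue hK x
  obtain ⟨w, hw, hw'⟩ := ((hlim g).and (hF h)).exists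
  rw [← hw, hw']

theorem nearbyValue_add :
    nearbyValue hK (g + g') x = nearbyValue hK g x + nearbyValue hK g' x := by
  obtain ⟨F, -, hlim⟩ := exists_ultrafilter_eventually_eq_nearbyValue hK x
  obtain ⟨w, h, h₁, h₂⟩ := ((hlim (g + g')).and ((hlim g).and (hlim g'))).exists
  rw [← h, ← h₁, ← h₂, Pi.add_apply]

theorem nearbyValue_eq_self (hg : LocConstOff K N g) (hx : x ∈ N) (hxK : x ∉ K) :
    nearbyValue hK g x = g x :=
  nearbyValue_eq hK (nhdsWithin_le_nhds (hg x hx hxK))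

theorem eventually_nearbyValue_eq {a : ZMod 2} (h : ∀ᶠ w in 𝓝[Kᶜ] x, g w = a) :
    ∀ᶠ y in 𝓝 x, nearbyValue hK g y = a :=
  (eventually_nhds_nhdsWithin.2 h).mono fun _ hy => nearbyValue_eq hK hy

end NearbyValue

namespace ArcDrawing

variable {M V E : Type*} [TopologicalSpace M] (D : ArcDrawing M V E)

section Jump

open Classical in
/-- The jump of a cocycle across an edge, measured at the midpoint of the edge. -/
noncomputable def jump (c : M → M → ZMod 2) (e : E) : ZMod 2 :=
  if NoJump D.skeleton (c (D.arc e (1 / 2))) (D.arc e (1 / 2)) then 0 else 1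

variable {D} {c c' : M → M → ZMod 2} {g : M → ZMod 2} {N N' : Set M}

theorem jump_eq_zero_iff {e : E} : D.jump c e = 0 ↔
    NoJump D.skeleton (c (D.arc e (1 / 2))) (D.arc e (1 / 2)) := by
  simp [jump]

variable [T2Space M] [ChartedSpace ℂ M] [Finite V] [Finite E]

theorem noJump_iff_jump_eq_zero (hc : c ∈ supportedCocycles D.skeleton) (e : E) {t : ℝ}
    (ht : t ∈ Ioo (0 : ℝ) 1) :
    NoJump D.skeleton (c (D.arc e t)) (D.arc e t) ↔ D.jump c e = 0 := by
  rw [jump_eq_zero_iff]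
  refine isPreconnected_Ioo.induction₂ (fun r s => NoJump D.skeleton (c (D.arc e r)) (D.arc e r) ↔
    NoJump D.skeleton (c (D.arc e s)) (D.arc e s)) (fun r hr => ?_) (fun _ _ _ _ _ _ => Iff.trans)
    (fun _ _ _ _ => Iff.symm) ht (by norm_num)
  obtain ⟨N, hN, hp, hg, hP⟩ := exists_isOpen_isPrimitiveAt hc (D.arc e r)
  have harc : ContinuousAt (D.arc e) r :=
    (D.isArcOn_arc e).continuousOn.continuousAt (Icc_mem_nhds hr.1 hr.2)
  filter_upwards [nhdsWithin_le_nhds (D.eventually_noJump_iff hN hg e hr hp),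
    nhdsWithin_le_nhds (harc.eventually_mem (hN.mem_nhds hp))] with s hs hsN
  rw [← hs, (hP _ hsN).noJump_iff]

theorem recordsJumps_jump (hc : c ∈ supportedCocycles D.skeleton)
    (hg : ∀ x ∈ N, IsPrimitiveAt c g x) : D.RecordsJumps g N (D.jump c) := fun e t ht hm => by
  rw [← noJump_iff_jump_eq_zero hc e ht, (hg _ hm).noJump_iff]

theorem jump_add (hc : c ∈ supportedCocycles D.skeleton)
    (hc' : c' ∈ supportedCocycles D.skeleton) : D.jump (c + c') = D.jump c + D.jump c' := by
  funext e
  have ht : (1 / 2 : ℝ) ∈ Ioo (0 : ℝ) 1 := by norm_num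
  obtain ⟨N, hN, hp, hg, -⟩ := exists_isOpen_isPrimitiveAt hc (D.arc e (1 / 2))
  obtain ⟨N', hN', hp', hg', -⟩ := exists_isOpen_isPrimitiveAt hc' (D.arc e (1 / 2))
  have hadd := D.noJump_add_of_not (hN.inter hN') (hg.mono inter_subset_left)
    (hg'.mono inter_subset_right) e ht ⟨hp, hp'⟩
  by_cases h : NoJump D.skeleton (c (D.arc e (1 / 2))) (D.arc e (1 / 2))
  · refine zmod_two_eq_of_eq_zero_iff ?_
    rw [Pi.add_apply, jump_eq_zero_iff.2 h, zero_add, jump_eq_zero_iff, jump_eq_zero_iff]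
    exact h.add_iff
  by_cases h' : NoJump D.skeleton (c' (D.arc e (1 / 2))) (D.arc e (1 / 2))
  · refine zmod_two_eq_of_eq_zero_iff ?_
    rw [Pi.add_apply, jump_eq_zero_iff.2 h', add_zero, jump_eq_zero_iff, jump_eq_zero_iff,
      Pi.add_apply, add_comm]
    exact h'.add_iff
  · simp only [jump, Pi.add_apply, hadd h h', h, h', if_true, if_false, CharTwo.add_self_eq_zero]

/-- The jump map, from the cocycles supported on the drawing to the edge sets of the graph. -/
noncomputable def jumpMap : supportedCocycles D.skeleton →ₗ[ZMod 2] (E → ZMod 2) :=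
  AddMonoidHom.toZModLinearMap 2 (AddMonoidHom.mk' (fun c => D.jump c.1)
    fun c c' => jump_add c.2 c'.2)

/-- A function without jumps across the edges has no jumps at the vertices either, since these are
isolated. -/
theorem noJump_of_forall_edge (hN : IsOpen N) (hg : LocConstOff D.skeleton N g)
    (h : ∀ e, ∀ t ∈ Ioo (0 : ℝ) 1, D.arc e t ∈ N → NoJump D.skeleton g (D.arc e t)) {x : M}
    (hx : x ∈ N) : NoJump D.skeleton g x := by
  have hne : ∀ y ∈ N, (∀ v, y ≠ D.point v) → NoJump D.skeleton g y := by
    intro y hy hyv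
    by_cases hyK : y ∈ D.skeleton
    · obtain ⟨v, rfl⟩ | ⟨e, t, ht, rfl⟩ := D.exists_eq_of_mem_skeleton hyK
      · exact absurd rfl (hyv v)
      · exact h e t ht hy
    · exact hg.noJump hy hyK
  by_cases hxv : ∃ v, x = D.point v
  · obtain ⟨v, rfl⟩ := hxv
    refine noJump_of_eventually_noJump D.dense_compl_skeleton (D.point_mem_skeleton v) ?_
    have hfin : (D.point '' {w | w ≠ v}).Finite := toFinite _
    have hv : D.point v ∉ D.point '' {w | w ≠ v} := by
      rintro ⟨w, hw, hwv⟩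
      exact hw (D.point_injective hwv)
    filter_upwards [self_mem_nhdsWithin, nhdsWithin_le_nhds (hN.mem_nhds hx),
      nhdsWithin_le_nhds (hfin.isClosed.isOpen_compl.mem_nhds hv)] with y hy hyN hyv
    refine hne y hyN fun w hw => hyv ⟨w, ?_, hw.symm⟩
    rintro rfl
    exact hy hw
  · exact hne x hx fun v hv => hxv ⟨v, hv⟩

theorem mem_coboundaries_of_jump_eq_zero (hc : c ∈ supportedCocycles D.skeleton)
    (hJ : D.jump c = 0) : c ∈ coboundaries M := by
  have hK := D.dense_compl_skeleton
  have hno : ∀ p, NoJump D.skeleton (c p) p := by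
    intro p
    obtain ⟨N, hN, hp, hg, hP⟩ := exists_isOpen_isPrimitiveAt hc p
    refine noJump_of_forall_edge hN hg (fun e t ht hm => ?_) hp
    rw [recordsJumps_jump hc hP e t ht hm, hJ, Pi.zero_apply]
  refine ⟨fun x => nearbyValue hK (c x) x, fun p => ?_⟩
  obtain ⟨κ, hκ⟩ := hno p
  refine (hc.1 p).congr (κ := κ) ?_
  filter_upwards [(hc.1 p).eventually, eventually_nhds_nhdsWithin.2 hκ] with x hx hxκ
  have hnear : ∀ᶠ w in 𝓝[D.skeletonᶜ] x, c x w = c p x + κ := by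
    filter_upwards [hxκ, nhdsWithin_le_nhds hx.eventually_eq_add] with w hw hxw
    rw [hxw, hw]
  rw [nearbyValue_eq hK hnear]
  grind

theorem noJump_add_of_recordsJumps {g' : M → ZMod 2} {z : E → ZMod 2} (hN : IsOpen N)
    (hN' : IsOpen N') (hg : LocConstOff D.skeleton N g) (hg' : LocConstOff D.skeleton N' g')
    (hz : D.RecordsJumps g N z) (hz' : D.RecordsJumps g' N' z) {x : M} (hx : x ∈ N ∩ N') :
    NoJump D.skeleton (g + g') x := by
  have hgN := hg.mono (inter_subset_left (t := N'))
  have hgN' := hg'.mono (inter_subset_right (s := N))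
  refine noJump_of_forall_edge (hN.inter hN') (hgN.add hgN') (fun e t ht hm => ?_) hx
  by_cases hze : z e = 0
  · exact ((hz e t ht hm.1).2 hze).add ((hz' e t ht hm.2).2 hze)
  · exact D.noJump_add_of_not (hN.inter hN') hgN hgN' e ht hm (mt (hz e t ht hm.1).1 hze)
      (mt (hz' e t ht hm.2).1 hze)

end Jump

section CycleSpace

variable {D} [T2Space M] [ChartedSpace ℂ M] [Finite V] [Fintype E] {c : M → M → ZMod 2}
  {z : E → ZMod 2}

theorem jump_mem_cycleSpace (hc : c ∈ supportedCocycles D.skeleton) : D.jump c ∈ D.cycleSpace := by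
  refine D.mem_cycleSpace_iff.2 fun v => ?_
  obtain ⟨N, hN, hp, hg, hP⟩ := exists_isOpen_isPrimitiveAt hc (D.point v)
  exact (recordsJumps_jump hc hP).even_card hN hp hg

theorem exists_jump_eq [CompactSpace M] (hz : z ∈ D.cycleSpace) :
    ∃ c ∈ supportedCocycles D.skeleton, D.jump c = z := by
  have hK := D.dense_compl_skeleton
  choose N g hN hp hg hgz using fun p => exists_recordsJumps hz p
  obtain ⟨c, hc⟩ := exists_isPrimitiveAt_of_locally_constant
    (h := fun p => nearbyValue hK (g p)) hN hp fun p q x hx => by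
      obtain ⟨κ, hκ⟩ := noJump_add_of_recordsJumps (hN p) (hN q) (hg p) (hg q) (hgz p) (hgz q) hx
      exact ⟨κ, (eventually_nearbyValue_eq hK hκ).mono fun y hy => by rw [← hy, nearbyValue_add]⟩
  have hmem : c ∈ supportedCocycles D.skeleton :=
    ⟨fun p => (hc p p (hp p)).self, fun p hpK => (hc p p (hp p)).congr (κ := g p p) <| by
      simpa using eventually_nearbyValue_eq hK (nhdsWithin_le_nhds (hg p p (hp p) hpK))⟩
  refine ⟨c, hmem, funext fun e => zmod_two_eq_of_eq_zero_iff ?_⟩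
  have ht : (1 / 2 : ℝ) ∈ Ioo (0 : ℝ) 1 := by norm_num
  set p := D.arc e (1 / 2) with hpe
  rw [jump_eq_zero_iff, ← hpe, (hc p p (hp p)).noJump_iff, ← hgz p e _ ht (hp p)]
  have hnear : nearbyValue hK (g p) =ᶠ[𝓝[D.skeletonᶜ] p] g p := by
    filter_upwards [self_mem_nhdsWithin, nhdsWithin_le_nhds ((hN p).mem_nhds (hp p))] with x hxK hx
    exact nearbyValue_eq_self hK (hg p) hx hxK
  exact ⟨fun h => h.congr hnear, fun h => h.congr hnear.symm⟩

end CycleSpace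

end ArcDrawing

/-! ### Faces and cohomology -/

theorem finite_range_and_finrank_range_add_finrank_map_ker {k A B W : Type*} [Field k]
    [AddCommGroup A] [Module k A] [AddCommGroup B] [Module k B] [AddCommGroup W] [Module k W]
    [Module.Finite k W] (J : A →ₗ[k] W) (φ : A →ₗ[k] B)
    (h : LinearMap.ker J ≤ LinearMap.ker φ) :
    Module.Finite k (LinearMap.range φ) ∧
    Module.finrank k (LinearMap.range φ) + Module.finrank k ((LinearMap.ker φ).map J) =
      Module.finrank k (LinearMap.range J) := by
  obtain ⟨s, hs⟩ := J.rangeRestrict.exists_rightInverse_of_surjective J.range_rangeRestrict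
  have hψ : (φ ∘ₗ s) ∘ₗ J.rangeRestrict = φ := by
    ext a
    have hker : s (J.rangeRestrict a) - a ∈ LinearMap.ker J := by
      rw [LinearMap.mem_ker, map_sub, sub_eq_zero]
      exact congrArg Subtype.val (LinearMap.congr_fun hs (J.rangeRestrict a))
    simpa [sub_eq_zero] using h hker
  have hrange : LinearMap.range φ = LinearMap.range (φ ∘ₗ s) := by
    rw [← LinearMap.range_comp_of_range_eq_top (φ ∘ₗ s) J.range_rangeRestrict, hψ]
  have hker : (LinearMap.ker φ).map J =
      (LinearMap.ker (φ ∘ₗ s)).map (LinearMap.range J).subtype := by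
    calc (LinearMap.ker φ).map J
        = ((LinearMap.ker φ).map J.rangeRestrict).map (LinearMap.range J).subtype :=
          Submodule.map_comp J.rangeRestrict (LinearMap.range J).subtype _
      _ = _ := by
          conv_lhs => rw [← hψ, LinearMap.ker_comp]
          rw [Submodule.map_comap_eq_of_surjective J.surjective_rangeRestrict]
  rw [hrange, hker, Submodule.finrank_map_subtype_eq, LinearMap.finrank_range_add_finrank_ker]
  exact ⟨inferInstance, rfl⟩

namespace ArcDrawing

section Faces

variable {M V E : Type*} [TopologicalSpace M] (D : ArcDrawing M V E) {x : M}

/-- The faces of a drawing: the connected components of the complement of its skeleton. -/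
def Faces : Set (Set M) :=
  {F | ∃ x ∉ D.skeleton, F = connectedComponentIn D.skeletonᶜ x}

/-- The face containing a point off the skeleton. -/
def face (x : M) (hx : x ∉ D.skeleton) : D.Faces :=
  ⟨connectedComponentIn D.skeletonᶜ x, x, hx, rfl⟩

variable {D}

theorem mem_face (hx : x ∉ D.skeleton) : x ∈ (D.face x hx).1 :=
  mem_connectedComponentIn hx

theorem notMem_skeleton_of_mem {F : D.Faces} (hx : x ∈ F.1) : x ∉ D.skeleton := by
  obtain ⟨_, y, hy, rfl⟩ := F
  exact connectedComponentIn_subset _ _ hx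

theorem face_eq {F : D.Faces} (hx : x ∈ F.1) :
    D.face x (notMem_skeleton_of_mem hx) = F := by
  obtain ⟨_, y, hy, rfl⟩ := F
  exact Subtype.ext (connectedComponentIn_eq hx).symm

theorem exists_mem_face (F : D.Faces) : ∃ (x : M) (hx : x ∉ D.skeleton), D.face x hx = F := by
  obtain ⟨_, x, hx, rfl⟩ := F
  exact ⟨x, hx, rfl⟩

theorem isOpen_face [T2Space M] [LocallyConnectedSpace M] [Finite V] [Finite E] (F : D.Faces) :
    IsOpen F.1 := by
  obtain ⟨_, x, -, rfl⟩ := F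
  exact D.isClosed_skeleton.isOpen_compl.connectedComponentIn

variable (D) in
open Classical in
/-- The function on the surface that takes the value `u F` on each face `F`, and `0` on the
skeleton. -/
noncomputable def faceFun (u : D.Faces → ZMod 2) (x : M) : ZMod 2 :=
  if hx : x ∈ D.skeleton then 0 else u (D.face x hx)

theorem faceFun_apply (u : D.Faces → ZMod 2) (hx : x ∉ D.skeleton) :
    D.faceFun u x = u (D.face x hx) :=
  dif_neg hx

theorem faceFun_add (u u' : D.Faces → ZMod 2) :
    D.faceFun (u + u') = D.faceFun u + D.faceFun u' := by
  funext x
  by_cases hx : x ∈ D.skeleton <;> simp [faceFun, hx]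

theorem exists_faceFun_eq {g : M → ZMod 2} (hg : LocConstOff D.skeleton univ g) :
    ∃ u : D.Faces → ZMod 2, ∀ x ∉ D.skeleton, D.faceFun u x = g x := by
  choose p hp hpF using exists_mem_face (D := D)
  refine ⟨fun F => g (p F), fun x hx => ?_⟩
  have hcont : ContinuousOn g (D.face x hx).1 := fun y hy =>
    (continuousAt_const.congr <| (hg y trivial (notMem_skeleton_of_mem hy)).mono
      fun _ => Eq.symm).continuousWithinAt
  have hmem := mem_face (hp (D.face x hx))
  rw [hpF] at hmem
  rw [faceFun_apply _ hx]
  exact isPreconnected_connectedComponentIn.constant hcont hmem (mem_face hx)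

variable [T2Space M] [LocallyConnectedSpace M] [Finite V] [Finite E]

theorem locConstOff_faceFun (u : D.Faces → ZMod 2) :
    LocConstOff D.skeleton univ (D.faceFun u) := fun x _ hx => by
  filter_upwards [(isOpen_face (D.face x hx)).mem_nhds (mem_face hx)] with w hw
  rw [faceFun_apply u (notMem_skeleton_of_mem hw), faceFun_apply u hx, face_eq hw]

end Faces

section Boundary

variable {M V E : Type*} [TopologicalSpace M] {D : ArcDrawing M V E} [T2Space M]
  [ChartedSpace ℂ M] [LocallyConnectedSpace M] [Finite V] [Finite E]

variable (D) in
/-- The boundary map, from sets of faces to sets of edges: an edge is in the boundary of `u` if `u`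
jumps across it. -/
noncomputable def boundary : (D.Faces → ZMod 2) →ₗ[ZMod 2] (E → ZMod 2) :=
  D.jumpMap ∘ₗ AddMonoidHom.toZModLinearMap 2 (AddMonoidHom.mk'
    (fun u => ⟨coboundary (D.faceFun u), coboundary_mem_supportedCocycles (locConstOff_faceFun u)⟩)
    fun u u' => Subtype.ext <| by
      funext x y
      simp only [coboundary, faceFun_add, Submodule.coe_add, Pi.add_apply, add_add_add_comm])

theorem boundary_apply (u : D.Faces → ZMod 2) :
    D.boundary u = D.jump (coboundary (D.faceFun u)) :=
  rfl

theorem boundary_eq_zero_iff {u : D.Faces → ZMod 2} {e : E} : D.boundary u e = 0 ↔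
    NoJump D.skeleton (D.faceFun u) (D.arc e (1 / 2)) := by
  rw [boundary_apply, jump_eq_zero_iff, (isPrimitiveAt_coboundary _ _).noJump_iff]

theorem eq_of_boundary_eq_zero [PreconnectedSpace M] {u : D.Faces → ZMod 2}
    (h : D.boundary u = 0) (F F' : D.Faces) : u F = u F' := by
  have hK := D.dense_compl_skeleton
  have hg := locConstOff_faceFun u
  have hconst : IsLocallyConstant (nearbyValue hK (D.faceFun u)) := by
    refine IsLocallyConstant.iff_eventually_eq _ |>.2 fun p => ?_
    obtain ⟨κ, hκ⟩ := noJump_of_forall_edge isOpen_univ hg (fun e t ht _ => by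
      rw [recordsJumps_jump (coboundary_mem_supportedCocycles hg)
        (fun x _ => isPrimitiveAt_coboundary _ x) e t ht (mem_univ _), ← boundary_apply, h,
        Pi.zero_apply]) (mem_univ p)
    simpa only [nearbyValue_eq hK hκ] using eventually_nearbyValue_eq hK hκ
  have hval : ∀ x (hx : x ∉ D.skeleton),
      nearbyValue hK (D.faceFun u) x = u (D.face x hx) := fun x hx => by
    rw [nearbyValue_eq_self hK hg trivial hx, faceFun_apply]
  obtain ⟨x, hx, rfl⟩ := exists_mem_face F
  obtain ⟨y, hy, rfl⟩ := exists_mem_face F'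
  rw [← hval x hx, ← hval y hy, hconst.apply_eq_of_preconnectedSpace x y]

theorem boundary_const (a : ZMod 2) : D.boundary (fun _ => a) = 0 := by
  funext e
  refine boundary_eq_zero_iff.2 ⟨a, ?_⟩
  filter_upwards [self_mem_nhdsWithin] with x hx using faceFun_apply _ hx

theorem finrank_ker_boundary [ConnectedSpace M] :
    Module.finrank (ZMod 2) (LinearMap.ker D.boundary) = 1 := by
  obtain ⟨x, hx⟩ := D.dense_compl_skeleton.nonempty
  refine finrank_eq_one (⟨fun _ => 1, boundary_const 1⟩ : LinearMap.ker D.boundary) ?_ ?_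
  · exact fun h => one_ne_zero (congrFun (congrArg Subtype.val h) (D.face x hx))
  · rintro ⟨u, hu⟩
    refine ⟨u (D.face x hx), Subtype.ext (funext fun F => ?_)⟩
    simpa using eq_of_boundary_eq_zero hu (D.face x hx) F

theorem finite_faces [ConnectedSpace M] : Finite D.Faces := by
  classical
  have : Module.Finite (ZMod 2) (LinearMap.ker D.boundary) :=
    Module.finite_of_finrank_eq_succ finrank_ker_boundary
  have : Module.Finite (ZMod 2) ((D.Faces → ZMod 2) ⧸ LinearMap.ker D.boundary) :=
    .equiv D.boundary.quotKerEquivRange.symm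
  have : Module.Finite (ZMod 2) (D.Faces → ZMod 2) :=
    .of_submodule_quotient (LinearMap.ker D.boundary)
  have : Finite (D.Faces → ZMod 2) := Module.finite_of_finite (ZMod 2)
  exact .of_injective (fun F : D.Faces => (Pi.single F 1 : D.Faces → ZMod 2))
    fun F F' h => by
      by_contra hne
      simpa [hne] using congrFun h F

theorem finrank_range_boundary_add_one [ConnectedSpace M] :
    Module.finrank (ZMod 2) (LinearMap.range D.boundary) + 1 = Nat.card D.Faces := by
  have := D.finite_faces
  have := Fintype.ofFinite D.Faces
  rw [← finrank_ker_boundary (D := D), LinearMap.finrank_range_add_finrank_ker,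
    Module.finrank_fintype_fun_eq_card, Nat.card_eq_fintype_card]

theorem boundary_mem_cycleSpace {E : Type*} [Fintype E] {D : ArcDrawing M V E}
    (u : D.Faces → ZMod 2) : D.boundary u ∈ D.cycleSpace :=
  jump_mem_cycleSpace (coboundary_mem_supportedCocycles (locConstOff_faceFun u))

variable (D) in
open Classical in
/-- The set of edges bounding a face, as a vector over `ZMod 2`. An edge with the same face on both
of its sides is not in this set. -/
noncomputable def faceBoundary (F : D.Faces) : E → ZMod 2 :=
  D.boundary (Pi.single F 1)

theorem eq_empty_or_forall_mem_of_sum_faceBoundary_eq_zero [PreconnectedSpace M]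
    (T : Finset D.Faces) (h : ∑ F ∈ T, D.faceBoundary F = 0) : T = ∅ ∨ ∀ F, F ∈ T := by
  classical
  by_contra! hcon
  obtain ⟨⟨F, hF⟩, F', hF'⟩ := hcon
  simp only [faceBoundary] at h
  rw [← map_sum] at h
  have := eq_of_boundary_eq_zero h F F'
  simp [Finset.sum_apply, Pi.single_apply, hF, hF'] at this

/-- Two faces with boundary at `e` have indicators whose sum does not jump across `e`, so that near
the midpoint of `e` there are only these two faces. -/
theorem faceBoundary_eq_zero_of_ne {e : E} {F₁ F₂ F₃ : D.Faces} (h₁₂ : F₁ ≠ F₂) (h₁₃ : F₁ ≠ F₃)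
    (h₂₃ : F₂ ≠ F₃) (h₁ : D.faceBoundary F₁ e ≠ 0) (h₂ : D.faceBoundary F₂ e ≠ 0) :
    D.faceBoundary F₃ e = 0 := by
  classical
  simp only [faceBoundary, ne_eq, boundary_eq_zero_iff] at h₁ h₂ ⊢
  obtain ⟨κ, hκ⟩ := D.noJump_add_of_not isOpen_univ (locConstOff_faceFun _)
    (locConstOff_faceFun _) e (by norm_num : (1 / 2 : ℝ) ∈ Ioo (0 : ℝ) 1) trivial h₁ h₂
  have hval : ∀ᶠ x in 𝓝[D.skeletonᶜ] (D.arc e (1 / 2)), ∃ F : D.Faces,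
      (if F = F₁ then 1 else 0) + (if F = F₂ then 1 else 0) = κ ∧ ∀ F',
        D.faceFun (Pi.single F' 1) x = if F = F' then 1 else 0 := by
    filter_upwards [hκ, self_mem_nhdsWithin] with x hx hxK
    have hF : ∀ F', D.faceFun (Pi.single F' 1) x = if D.face x hxK = F' then 1 else 0 :=
      fun F' => by rw [faceFun_apply _ hxK, Pi.single_apply]
    exact ⟨D.face x hxK, by rw [← hx, Pi.add_apply, hF, hF], hF⟩
  obtain rfl | rfl := zmod_two_eq_zero_or_one κ
  · refine absurd ⟨0, hval.mono fun x ⟨F, hF, hFx⟩ => ?_⟩ h₁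
    grind
  · refine ⟨0, hval.mono fun x ⟨F, hF, hFx⟩ => ?_⟩
    grind

end Boundary

end ArcDrawing

section SimplyConnected

variable {B : Type*} [TopologicalSpace B] {c : B → B → ZMod 2} {N : B → Set B}

/-- The covering space whose sections are the global primitives of the cocycle `c`. -/
def primitiveBundle (hN : ∀ i, IsOpen (N i)) (hi : ∀ i, i ∈ N i)
    (hc : ∀ i, ∀ x ∈ N i, IsPrimitiveAt c (c i) x) : FiberBundleCore B B (ZMod 2) where
  baseSet := N
  isOpen_baseSet := hN
  indexAt := id
  mem_baseSet_at := hi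
  coordChange i j x v := v + (c i x + c j x)
  coordChange_self i x _ v := by rw [CharTwo.add_self_eq_zero, add_zero]
  continuousOn_coordChange i j := fun q hq => by
    have hconst : ContinuousAt (fun x => c i x + c j x) q.1 :=
      continuousAt_const.congr <|
        ((hc i _ hq.1.1).eventually_add_eq (hc j _ hq.1.2)).mono fun _ => Eq.symm
    exact (continuousAt_snd.add (hconst.comp continuousAt_fst)).continuousWithinAt
  coordChange_comp i j k x _ v := by grind

theorem cocycles_le_coboundaries [SimplyConnectedSpace B] [LocallyPathConnectedSpace B] :
    cocycles B ≤ coboundaries B := by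
  intro c hc
  choose N hmem hN hi using fun p => mem_nhds_iff.1 (hc p).eventually
  let Z := primitiveBundle hN hi hmem
  have hcov : IsCoveringMap (Bundle.TotalSpace.proj : Bundle.TotalSpace (ZMod 2) Z.Fiber → B) :=
    FiberBundle.isCoveringMap
  have ⟨b⟩ : Nonempty B := inferInstance
  obtain ⟨σ, ⟨-, hσ⟩, -⟩ := hcov.existsUnique_continuousMap_lifts (ContinuousMap.id B) b
    (⟨b, (0 : ZMod 2)⟩ : Bundle.TotalSpace (ZMod 2) Z.Fiber) rfl
  have hσ' : ∀ x, (σ x).1 = x := congrFun hσ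
  let s : B → ZMod 2 := fun x => (σ x).2
  refine ⟨s, fun p => ?_⟩
  have hcont : ContinuousAt (fun x => (Z.localTriv p (σ x)).2) p := by
    refine ContinuousAt.snd (ContinuousAt.comp ((Z.localTriv p).continuousAt ?_)
      σ.continuous.continuousAt)
    rw [Z.mem_localTriv_source, hσ']
    exact hi p
  have hval : ∀ x, (Z.localTriv p (σ x)).2 = s x + (c x x + c p x) := by
    intro x
    change s x + (c (σ x).1 (σ x).1 + c p (σ x).1) = _
    rw [hσ' x]
  refine (hc p).congr (κ := (Z.localTriv p (σ p)).2) ?_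
  filter_upwards [hcont.eventually_mem ((isOpen_discrete {_}).mem_nhds rfl)] with x hx
  have hself := (hc x).eventually_eq_add.self_of_nhds
  rw [mem_singleton_iff, hval] at hx
  rw [← hx]
  grind

end SimplyConnected

section OpenEmbedding

variable {M B : Type*} [TopologicalSpace M] [TopologicalSpace B] {c : M → M → ZMod 2}

theorem IsPrimitiveAt.comp_isOpenEmbedding_iff {g : M → ZMod 2} {ι : B → M}
    (hι : IsOpenEmbedding ι) {b : B} :
    IsPrimitiveAt (fun x y => c (ι x) (ι y)) (g ∘ ι) b ↔ IsPrimitiveAt c g (ι b) := by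
  have := (hι.prodMap hι).map_nhds_eq (b, b)
  rw [IsPrimitiveAt, IsPrimitiveAt, ← show Prod.map ι ι (b, b) = (ι b, ι b) from rfl, ← this,
    eventually_map]
  rfl

theorem exists_isPrimitiveAt_of_isOpen (hc : c ∈ cocycles M) {F : Set M} (hF : IsOpen F)
    [SimplyConnectedSpace F] [LocallyPathConnectedSpace F] :
    ∃ g, ∀ p ∈ F, IsPrimitiveAt c g p := by
  classical
  have hι := hF.isOpenEmbedding_subtypeVal
  obtain ⟨g, hg⟩ := cocycles_le_coboundaries (B := F) (x := fun x y => c x y)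
    fun p => (IsPrimitiveAt.comp_isOpenEmbedding_iff hι).2 (hc p)
  refine ⟨fun x => if hx : x ∈ F then g ⟨x, hx⟩ else 0, fun p hp =>
    (IsPrimitiveAt.comp_isOpenEmbedding_iff hι (b := ⟨p, hp⟩)).1 ?_⟩
  convert hg ⟨p, hp⟩ using 1
  funext x
  simp

end OpenEmbedding

namespace ArcDrawing

variable {M V E : Type*} [TopologicalSpace M]

/-- A drawing is cellular if each of its faces is an open disc. -/
def IsCellular (D : ArcDrawing M V E) : Prop :=
  ∀ F ∈ D.Faces, Nonempty (F ≃ₜ ball (0 : EuclideanSpace ℝ (Fin 2)) 1)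

theorem IsCellular.exists_isPrimitiveAt {D : ArcDrawing M V E} [T2Space M]
    [LocallyConnectedSpace M] [Finite V] [Finite E] (h : D.IsCellular) {c : M → M → ZMod 2}
    (hc : c ∈ cocycles M) (F : D.Faces) : ∃ g, ∀ p ∈ F.1, IsPrimitiveAt c g p := by
  obtain ⟨ψ⟩ := h F.1 F.2
  have : ContractibleSpace (ball (0 : EuclideanSpace ℝ (Fin 2)) 1) :=
    (convex_ball _ _).contractibleSpace (nonempty_ball.2 one_pos)
  have : ContractibleSpace F := ψ.toHomotopyEquiv.contractibleSpace
  have : LocallyPathConnectedSpace (ball (0 : EuclideanSpace ℝ (Fin 2)) 1) :=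
    isOpen_ball.locallyPathConnectedSpace
  have : LocallyPathConnectedSpace F := ψ.isOpenEmbedding.locallyPathConnectedSpace
  exact exists_isPrimitiveAt_of_isOpen hc (isOpen_face F)

section Cohomology

variable (D : ArcDrawing M V E)

/-- The class, in the first Alexander–Spanier cohomology with coefficients `ZMod 2`, of a cocycle
supported on the skeleton. -/
def cohomologyClass :
    supportedCocycles D.skeleton →ₗ[ZMod 2] (M → M → ZMod 2) ⧸ coboundaries M :=
  (coboundaries M).mkQ ∘ₗ (supportedCocycles D.skeleton).subtype

variable {D}

theorem cohomologyClass_eq_zero_iff {c : supportedCocycles D.skeleton} :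
    D.cohomologyClass c = 0 ↔ c.1 ∈ coboundaries M :=
  Submodule.Quotient.mk_eq_zero _

theorem range_cohomologyClass_le_map_cocycles :
    LinearMap.range D.cohomologyClass ≤ (cocycles M).map (coboundaries M).mkQ := by
  rintro _ ⟨c, rfl⟩
  exact ⟨c.1, c.2.1, rfl⟩

variable [T2Space M] [LocallyConnectedSpace M] [Finite V] [Finite E]

theorem IsCellular.map_cocycles_le_range_cohomologyClass (h : D.IsCellular) :
    (cocycles M).map (coboundaries M).mkQ ≤ LinearMap.range D.cohomologyClass := by
  classical
  rintro _ ⟨c, hc, rfl⟩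
  choose gF hgF using h.exists_isPrimitiveAt hc
  let g : M → ZMod 2 := fun x => if hx : x ∈ D.skeleton then 0 else gF (D.face x hx) x
  have hg : ∀ p ∉ D.skeleton, IsPrimitiveAt c g p := fun p hp => by
    refine (hgF _ p (mem_face hp)).congr (κ := 0) ?_
    filter_upwards [(isOpen_face (D.face p hp)).mem_nhds (mem_face hp)] with x hx
    simp only [g, dif_neg (notMem_skeleton_of_mem hx), face_eq hx, CharTwo.add_self_eq_zero]
  have hmem : c + coboundary g ∈ supportedCocycles D.skeleton :=
    ⟨fun p => ((hc p).add (isPrimitiveAt_coboundary g p)).self, fun p hp =>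
      ((hg p hp).add (isPrimitiveAt_coboundary g p)).congr (κ := 0) <| .of_forall fun x => by
        simp [CharTwo.add_self_eq_zero]⟩
  refine ⟨⟨_, hmem⟩, (Submodule.Quotient.eq _).2 ?_⟩
  simpa using coboundary_mem_coboundaries g

variable [ChartedSpace ℂ M]

theorem map_jumpMap_ker_cohomologyClass :
    (LinearMap.ker D.cohomologyClass).map D.jumpMap = LinearMap.range D.boundary := by
  refine le_antisymm ?_ ?_
  · rintro _ ⟨c, hc, rfl⟩
    obtain ⟨g, hg⟩ := cohomologyClass_eq_zero_iff.1 hc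
    obtain ⟨u, hu⟩ := exists_faceFun_eq (locConstOff_of_isPrimitiveAt c.2 fun x _ => hg x)
    refine ⟨u, funext fun e => zmod_two_eq_of_eq_zero_iff ?_⟩
    have hug : D.faceFun u =ᶠ[𝓝[D.skeletonᶜ] D.arc e (1 / 2)] g :=
      eventually_mem_nhdsWithin.mono hu
    rw [boundary_eq_zero_iff, show D.jumpMap c e = D.jump c.1 e from rfl, jump_eq_zero_iff,
      (hg _).noJump_iff]
    exact ⟨fun h => h.congr hug, fun h => h.congr hug.symm⟩
  · rintro _ ⟨u, rfl⟩
    exact ⟨⟨_, coboundary_mem_supportedCocycles (locConstOff_faceFun u)⟩,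
      cohomologyClass_eq_zero_iff.2 (coboundary_mem_coboundaries _), rfl⟩

end Cohomology

section Comparison

variable [T2Space M] [CompactSpace M] [ChartedSpace ℂ M] [Finite V] [Fintype E]
  {D : ArcDrawing M V E}

theorem range_jumpMap : LinearMap.range D.jumpMap = D.cycleSpace := by
  refine le_antisymm ?_ fun z hz => ?_
  · rintro _ ⟨c, rfl⟩
    exact jump_mem_cycleSpace c.2
  · obtain ⟨c, hc, rfl⟩ := exists_jump_eq hz
    exact ⟨⟨c, hc⟩, rfl⟩

variable [ConnectedSpace M] [LocallyConnectedSpace M]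

theorem finite_and_finrank_range_cohomologyClass :
    Module.Finite (ZMod 2) (LinearMap.range D.cohomologyClass) ∧
    Module.finrank (ZMod 2) (LinearMap.range D.cohomologyClass) + Nat.card D.Faces =
      Module.finrank (ZMod 2) D.cycleSpace + 1 := by
  obtain ⟨hfin, hrank⟩ := finite_range_and_finrank_range_add_finrank_map_ker D.jumpMap
    D.cohomologyClass fun c hc =>
      cohomologyClass_eq_zero_iff.2 (mem_coboundaries_of_jump_eq_zero c.2 hc)
  rw [map_jumpMap_ker_cohomologyClass, range_jumpMap] at hrank
  exact ⟨hfin, by rw [← finrank_range_boundary_add_one, ← hrank, add_assoc]⟩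

/-- Classes of cocycles supported on `D` form a subspace of the first cohomology of the surface, and
those supported on a cellular drawing exhaust it. -/
theorem IsCellular.finrank_cycleSpace_add_card_faces_le {V₀ E₀ : Type*} [Finite V₀] [Fintype E₀]
    {D₀ : ArcDrawing M V₀ E₀} (h : D₀.IsCellular) (D : ArcDrawing M V E) :
    Module.finrank (ZMod 2) D.cycleSpace + Nat.card D₀.Faces ≤
      Module.finrank (ZMod 2) D₀.cycleSpace + Nat.card D.Faces := by
  obtain ⟨-, hD⟩ := D.finite_and_finrank_range_cohomologyClass
  obtain ⟨hfin, hD₀⟩ := D₀.finite_and_finrank_range_cohomologyClass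
  have := Submodule.finrank_mono
    (D.range_cohomologyClass_le_map_cocycles.trans h.map_cocycles_le_range_cohomologyClass)
  lia

end Comparison

end ArcDrawing

/-! ### The Euler inequality -/

namespace ArcDrawing

variable {M V E : Type*} [TopologicalSpace M]

section Incidence

variable [Fintype V] {D : ArcDrawing M V E}

theorem incidence_transpose_mulVec (x : V → ZMod 2) (e : E) :
    D.incidence.transpose.mulVec x e = x (D.src e) + x (D.tgt e) := by
  classical
  have hsplit : ∀ v, D.incidence v e * x v =
      (if D.src e = v then x v else 0) + if D.tgt e = v then x v else 0 := by
    intro v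
    have := D.src_ne_tgt e
    by_cases hs : D.src e = v <;> by_cases ht : D.tgt e = v <;> simp_all [incidence]
  simp only [Matrix.mulVec, dotProduct, Matrix.transpose_apply, hsplit, Finset.sum_add_distrib,
    Finset.sum_ite_eq, Finset.mem_univ, if_true]

theorem mem_ker_incidence_transpose {x : V → ZMod 2} :
    x ∈ LinearMap.ker D.incidence.transpose.mulVecLin ↔ ∀ e, x (D.src e) = x (D.tgt e) := by
  rw [LinearMap.mem_ker, Matrix.mulVecLin_apply, funext_iff]
  simp only [incidence_transpose_mulVec, Pi.zero_apply, CharTwo.add_eq_zero]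

variable [Fintype E]

theorem finrank_cycleSpace_add_card : Module.finrank (ZMod 2) D.cycleSpace + Fintype.card V =
    Fintype.card E +
      Module.finrank (ZMod 2) (LinearMap.ker D.incidence.transpose.mulVecLin) := by
  have hrank := D.incidence.rank_transpose
  have hE := D.incidence.mulVecLin.finrank_range_add_finrank_ker
  have hV := D.incidence.transpose.mulVecLin.finrank_range_add_finrank_ker
  rw [Module.finrank_fintype_fun_eq_card] at hE hV
  simp only [Matrix.rank] at hrank
  rw [cycleSpace]
  lia

variable (D) in
theorem card_edges_lt_finrank_cycleSpace_add_card [Nonempty V] :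
    Fintype.card E < Module.finrank (ZMod 2) D.cycleSpace + Fintype.card V := by
  rw [finrank_cycleSpace_add_card, Nat.lt_add_right_iff_pos]
  have := (Submodule.nontrivial_iff_ne_bot (p := LinearMap.ker D.incidence.transpose.mulVecLin)).2
    ((Submodule.ne_bot_iff _).2 ⟨1, mem_ker_incidence_transpose.2 fun _ => rfl, one_ne_zero⟩)
  exact Module.finrank_pos

theorem finrank_cycleSpace_add_card_le
    (h : ∀ x : V → ZMod 2, (∀ e, x (D.src e) = x (D.tgt e)) → ∀ u v, x u = x v) :
    Module.finrank (ZMod 2) D.cycleSpace + Fintype.card V ≤ Fintype.card E + 1 := by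
  rw [finrank_cycleSpace_add_card]
  refine Nat.add_le_add_left (finrank_le_one ⟨1, mem_ker_incidence_transpose.2 fun _ => rfl⟩ ?_) _
  rintro ⟨x, hx⟩
  obtain _ | ⟨⟨v⟩⟩ := isEmpty_or_nonempty V
  · exact ⟨0, Subtype.ext (Subsingleton.elim _ _)⟩
  · exact ⟨x v, Subtype.ext (funext fun w => by
      simp [h x (mem_ker_incidence_transpose.1 hx) v w])⟩

end Incidence

end ArcDrawing

/-- A set has a connected end if the complement of a compact subset is preconnected for arbitrarily
large compact subsets, as in an open disc. -/
def HasConnectedEnd {M : Type*} [TopologicalSpace M] (F : Set M) : Prop :=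
  ∀ C ⊆ F, IsCompact C → ∃ Q ⊆ F, IsCompact Q ∧ C ⊆ Q ∧ IsPreconnected (F \ Q)

theorem hasConnectedEnd_of_homeomorph_ball {M A : Type*} [TopologicalSpace M]
    [NormedAddCommGroup A] [NormedSpace ℝ A] [ProperSpace A] (hA : 1 < Module.rank ℝ A) {F : Set M}
    (ψ : F ≃ₜ ball (0 : A) 1) : HasConnectedEnd F := by
  intro C hCF hC
  let ι : ball (0 : A) 1 → M := fun z => ψ.symm z
  have hι : IsEmbedding ι := .comp .subtypeVal ψ.symm.isEmbedding
  have hrange : range ι = F := by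
    rw [range_comp' Subtype.val, ψ.symm.surjective.range_eq, image_univ, Subtype.range_coe]
  obtain ⟨r, hr0, hr1, hr⟩ : ∃ r, 0 ≤ r ∧ r < 1 ∧ ∀ z ∈ ι ⁻¹' C, ‖z.1‖ ≤ r := by
    have hC' := (hι.isInducing.isCompact_preimage_iff (hrange ▸ hCF)).2 hC
    obtain hempty | hne := (ι ⁻¹' C).eq_empty_or_nonempty
    · exact ⟨0, le_rfl, one_pos, by simp [hempty]⟩
    · obtain ⟨z, -, hz⟩ := hC'.exists_isMaxOn hne continuous_subtype_val.norm.continuousOn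
      exact ⟨‖z.1‖, norm_nonneg _, mem_ball_zero_iff.1 z.2, hz⟩
  refine ⟨ι '' {z | ‖z.1‖ ≤ r}, hrange ▸ image_subset_range _ _, ?_, fun p hp => ?_, ?_⟩
  · refine IsCompact.image (Subtype.isCompact_iff.2 ?_) hι.continuous
    convert isCompact_closedBall (0 : A) r using 1
    ext z
    simpa using fun hz : ‖z‖ ≤ r => hz.trans_lt hr1
  · obtain ⟨z, rfl⟩ := hrange.ge (hCF hp)
    exact mem_image_of_mem _ (hr z hp)
  · rw [← hrange, ← image_compl_eq_range_sdiff_image hι.injective,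
      hι.isInducing.isPreconnected_image, ← IsEmbedding.subtypeVal.isInducing.isPreconnected_image]
    convert isPreconnected_setOf_norm_sub_mem hA (isPreconnected_Ioo (a := r) (b := 1))
      (fun s hs => hr0.trans_lt hs.1) 0 using 1
    ext z
    simp only [mem_image, mem_compl_iff, mem_ofPred_eq, not_le, Subtype.exists, mem_ball_zero_iff,
      exists_and_left, exists_prop, exists_eq_right_right, sub_zero, mem_Ioo]

section Complement

open scoped Function

variable {M ι : Type*} {F : ι → Set M}

theorem mem_sdiff_union_biUnion_iff_of_mem (hdisj : Pairwise (Disjoint on F)) {U : Set M}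
    {I : Set ι} {i : ι} {p : M} (hp : p ∈ F i) : p ∈ (U \ ⋃ i, F i) ∪ ⋃ i ∈ I, F i ↔ i ∈ I := by
  refine ⟨?_, fun hi => .inr (mem_biUnion hi hp)⟩
  rintro (h | h)
  · exact absurd (mem_iUnion_of_mem i hp) h.2
  · obtain ⟨j, hj, hpj⟩ := mem_iUnion₂.1 h
    exact hdisj.eq (not_disjoint_iff.2 ⟨p, hpj, hp⟩) ▸ hj

theorem mem_sdiff_union_biUnion_iff_of_notMem {U : Set M} {I : Set ι} {p : M}
    (hp : p ∉ ⋃ i, F i) : p ∈ (U \ ⋃ i, F i) ∪ ⋃ i ∈ I, F i ↔ p ∈ U := by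
  refine ⟨?_, fun h => .inl ⟨h, hp⟩⟩
  rintro (h | h)
  · exact h.1
  · exact absurd (iUnion₂_subset_iUnion _ _ h) hp

variable [TopologicalSpace M]

/-- A compact set inside the face `F i` catches everything of it outside `U ∪ W`, so one of `U` and
`W` contains the end of `F i`. -/
theorem exists_isCompact_sdiff_subset_or_subset [CompactSpace M] (hF : ∀ i, IsOpen (F i))
    (hend : ∀ i, HasConnectedEnd (F i)) {U W : Set M} (hU : IsOpen U) (hW : IsOpen W)
    (hUW : Disjoint U W) (hcover : (⋃ i, F i)ᶜ ⊆ U ∪ W) (hdisj : Pairwise (Disjoint on F)) (i : ι) :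
    ∃ Q ⊆ F i, IsCompact Q ∧ (F i \ Q ⊆ U ∨ F i \ Q ⊆ W) := by
  let C : Set M := ((U ∪ W) ∪ ⋃ j ∈ {j | j ≠ i}, F j)ᶜ
  have hC : IsCompact C :=
    ((hU.union hW).union (isOpen_biUnion fun j _ => hF j)).isClosed_compl.isCompact
  have hCF : C ⊆ F i := by
    intro p hp
    simp only [C, compl_union, mem_inter_iff, mem_compl_iff, mem_iUnion] at hp hcover
    obtain ⟨j, hj⟩ : ∃ j, p ∈ F j := by
      by_contra h
      exact (hcover (by simpa using h)).elim hp.1.1 hp.1.2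
    by_contra hpi
    exact hp.2 ⟨j, fun hji => hpi (hji ▸ hj), hj⟩
  obtain ⟨Q, hQF, hQ, hCQ, hconn⟩ := hend i C hCF hC
  have hsub : F i \ Q ⊆ U ∪ W := by
    rintro p ⟨hp, hpQ⟩
    by_contra hpUW
    refine hpQ (hCQ fun h => ?_)
    obtain h | h := h
    · exact hpUW h
    · obtain ⟨j, hji, hj⟩ := mem_iUnion₂.1 h
      exact disjoint_left.1 (hdisj hji) hj hp
  exact ⟨Q, hQF, hQ, isPreconnected_iff_subset_of_disjoint.1 hconn U W hU hW hsub
    (by rw [hUW.inter_eq, inter_empty])⟩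

theorem isOpen_sdiff_union_biUnion [T2Space M] [Finite ι] (hF : ∀ i, IsOpen (F i)) {U : Set M}
    (hU : IsOpen U) {I : Set ι} {Q : ι → Set M} (hQF : ∀ i, Q i ⊆ F i) (hQ : ∀ i, IsCompact (Q i))
    (hI : ∀ i ∉ I, Disjoint (F i \ Q i) U) : IsOpen ((U \ ⋃ i, F i) ∪ ⋃ i ∈ I, F i) := by
  have : (U \ ⋃ i, F i) ∪ ⋃ i ∈ I, F i = (U \ ⋃ i ∈ Iᶜ, Q i) ∪ ⋃ i ∈ I, F i := by
    ext p
    simp only [mem_union, Set.mem_sdiff, mem_iUnion, mem_compl_iff, exists_prop, not_exists,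
      not_and]
    refine ⟨?_, ?_⟩
    · rintro (⟨hp, hpF⟩ | hp)
      · exact .inl ⟨hp, fun i _ hi => hpF i (hQF i hi)⟩
      · exact .inr hp
    · rintro (⟨hp, hpQ⟩ | hp)
      · refine or_iff_not_imp_right.2 fun hpI => ⟨hp, fun i hi => ?_⟩
        have hiI : i ∉ I := fun h => hpI ⟨i, h, hi⟩
        exact disjoint_left.1 (hI i hiI) ⟨hi, hpQ i hiI⟩ hp
      · exact .inr hp
  rw [this]
  exact (hU.sdiff ((toFinite _).isClosed_biUnion fun i _ => (hQ i).isClosed)).union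
    (isOpen_biUnion fun i _ => hF i)

theorem isPreconnected_compl_iUnion_of_hasConnectedEnd [T2Space M] [CompactSpace M]
    [PreconnectedSpace M] [Finite ι] (hF : ∀ i, IsOpen (F i)) (hend : ∀ i, HasConnectedEnd (F i))
    (hdisj : Pairwise (Disjoint on F)) : IsPreconnected (⋃ i, F i)ᶜ := by
  refine (isPreconnected_iff_subset_of_fully_disjoint_closed
    (isOpen_iUnion hF).isClosed_compl).2 fun A B hA hB hcover hAB => ?_
  obtain ⟨U, W, hU, hW, hAU, hBW, hUW⟩ := normal_separation hA hB hAB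
  choose Q hQF hQ hor using exists_isCompact_sdiff_subset_or_subset hF hend hU hW hUW
    (hcover.trans (union_subset_union hAU hBW)) hdisj
  let I : Set ι := {i | F i \ Q i ⊆ U}
  have hopenU : IsOpen ((U \ ⋃ i, F i) ∪ ⋃ i ∈ I, F i) :=
    isOpen_sdiff_union_biUnion hF hU hQF hQ fun i hi =>
      (hUW.mono_right ((hor i).resolve_left hi)).symm
  have hopenW : IsOpen ((W \ ⋃ i, F i) ∪ ⋃ i ∈ Iᶜ, F i) :=
    isOpen_sdiff_union_biUnion hF hW hQF hQ fun i hi => hUW.mono_left (not_not.1 hi)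
  have hcompl : ((U \ ⋃ i, F i) ∪ ⋃ i ∈ I, F i)ᶜ = (W \ ⋃ i, F i) ∪ ⋃ i ∈ Iᶜ, F i := by
    ext p
    rw [mem_compl_iff]
    by_cases hp : p ∈ ⋃ i, F i
    · obtain ⟨i, hi⟩ := mem_iUnion.1 hp
      rw [mem_sdiff_union_biUnion_iff_of_mem hdisj hi, mem_sdiff_union_biUnion_iff_of_mem hdisj hi,
        mem_compl_iff]
    · rw [mem_sdiff_union_biUnion_iff_of_notMem hp, mem_sdiff_union_biUnion_iff_of_notMem hp]
      exact ⟨fun h => ((hcover.trans (union_subset_union hAU hBW)) hp).resolve_left h,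
        fun h => disjoint_right.1 hUW h⟩
  obtain h | h := isClopen_iff.1 (⟨⟨hcompl ▸ hopenW⟩, hopenU⟩ : IsClopen _)
  · refine .inr fun p hp => (hcover hp).resolve_left fun hpA => ?_
    exact notMem_empty p (h ▸ (mem_sdiff_union_biUnion_iff_of_notMem hp).2 (hAU hpA))
  · refine .inl fun p hp => (hcover hp).resolve_right fun hpB => ?_
    exact disjoint_left.1 hUW
      ((mem_sdiff_union_biUnion_iff_of_notMem hp).1 (h ▸ mem_univ p)) (hBW hpB)

end Complement

namespace ArcDrawing

variable {M V E : Type*} [TopologicalSpace M] {D : ArcDrawing M V E}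

open scoped Function in
theorem pairwise_disjoint_faces : Pairwise (Disjoint on fun F : D.Faces => F.1) := by
  intro F F' hne
  refine disjoint_left.2 fun x hx hx' => hne ?_
  rw [← face_eq hx, face_eq hx']

theorem compl_iUnion_faces : (⋃ F : D.Faces, F.1)ᶜ = D.skeleton := by
  ext p
  rw [mem_compl_iff, mem_iUnion, not_iff_comm]
  exact ⟨fun hp => ⟨_, mem_face hp⟩, fun ⟨_, hF⟩ => notMem_skeleton_of_mem hF⟩

variable (D) in
/-- The part of the skeleton formed by the vertices in `S` and the arcs starting in `S`. -/
def subskeleton (S : Set V) : Set M :=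
  D.point '' S ∪ ⋃ e ∈ D.src ⁻¹' S, D.arc e '' Icc 0 1

theorem mem_subskeleton_iff {S : Set V} (hS : ∀ e, D.src e ∈ S → D.tgt e ∈ S) {p : M} :
    p ∈ D.subskeleton S ↔ (∃ v ∈ S, D.point v = p) ∨
      ∃ e, D.src e ∈ S ∧ ∃ t ∈ Ioo (0 : ℝ) 1, D.arc e t = p := by
  refine ⟨?_, ?_⟩
  · rintro (hp | hp)
    · exact .inl hp
    · obtain ⟨e, he, t, ht, rfl⟩ := mem_iUnion₂.1 hp
      obtain h | h | h := D.eq_point_or_eq_arc e ht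
      · exact .inl ⟨_, he, h.symm⟩
      · exact .inl ⟨_, hS e he, h.symm⟩
      · exact .inr ⟨e, he, t, h, rfl⟩
  · rintro (hp | ⟨e, he, t, ht, rfl⟩)
    · exact .inl hp
    · exact .inr (mem_biUnion he ⟨t, Ioo_subset_Icc_self ht, rfl⟩)

theorem disjoint_subskeleton {S T : Set V} (hS : ∀ e, D.src e ∈ S → D.tgt e ∈ S)
    (hT : ∀ e, D.src e ∈ T → D.tgt e ∈ T) (hST : Disjoint S T) :
    Disjoint (D.subskeleton S) (D.subskeleton T) := by
  rw [disjoint_left] at hST ⊢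
  intro p hp hp'
  rw [mem_subskeleton_iff hS] at hp
  rw [mem_subskeleton_iff hT] at hp'
  obtain ⟨v, hv, rfl⟩ | ⟨e, he, t, ht, rfl⟩ := hp <;>
    obtain ⟨v', hv', h⟩ | ⟨e', he', t', ht', h⟩ := hp'
  · exact hST hv (D.point_injective h ▸ hv')
  · exact D.arc_ne_point e' t' ht' v h
  · exact D.arc_ne_point e t ht v' h.symm
  · exact hST he (D.eq_of_arc_eq e' e t' ht' t ht h ▸ he')

theorem skeleton_subset_union_compl {S : Set V} (hS : ∀ e, D.src e ∈ S ↔ D.tgt e ∈ S) :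
    D.skeleton ⊆ D.subskeleton S ∪ D.subskeleton Sᶜ := by
  intro p hp
  rw [mem_union, mem_subskeleton_iff fun e => (hS e).1,
    mem_subskeleton_iff fun e => (not_congr (hS e)).1]
  obtain ⟨v, rfl⟩ | ⟨e, t, ht, rfl⟩ := D.exists_eq_of_mem_skeleton hp
  · by_cases hv : v ∈ S
    · exact .inl (.inl ⟨v, hv, rfl⟩)
    · exact .inr (.inl ⟨v, hv, rfl⟩)
  · by_cases he : D.src e ∈ S
    · exact .inl (.inr ⟨e, he, t, ht, rfl⟩)
    · exact .inr (.inr ⟨e, he, t, ht, rfl⟩)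

variable [T2Space M] [Finite V] [Finite E]

theorem isClosed_subskeleton (S : Set V) : IsClosed (D.subskeleton S) :=
  ((toFinite _).image _).isClosed.union
    ((toFinite _).isClosed_biUnion fun e _ => (D.isArcOn_arc e).isClosed_image)

theorem eq_empty_or_univ_of_isPreconnected_skeleton (h : IsPreconnected D.skeleton) {S : Set V}
    (hS : ∀ e, D.src e ∈ S ↔ D.tgt e ∈ S) : S = ∅ ∨ S = univ := by
  have hdisj := disjoint_subskeleton (fun e => (hS e).1) (fun e => (not_congr (hS e)).1)
    (disjoint_compl_right (a := S))
  have hmem : ∀ v, D.point v ∈ D.skeleton := D.point_mem_skeleton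
  obtain hsub | hsub := isPreconnected_iff_subset_of_disjoint_closed.1 h _ _
    (isClosed_subskeleton S) (isClosed_subskeleton Sᶜ) (skeleton_subset_union_compl hS)
    (by rw [hdisj.inter_eq, inter_empty])
  · refine .inr (eq_univ_of_forall fun v => by_contra fun hv => ?_)
    exact disjoint_left.1 hdisj (hsub (hmem v)) (.inl ⟨v, hv, rfl⟩)
  · refine .inl (eq_empty_of_forall_notMem fun v hv => ?_)
    exact disjoint_right.1 hdisj (hsub (hmem v)) (.inl ⟨v, hv, rfl⟩)

variable [CompactSpace M] [ChartedSpace ℂ M] [ConnectedSpace M] [LocallyConnectedSpace M]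

theorem IsCellular.isPreconnected_skeleton (h : D.IsCellular) : IsPreconnected D.skeleton := by
  have := D.finite_faces
  rw [← compl_iUnion_faces]
  refine isPreconnected_compl_iUnion_of_hasConnectedEnd isOpen_face (fun F => ?_)
    pairwise_disjoint_faces
  have ⟨ψ⟩ := h F.1 F.2
  exact hasConnectedEnd_of_homeomorph_ball (by simp [← Module.finrank_eq_rank]) ψ

theorem IsCellular.eq_of_forall_edge (h : D.IsCellular) {α : Type*} {x : V → α}
    (hx : ∀ e, x (D.src e) = x (D.tgt e)) (u v : V) : x u = x v := by
  have := eq_empty_or_univ_of_isPreconnected_skeleton h.isPreconnected_skeleton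
    (S := {w | x w = x v}) fun e => by rw [mem_ofPred_eq, mem_ofPred_eq, hx]
  exact eq_univ_iff_forall.1 (this.resolve_left (nonempty_iff_ne_empty.1 ⟨v, rfl⟩)) u

end ArcDrawing

namespace ArcDrawing

variable {M V E : Type*} [TopologicalSpace M] [T2Space M] [CompactSpace M] [ConnectedSpace M]
  [LocallyConnectedSpace M] [ChartedSpace ℂ M] [Fintype V] [Fintype E]

/-- Euler's inequality: a cellular drawing minimizes `V - E + F` among all drawings. -/
theorem IsCellular.card_add_card_add_card_faces_le {V₀ E₀ : Type*} [Fintype V₀] [Fintype E₀]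
    [Nonempty V] {D₀ : ArcDrawing M V₀ E₀} (h : D₀.IsCellular) (D : ArcDrawing M V E) :
    Fintype.card E + Fintype.card V₀ + Nat.card D₀.Faces ≤
      Fintype.card V + Fintype.card E₀ + Nat.card D.Faces := by
  have hcomp := h.finrank_cycleSpace_add_card_faces_le D
  have hupper := D₀.finrank_cycleSpace_add_card_le fun x hx => h.eq_of_forall_edge hx
  have hlower := D.card_edges_lt_finrank_cycleSpace_add_card
  lia

end ArcDrawing

/-! ### Counting faces -/

section EvenEdgeSets

variable {V : Type*} {C : Finset (Sym2 V)}

open Classical in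
/-- A finite set of edges without loops that meets every vertex an even number of times, that is, a
cycle modulo 2 of a simple graph. -/
structure IsEvenEdgeSet (C : Finset (Sym2 V)) : Prop where
  not_isDiag : ∀ e ∈ C, ¬ e.IsDiag
  even_card : ∀ v, Even (C.filter (v ∈ ·)).card

namespace IsEvenEdgeSet

theorem exists_ne_mk_mem (h : IsEvenEdgeSet C) {e : Sym2 V} (he : e ∈ C) {v : V} (hv : v ∈ e) :
    ∃ w, s(v, w) ∈ C ∧ s(v, w) ≠ e ∧ v ≠ w := by
  classical
  have hmem : e ∈ C.filter (v ∈ ·) := Finset.mem_filter.2 ⟨he, hv⟩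
  have hcard : 1 < (C.filter (v ∈ ·)).card := by
    have := h.even_card v
    have := Finset.card_pos.2 ⟨e, hmem⟩
    grind
  obtain ⟨e', he', hne⟩ := Finset.exists_mem_ne hcard e
  obtain ⟨he'C, hve'⟩ := Finset.mem_filter.1 he'
  obtain ⟨w, rfl⟩ := Sym2.mem_iff_exists.1 hve'
  exact ⟨w, he'C, hne, h.not_isDiag _ he'C⟩

theorem exists_path_subset (h : IsEvenEdgeSet C) (hC : C.Nonempty) : ∃ x u v w,
    s(x, u) ∈ C ∧ s(u, v) ∈ C ∧ s(v, w) ∈ C ∧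
      s(x, u) ≠ s(u, v) ∧ s(x, u) ≠ s(v, w) ∧ s(u, v) ≠ s(v, w) := by
  obtain ⟨⟨u, v⟩, huv⟩ := hC
  have huv' : u ≠ v := h.not_isDiag _ huv
  obtain ⟨w, hvw, hvw', -⟩ := h.exists_ne_mk_mem huv (Sym2.mem_mk_right u v)
  obtain ⟨x, hux, hux', -⟩ := h.exists_ne_mk_mem huv (Sym2.mem_mk_left u v)
  refine ⟨x, u, v, w, Sym2.eq_swap ▸ hux, huv, hvw, Sym2.eq_swap ▸ hux', ?_, hvw'.symm⟩
  grind

theorem three_le_card (h : IsEvenEdgeSet C) (hC : C.Nonempty) : 3 ≤ C.card := by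
  obtain ⟨x, u, v, w, hxu, huv, hvw, h₁, h₂, h₃⟩ := h.exists_path_subset hC
  exact Finset.two_lt_card_iff.2 ⟨_, _, _, hxu, huv, hvw, h₁, h₂, h₃⟩

open Classical in
theorem exists_eq_triangle (h : IsEvenEdgeSet C) (hC : C.card = 3) :
    ∃ u v w, C = {s(u, v), s(v, w), s(u, w)} := by
  obtain ⟨x, u, v, w, hxu, huv, hvw, h₁, h₂, h₃⟩ :=
    h.exists_path_subset (Finset.card_pos.1 (by lia))
  have hCeq : {s(x, u), s(u, v), s(v, w)} = C := by
    refine Finset.eq_of_subset_of_card_le (by simp [Finset.insert_subset_iff, *]) ?_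
    rw [hC, Finset.card_eq_three.2 ⟨_, _, _, h₁, h₂, h₃, rfl⟩]
  obtain ⟨y, hwy, hwy', -⟩ := h.exists_ne_mk_mem hvw (Sym2.mem_mk_right v w)
  have hvw' : v ≠ w := h.not_isDiag _ hvw
  obtain rfl : w = x := by
    rw [← hCeq] at hwy
    grind
  exact ⟨u, v, w, by rw [← hCeq]; grind⟩

end IsEvenEdgeSet

end EvenEdgeSets

section Counting

variable {E Φ : Type*} [Fintype E] {B : Φ → E → ZMod 2}

theorem sum_hammingNorm_add_hammingNorm_sum_le (P : Finset Φ) {A : Finset E}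
    (htwo : ∀ e, (P.filter (B · e ≠ 0)).card ≤ 2) (hA : ∀ F ∈ P, ∀ e ∉ A, B F e = 0) :
    ∑ F ∈ P, hammingNorm (B F) + hammingNorm (∑ F ∈ P, B F) ≤ 2 * A.card := by
  have hnorm : ∀ z : E → ZMod 2, (∀ e ∉ A, z e = 0) →
      hammingNorm z = ∑ e ∈ A, if z e ≠ 0 then 1 else 0 := fun z hz => by
    rw [hammingNorm, Finset.card_filter]
    exact (Finset.sum_subset A.subset_univ fun e _ he => by simp [hz e he]).symm
  rw [Finset.sum_congr rfl fun F hF => hnorm _ (hA F hF),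
    hnorm _ fun e he => by rw [Finset.sum_apply, Finset.sum_eq_zero fun F hF => hA F hF e he],
    Finset.sum_comm, ← Finset.sum_add_distrib, mul_comm, ← smul_eq_mul]
  refine Finset.sum_le_card_nsmul _ _ _ fun e _ => ?_
  have hsum : (∑ F ∈ P, B F) e = ((P.filter (B · e ≠ 0)).card : ZMod 2) := by
    rw [Finset.sum_apply, Finset.card_filter, Nat.cast_sum]
    refine Finset.sum_congr rfl fun F _ => ?_
    obtain h | h := zmod_two_eq_zero_or_one (B F e) <;> simp [h]
  simp only [← Finset.card_filter, hsum, ne_eq, ZMod.natCast_eq_zero_iff_even]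
  have := htwo e
  grind

/-- A family of vectors modulo 2 that behaves like the boundaries of the faces of a connected
drawing of a simple graph, indexed by the faces. -/
structure IsFaceSystem (B : Φ → E → ZMod 2) : Prop where
  card_filter_ne_zero_le : ∀ e (T : Finset Φ), (T.filter (B · e ≠ 0)).card ≤ 2
  eq_empty_or_forall_mem : ∀ T : Finset Φ, ∑ F ∈ T, B F = 0 → T = ∅ ∨ ∀ F, F ∈ T
  three_le_hammingNorm : ∀ T : Finset Φ, ∑ F ∈ T, B F ≠ 0 → 3 ≤ hammingNorm (∑ F ∈ T, B F)

namespace IsFaceSystem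

theorem three_mul_card_add_hammingNorm_sum_le (h : IsFaceSystem B) {T : Finset Φ} {A : Finset E}
    (hT : ∀ F ∈ T, hammingNorm (B F) = 3) (hA : ∀ F ∈ T, ∀ e ∉ A, B F e = 0) :
    3 * T.card + hammingNorm (∑ F ∈ T, B F) ≤ 2 * A.card := by
  have := sum_hammingNorm_add_hammingNorm_sum_le T (fun e => h.card_filter_ne_zero_le e T) hA
  rwa [Finset.sum_const_nat hT, mul_comm] at this

theorem four_mul_card_le [Fintype Φ] (h : IsFaceSystem B) (h3 : ∀ F, 3 ≤ hammingNorm (B F)) :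
    4 * Fintype.card Φ ≤
      2 * Fintype.card E + (Finset.univ.filter fun F => hammingNorm (B F) = 3).card := by
  have hcount := sum_hammingNorm_add_hammingNorm_sum_le (B := B) Finset.univ (A := Finset.univ)
    (fun e => h.card_filter_ne_zero_le e _) (by simp)
  calc 4 * Fintype.card Φ = ∑ F : Φ, 4 := by simp [mul_comm]
    _ ≤ ∑ F, (hammingNorm (B F) + if hammingNorm (B F) = 3 then 1 else 0) :=
      Finset.sum_le_sum fun F _ => by have := h3 F; split_ifs <;> lia
    _ ≤ _ := by
      rw [Finset.sum_add_distrib, ← Finset.card_filter]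
      rw [Finset.card_univ] at hcount
      lia

variable {ι : Type*} {A : ι → Finset E} {t : ℕ}

theorem card_mul_add_le_of_partition [DecidableEq ι] (h : IsFaceSystem B) (ht : 2 ≤ t)
    (hA : Pairwise fun i j => Disjoint (A i) (A j)) (hAt : ∀ i, (A i).card ≤ t) {P : Finset Φ}
    {idx : Φ → ι} (hP : ∀ F ∈ P, hammingNorm (B F) = 3)
    (hidx : ∀ F ∈ P, ∀ e ∉ A (idx F), B F e = 0)
    (hsum : ∀ i ∈ P.image idx, ∑ F ∈ P.filter (idx · = i), B F ≠ 0) :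
    3 * t * P.card + 3 * Fintype.card E ≤ 2 * t * Fintype.card E := by
  have hblock : ∀ i ∈ P.image idx,
      3 * t * (P.filter (idx · = i)).card + 3 * (A i).card ≤ 2 * t * (A i).card := by
    intro i hi
    have h3 := h.three_le_hammingNorm _ (hsum i hi)
    have hle := h.three_mul_card_add_hammingNorm_sum_le (T := P.filter (idx · = i)) (A := A i)
      (fun F hF => hP F (Finset.mem_filter.1 hF).1) fun F hF =>
        (Finset.mem_filter.1 hF).2 ▸ hidx F (Finset.mem_filter.1 hF).1
    have hAi := hAt i
    calc 3 * t * (P.filter (idx · = i)).card + 3 * (A i).card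
        ≤ t * (3 * (P.filter (idx · = i)).card + 3) := by lia
      _ ≤ t * (2 * (A i).card) := Nat.mul_le_mul_left t (by lia)
      _ = 2 * t * (A i).card := by ring
  have hcardA : ∑ i ∈ P.image idx, (A i).card ≤ Fintype.card E := by
    classical
    rw [← Finset.card_biUnion fun i _ j _ hij => hA hij]
    exact Finset.card_le_univ _
  have hle := Finset.sum_le_sum hblock
  rw [Finset.sum_add_distrib, ← Finset.mul_sum, ← Finset.mul_sum, ← Finset.mul_sum,
    ← Finset.card_eq_sum_card_image] at hle
  nlinarith

theorem sum_ne_zero_of_subset [Fintype Φ] (h : IsFaceSystem B) {T : Finset Φ} {A : Finset E}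
    (hne : T.Nonempty) (hT : ∀ F ∈ T, hammingNorm (B F) = 3)
    (hA : ∀ F ∈ T, ∀ e ∉ A, B F e = 0) (hcard : 2 * A.card < 3 * Fintype.card Φ) :
    ∑ F ∈ T, B F ≠ 0 := fun h0 => by
  have huniv := Finset.eq_univ_of_forall <|
    (h.eq_empty_or_forall_mem T h0).resolve_left hne.ne_empty
  have hle := h.three_mul_card_add_hammingNorm_sum_le hT hA
  rw [huniv, Finset.card_univ] at hle
  lia

theorem three_le_hammingNorm_apply [Fintype Φ] (h : IsFaceSystem B) (hcard : 1 < Fintype.card Φ)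
    (F : Φ) : 3 ≤ hammingNorm (B F) := by
  have h3 := h.three_le_hammingNorm {F}
  rw [Finset.sum_singleton] at h3
  refine h3 fun h0 => ?_
  have huniv := Finset.eq_univ_of_forall <|
    (h.eq_empty_or_forall_mem {F} (by rwa [Finset.sum_singleton])).resolve_left (by simp)
  rw [← Finset.card_univ, ← huniv, Finset.card_singleton] at hcard
  exact hcard.false

/-- Counting incidences of faces and edges, where the triangular faces are counted block by block.
A block `T` within `A` does better than the bound `3 * #T ≤ 2 * #A` because its sum is nonzero,
unless it contains all faces. -/
theorem card_mul_add_le [Fintype Φ] (h : IsFaceSystem B) (ht : 2 ≤ t) (hE : t < Fintype.card E)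
    (hA : Pairwise fun i j => Disjoint (A i) (A j)) (hAt : ∀ i, (A i).card ≤ t)
    (htri : ∀ F, hammingNorm (B F) = 3 → ∃ i, ∀ e ∉ A i, B F e = 0) :
    12 * t * Fintype.card Φ + 3 * Fintype.card E ≤ 8 * t * Fintype.card E := by
  classical
  by_cases hall : 3 * Fintype.card Φ ≤ 2 * t
  · nlinarith
  have hle := h.four_mul_card_le (h.three_le_hammingNorm_apply (by lia))
  set P := Finset.univ.filter fun F => hammingNorm (B F) = 3
  have hP : ∀ F ∈ P, hammingNorm (B F) = 3 := fun F hF => (Finset.mem_filter.1 hF).2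
  have htriP : 3 * t * P.card + 3 * Fintype.card E ≤ 2 * t * Fintype.card E := by
    obtain hempty | ⟨F₀, hF₀⟩ := P.eq_empty_or_nonempty
    · rw [hempty, Finset.card_empty]
      nlinarith
    have : Nonempty ι := (htri F₀ (hP F₀ hF₀)).nonempty
    choose! idx hidx using htri
    refine h.card_mul_add_le_of_partition ht hA hAt hP (fun F hF => hidx F (hP F hF)) fun i hi => ?_
    refine h.sum_ne_zero_of_subset (A := A i) ?_ (fun F hF => hP F (Finset.mem_filter.1 hF).1)
      (fun F hF => ?_) (by have := hAt i; lia)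
    · obtain ⟨F, hF, hFi⟩ := Finset.mem_image.1 hi
      exact ⟨F, Finset.mem_filter.2 ⟨hF, hFi⟩⟩
    · obtain ⟨hFP, rfl⟩ := Finset.mem_filter.1 hF
      exact hidx F (hP F hFP)
  calc 12 * t * Fintype.card Φ + 3 * Fintype.card E
      = 3 * t * (4 * Fintype.card Φ) + 3 * Fintype.card E := by ring
    _ ≤ 3 * t * (2 * Fintype.card E + P.card) + 3 * Fintype.card E := by gcongr
    _ ≤ 8 * t * Fintype.card E := by linarith

end IsFaceSystem

end Counting

/-! ### Drawings of simple graphs -/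

section SimpleGraphDrawings

variable {V M : Type*} {G : SimpleGraph V} {f : V → M} {arc : Sym2 V → Set M} {S : Set M}
  [TopologicalSpace M]

namespace IsCrossingFreeDrawingIn

theorem exists_path (h : IsCrossingFreeDrawingIn G f arc S) (e : G.edgeSet) :
    ∃ (u v : V) (γ : Path (f u) (f v)), e.1 = s(u, v) ∧ Function.Injective γ ∧
      range γ = arc e := by
  obtain ⟨⟨u, v⟩, huv⟩ := e
  obtain ⟨γ, hγ, hrange⟩ := h.2.1 u v huv
  exact ⟨u, v, γ, rfl, hγ, hrange⟩

theorem extend_ne_point (h : IsCrossingFreeDrawingIn G f arc S) {e : G.edgeSet} {u v : V}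
    {γ : Path (f u) (f v)} (he : e.1 = s(u, v)) (hγ : InjOn γ.extend (Icc 0 1))
    (hrange : range γ = arc e) {t : ℝ} (ht : t ∈ Ioo (0 : ℝ) 1) (w : V) : γ.extend t ≠ f w := by
  intro hw
  have hwe : w ∈ e.1 := h.2.2.2.1 e e.2 w (by
    rw [← hw, ← hrange, ← γ.extend_range]
    exact mem_range_self t)
  rw [he, Sym2.mem_iff] at hwe
  obtain rfl | rfl := hwe
  · exact ht.1.ne' (hγ (Ioo_subset_Icc_self ht) (by simp) (by rw [hw, γ.extend_zero]))
  · exact ht.2.ne (hγ (Ioo_subset_Icc_self ht) (by simp) (by rw [hw, γ.extend_one]))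

theorem exists_arcDrawing (h : IsCrossingFreeDrawingIn G f arc S) :
    ∃ D : ArcDrawing M V G.edgeSet, (∀ e : G.edgeSet, e.1 = s(D.src e, D.tgt e)) ∧
      D.skeleton = drawingImage G f arc := by
  choose u v γ he hinj hrange using h.exists_path
  have hinjOn : ∀ e, InjOn (γ e).extend (Icc 0 1) := fun e s hs t ht hst => by
    rw [Path.extend_apply _ hs, Path.extend_apply _ ht] at hst
    exact congrArg Subtype.val (hinj e hst)
  have himage : ∀ e, (γ e).extend '' Icc 0 1 = arc e := fun e => by
    rw [← hrange e, Path.image_extend_of_subset _ Subset.rfl]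
  have hinterior : ∀ e : G.edgeSet, ∀ t ∈ Ioo (0 : ℝ) 1,
      (γ e).extend t ∈ arc e \ f '' {x | x ∈ e.1} :=
    fun e t ht => ⟨himage e ▸ mem_image_of_mem _ (Ioo_subset_Icc_self ht),
      fun ⟨w, _, hw⟩ => h.extend_ne_point (he e) (hinjOn e) (hrange e) ht w hw.symm⟩
  refine ⟨{
    point := f
    arc := fun e => (γ e).extend
    src := u
    tgt := v
    point_injective := h.1
    isArcOn_arc := fun e => ⟨zero_le_one, (γ e).continuous_extend.continuousOn, hinjOn e⟩
    arc_zero := fun e => (γ e).extend_zero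
    arc_one := fun e => (γ e).extend_one
    arc_ne_point := fun e t ht => h.extend_ne_point (he e) (hinjOn e) (hrange e) ht
    eq_of_arc_eq := fun e e' t ht t' ht' heq => ?_ }, he, ?_⟩
  · by_contra hne
    have hempty := h.2.2.2.2 e e.2 e' e'.2 (Subtype.coe_ne_coe.2 hne)
    exact hempty.subset ⟨hinterior e t ht, heq ▸ hinterior e' t' ht'⟩
  · rw [ArcDrawing.skeleton, drawingImage, biUnion_eq_iUnion]
    simp only [himage]

end IsCrossingFreeDrawingIn

theorem ArcDrawing.faces_eq_drawingFaces {E : Type*} {D : ArcDrawing M V E}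
    (h : D.skeleton = drawingImage G f arc) : D.Faces = drawingFaces G f arc := by
  simp only [Faces, drawingFaces, h, mem_compl_iff]

variable [Fintype G.edgeSet] {z : G.edgeSet → ZMod 2}

/-- The edges on which a chain modulo 2 does not vanish. -/
def chainSupport (z : G.edgeSet → ZMod 2) : Finset (Sym2 V) :=
  (Finset.univ.filter (z · ≠ 0)).map (Function.Embedding.subtype _)

theorem card_chainSupport (z : G.edgeSet → ZMod 2) :
    (chainSupport z).card = hammingNorm z :=
  Finset.card_map _

namespace ArcDrawing

variable {D : ArcDrawing M V G.edgeSet}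

theorem isEvenEdgeSet_chainSupport (hD : ∀ e : G.edgeSet, e.1 = s(D.src e, D.tgt e))
    (hz : z ∈ D.cycleSpace) : IsEvenEdgeSet (chainSupport z) where
  not_isDiag e he := by
    obtain ⟨e, -, rfl⟩ := Finset.mem_map.1 he
    exact G.not_isDiag_of_mem_edgeSet e.2
  even_card v := by
    classical
    convert D.mem_cycleSpace_iff.1 hz v using 1
    rw [chainSupport, Finset.filter_map, Finset.card_map, Finset.filter_filter]
    congr 1
    ext e
    rw [Finset.mem_filter, mem_toFinset, mem_ofPred_eq]
    simp [hD e, Sym2.mem_iff, eq_comm, and_comm]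

theorem three_le_hammingNorm (hD : ∀ e : G.edgeSet, e.1 = s(D.src e, D.tgt e))
    (hz : z ∈ D.cycleSpace) (h0 : z ≠ 0) : 3 ≤ hammingNorm z := by
  rw [← card_chainSupport]
  refine (isEvenEdgeSet_chainSupport hD hz).three_le_card (Finset.card_pos.1 ?_)
  rwa [card_chainSupport, hammingNorm_pos_iff]

theorem exists_triangle_of_hammingNorm_eq_three
    (hD : ∀ e : G.edgeSet, e.1 = s(D.src e, D.tgt e)) (hz : z ∈ D.cycleSpace)
    (h3 : hammingNorm z = 3) : ∃ u v w, G.Adj u v ∧ G.Adj v w ∧ G.Adj u w ∧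
      ∀ e, z e ≠ 0 → e.1 = s(u, v) ∨ e.1 = s(v, w) ∨ e.1 = s(u, w) := by
  classical
  obtain ⟨u, v, w, h⟩ := (isEvenEdgeSet_chainSupport hD hz).exists_eq_triangle
    (by rw [card_chainSupport, h3])
  have hadj : ∀ a b, s(a, b) ∈ chainSupport z → G.Adj a b := fun a b hab => by
    obtain ⟨e, -, he⟩ := Finset.mem_map.1 hab
    exact G.mem_edgeSet.1 (he ▸ e.2)
  refine ⟨u, v, w, hadj u v (by simp [h]), hadj v w (by simp [h]), hadj u w (by simp [h]),
    fun e he => ?_⟩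
  have hmem : e.1 ∈ chainSupport z :=
    Finset.mem_map_of_mem _ (Finset.mem_filter.2 ⟨Finset.mem_univ _, he⟩)
  simpa [h] using hmem

theorem isFaceSystem_faceBoundary [T2Space M] [ConnectedSpace M] [LocallyConnectedSpace M]
    [ChartedSpace ℂ M] [Finite V]
    (hD : ∀ e : G.edgeSet, e.1 = s(D.src e, D.tgt e)) : IsFaceSystem D.faceBoundary where
  card_filter_ne_zero_le e T := by
    by_contra! hcard
    obtain ⟨F₁, F₂, F₃, h₁, h₂, h₃, h₁₂, h₁₃, h₂₃⟩ := Finset.two_lt_card_iff.1 hcard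
    rw [Finset.mem_filter] at h₁ h₂ h₃
    exact h₃.2 (faceBoundary_eq_zero_of_ne h₁₂ h₁₃ h₂₃ h₁.2 h₂.2)
  eq_empty_or_forall_mem := eq_empty_or_forall_mem_of_sum_faceBoundary_eq_zero
  three_le_hammingNorm T hT := three_le_hammingNorm hD
    (Submodule.sum_mem _ fun _ _ => boundary_mem_cycleSpace _) hT

theorem twelve_mul_card_faces_add_le [T2Space M] [CompactSpace M] [ConnectedSpace M]
    [LocallyConnectedSpace M] [ChartedSpace ℂ M] [Finite V]
    (hD : ∀ e : G.edgeSet, e.1 = s(D.src e, D.tgt e)) {t : ℕ} (ht : 2 ≤ t)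
    (hedges : t < Fintype.card G.edgeSet) {ι : Type*} {H : ι → SimpleGraph V}
    (hcover : ∀ u v w : V, G.Adj u v → G.Adj v w → G.Adj u w →
      ∃ i, (H i).Adj u v ∧ (H i).Adj v w ∧ (H i).Adj u w)
    (hdisj : ∀ i j : ι, i ≠ j → Disjoint (H i).edgeSet (H j).edgeSet)
    (hsize : ∀ i, Nat.card (H i).edgeSet ≤ t) :
    12 * t * Nat.card D.Faces + 3 * Fintype.card G.edgeSet ≤ 8 * t * Fintype.card G.edgeSet := by
  classical
  have := D.finite_faces
  have := Fintype.ofFinite D.Faces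
  rw [Nat.card_eq_fintype_card]
  refine (isFaceSystem_faceBoundary hD).card_mul_add_le (ι := ι)
    (A := fun i => Finset.univ.filter (·.1 ∈ (H i).edgeSet)) ht hedges (fun i j hij => ?_)
    (fun i => le_trans ?_ (hsize i)) fun F hF => ?_
  · exact Finset.disjoint_filter.2 fun e _ he => Set.disjoint_left.1 (hdisj i j hij) he
  · rw [← Fintype.card_subtype, ← Nat.card_eq_fintype_card]
    exact Nat.card_le_card_of_injective
      (Subtype.map (q := (· ∈ (H i).edgeSet)) Subtype.val fun _ he => he)
      (Subtype.map_injective _ Subtype.val_injective)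
  · obtain ⟨u, v, w, huv, hvw, huw, htri⟩ :=
      exists_triangle_of_hammingNorm_eq_three hD (boundary_mem_cycleSpace _) hF
    obtain ⟨i, hiuv, hivw, hiuw⟩ := hcover u v w huv hvw huw
    refine ⟨i, fun e he => by_contra fun hne => he (Finset.mem_filter.2 ⟨Finset.mem_univ _, ?_⟩)⟩
    obtain h | h | h := htri e hne <;> rw [h] <;> assumption

end ArcDrawing

end SimpleGraphDrawings

theorem IsEulerCharacteristic.card_add_le {M : Type*} [TopologicalSpace M] [T2Space M]
    [CompactSpace M] [ConnectedSpace M] [LocallyConnectedSpace M] [ChartedSpace ℂ M] {χ : ℤ}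
    (hχ : IsEulerCharacteristic M χ) {V E : Type*} [Fintype V] [Nonempty V] [Fintype E]
    (D : ArcDrawing M V E) :
    (Fintype.card E : ℤ) + χ ≤ Fintype.card V + Nat.card D.Faces := by
  obtain ⟨V₀, _, G₀, f₀, arc₀, hdraw, hcell, rfl⟩ := hχ
  obtain ⟨D₀, -, hskel⟩ := hdraw.exists_arcDrawing
  have := Fintype.ofFinite G₀.edgeSet
  rw [← ArcDrawing.faces_eq_drawingFaces hskel] at hcell ⊢
  have hle := ArcDrawing.IsCellular.card_add_card_add_card_faces_le hcell D
  rw [Nat.card_eq_fintype_card (α := G₀.edgeSet)]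
  lia

/-- The charts of a surface, with the complex line as the model of the plane. -/
@[reducible] noncomputable def complexChartedSpace (M : Type*) [TopologicalSpace M]
    [ChartedSpace (EuclideanSpace ℝ (Fin 2)) M] : ChartedSpace ℂ M :=
  letI : ChartedSpace ℂ (EuclideanSpace ℝ (Fin 2)) :=
    let φ := Complex.orthonormalBasisOneI.repr.symm.toHomeomorph
    φ.toOpenPartialHomeomorph.singletonChartedSpace rfl
  ChartedSpace.comp ℂ (EuclideanSpace ℝ (Fin 2)) M

end Development

theorem surface_edge_upper_bound_general (t : ℕ) (ht : 2 ≤ t)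
    (M : Type*) [TopologicalSpace M] [T2Space M] [CompactSpace M] [ConnectedSpace M]
    [ChartedSpace (EuclideanSpace ℝ (Fin 2)) M]
    (χ : ℤ) (hχ : IsEulerCharacteristic M χ)
    {V : Type*} [Fintype V] (G : SimpleGraph V)
    (f : V → M) (arc : Sym2 V → Set M)
    (hdraw : IsCrossingFreeDrawingIn G f arc Set.univ)
    (hedges : t + 1 ≤ Nat.card G.edgeSet)
    {ι : Type*} (H : ι → SimpleGraph V)
    (hcover : ∀ u v w : V, G.Adj u v → G.Adj v w → G.Adj u w →
      ∃ i, (H i).Adj u v ∧ (H i).Adj v w ∧ (H i).Adj u w)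
    (hdisj : ∀ i j : ι, i ≠ j → Disjoint (H i).edgeSet (H j).edgeSet)
    (hsize : ∀ i, Nat.card (H i).edgeSet ≤ t) :
    (Nat.card G.edgeSet : ℝ) ≤ (12 * t / (4 * t + 3)) * ((Fintype.card V : ℝ) - (χ : ℝ)) := by
  have := complexChartedSpace M
  have := ChartedSpace.locallyConnectedSpace (EuclideanSpace ℝ (Fin 2)) M
  have := Fintype.ofFinite G.edgeSet
  obtain ⟨D, hD, -⟩ := hdraw.exists_arcDrawing
  rw [Nat.card_eq_fintype_card] at hedges ⊢
  obtain ⟨e⟩ : Nonempty G.edgeSet := Fintype.card_pos_iff.1 (by lia)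
  have : Nonempty V := ⟨D.src e⟩
  have hfaces : (12 * t * Nat.card D.Faces + 3 * Fintype.card G.edgeSet : ℝ) ≤
      8 * t * Fintype.card G.edgeSet := by
    exact_mod_cast ArcDrawing.twelve_mul_card_faces_add_le hD ht hedges hcover hdisj hsize
  have heuler : (Fintype.card G.edgeSet + χ : ℝ) ≤ Fintype.card V + Nat.card D.Faces := by
    exact_mod_cast hχ.card_add_le D
  rw [div_mul_eq_mul_div, le_div_iff₀ (by positivity)]
  linarith [mul_le_mul_of_nonneg_left heuler (by positivity : (0 : ℝ) ≤ 12 * t)]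

/-- **Lemma (edge upper bound on surfaces).** Let `t ≥ 3`, let `M` be a compact
connected surface with Euler characteristic `χ`, and let `G` be a simple graph with at
least `t+1` edges embedded into `M`. Suppose the subgraph of `G` consisting of all
edges lying in triangles decomposes as an edge-disjoint union of subgraphs `H i`, each
with between `3` and `t` edges, such that every triangle of `G` lies in some `H i`.
Then `e(G) ≤ (12t/(4t+3)) · (v(G) - χ)`. -/
theorem surface_edge_upper_bound (t : ℕ) (ht : 3 ≤ t)
    (M : Type*) [TopologicalSpace M] [T2Space M] [CompactSpace M] [ConnectedSpace M]
    [ChartedSpace (EuclideanSpace ℝ (Fin 2)) M]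
    (χ : ℤ) (hχ : IsEulerCharacteristic M χ)
    {V : Type*} [Fintype V] (G : SimpleGraph V)
    (f : V → M) (arc : Sym2 V → Set M)
    (hdraw : IsCrossingFreeDrawingIn G f arc Set.univ)
    (hedges : t + 1 ≤ Nat.card G.edgeSet)
    {ι : Type*} (H : ι → SimpleGraph V)
    (hle : ∀ i, H i ≤ G)
    (hcover : ∀ u v w : V, G.Adj u v → G.Adj v w → G.Adj u w →
      ∃ i, (H i).Adj u v ∧ (H i).Adj v w ∧ (H i).Adj u w)
    (hsub : ∀ (i : ι) (u v : V), (H i).Adj u v → ∃ w, G.Adj u w ∧ G.Adj v w)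
    (hdisj : ∀ i j : ι, i ≠ j → Disjoint (H i).edgeSet (H j).edgeSet)
    (hsize : ∀ i, 3 ≤ Nat.card (H i).edgeSet ∧ Nat.card (H i).edgeSet ≤ t) :
    (Nat.card G.edgeSet : ℝ) ≤ (12 * t / (4 * t + 3)) * ((Fintype.card V : ℝ) - (χ : ℝ)) :=
  surface_edge_upper_bound_general t (by lia) M χ hχ G f arc hdraw hedges H hcover hdisj
    fun i => (hsize i).2
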